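/- arXiv:2210.08245 — 13 statements merged into one kernel-verified Lean document; each statement's English description precedes it below -/
import Mathlib

section
/- Let A be a commutative nonassociative algebra over a field F with char(F) ≠ 2 and char(F) ≠ 3. Then A satisfies the identity (x*y)*(x*y) = (x*x)*(y*y) for all x, y ∈ A if and only if A satisfies the medial identity (x*y)*(z*w) = (x*z)*(y*w) for all x, y, z, w ∈ A. -/
/-! Specialising the medial identity `(x*y)*(z*w) = (x*z)*(y*w)` gives the square identity directly.
Conversely, polarising the square identity in `x` and then in `y`, and dividing by 2, gives
`(x*y)*(z*w) + (x*w)*(z*y) = 2 (x*z)*(y*w)`. By commutativity, with `a = (x*y)*(z*w)`,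
`b = (x*z)*(y*w)`, `c = (x*w)*(y*z)`, this says `a + c = 2b`, and exchanging `y` and `z` gives
`b + c = 2a`. Hence `3(a - b) = 0`, so `a = b`. -/

/-- For a commutative nonassociative algebra `A` over a field `F` with
`char F ≠ 2, 3`, the identity `(x*y)*(x*y) = (x*x)*(y*y)` holds for all `x, y`
iff the medial identity `(x*y)*(z*w) = (x*z)*(y*w)` holds for all `x, y, z, w`. -/
theorem square_identity_iff_medial {F A : Type*} [Field F] [AddCommGroup A] [Module F A]
    (mul : A →ₗ[F] A →ₗ[F] A)
    (hcomm : ∀ x y : A, mul x y = mul y x)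
    (h2 : (2 : F) ≠ 0) (h3 : (3 : F) ≠ 0) :
    (∀ x y : A, mul (mul x y) (mul x y) = mul (mul x x) (mul y y)) ↔
      (∀ x y z w : A, mul (mul x y) (mul z w) = mul (mul x z) (mul y w)) := by
  refine ⟨fun h => ?_, fun h x y => h x y x y⟩
  -- Replace `x` by `x + z` in the square identity, cancel the pure terms, and divide by 2.
  have hx : ∀ x z y : A, mul (mul x y) (mul z y) = mul (mul x z) (mul y y) := by
    intro x z y
    have e := h (x + z) y
    simp only [map_add, LinearMap.add_apply] at e
    rw [h x y, h z y, hcomm (mul z y) (mul x y), hcomm z x] at e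
    refine smul_right_injective A h2 ?_
    simp only [two_smul]
    rw [← sub_eq_zero] at e ⊢
    rw [← e]
    abel
  -- Replace `y` by `y + w` in `hx`; the two mixed terms on the right agree by commutativity.
  have hy : ∀ x y z w : A, mul (mul x y) (mul z w) + mul (mul x w) (mul z y)
      = (2 : F) • mul (mul x z) (mul y w) := by
    intro x y z w
    have e := hx x z (y + w)
    simp only [map_add, LinearMap.add_apply] at e
    rw [hx x z y, hx x z w, hcomm w y] at e
    rw [two_smul]
    rw [← sub_eq_zero] at e ⊢
    rw [← e]
    abel
  intro x y z w
  have e1 := hy x y z w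
  have e2 := hy x z y w
  rw [hcomm y z] at e2
  refine smul_right_injective A h3 ?_
  dsimp only
  linear_combination (norm := module) e1 - e2
end

section
/- Let A be a medial commutative nonassociative algebra over a field F and let c ∈ A be an idempotent. Then: (a) L_c is an algebra endomorphism of A, i.e., c*(x*y) = (c*x)*(c*y) for all x, y ∈ A; (b) the kernel of L_c is an ideal of A, i.e., if c*y = 0 then c*(x*y) = 0 for all x ∈ A; (c) for any idempotents c₁, c₂ ∈ A, the product c₁*c₂ is again an idempotent and L_{c₂} ∘ L_{c₁} = L_{c₂*c₁} ∘ L_{c₂} as linear operators on A. -/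
/-- In a medial commutative nonassociative algebra, for any idempotent `c`:
(a) `L_c` is an algebra endomorphism; (b) `ker L_c` is an ideal; (c) products of
idempotents are idempotents and `L_{c₂} ∘ L_{c₁} = L_{c₂*c₁} ∘ L_{c₂}`. -/
theorem medial_idempotent_properties {F A : Type*} [Field F] [AddCommGroup A] [Module F A]
    (mul : A →ₗ[F] A →ₗ[F] A)
    (hcomm : ∀ x y : A, mul x y = mul y x)
    (hmedial : ∀ x y z w : A, mul (mul x y) (mul z w) = mul (mul x z) (mul y w))
    (c : A) (hc : mul c c = c) :
    (∀ x y : A, mul c (mul x y) = mul (mul c x) (mul c y)) ∧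
    (∀ x y : A, mul c y = 0 → mul c (mul x y) = 0) ∧
    (∀ c₁ c₂ : A, mul c₁ c₁ = c₁ → mul c₂ c₂ = c₂ →
      mul (mul c₁ c₂) (mul c₁ c₂) = mul c₁ c₂ ∧
      ∀ x : A, mul c₂ (mul c₁ x) = mul (mul c₂ c₁) (mul c₂ x)) := by
  -- Writing an idempotent `e` as `e * e`, the medial law says `L_e` is multiplicative.
  have endo : ∀ e : A, mul e e = e → ∀ x y : A, mul e (mul x y) = mul (mul e x) (mul e y) := by
    intro e he x y
    have h := hmedial e e x y
    rwa [he] at h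
  refine ⟨endo c hc, fun x y hy => ?_, fun c₁ c₂ h₁ h₂ => ⟨?_, fun x => endo c₂ h₂ c₁ x⟩⟩
  · rw [endo c hc, hy, map_zero]
  · rw [hmedial, h₁, h₂]
end

section
/- Let A be a finite-dimensional medial commutative nonassociative algebra over a field F and let c₁, c₂ be nonzero idempotents of A such that L_{c₁} and L_{c₂} are injective. Then c₁*c₂ is a nonzero idempotent, L_{c₁*c₂} is bijective and satisfies L_{c₁*c₂} = L_{c₁} ∘ L_{c₂} ∘ L_{c₁}⁻¹, the characteristic polynomials of L_{c₁} and L_{c₂} coincide, and for any nonzero idempotent c₃ with injective L_{c₃}, the equality c₂*c₁ = c₃*c₁ implies c₂ = c₃. -/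
/-!
For an idempotent `c`, mediality gives `(c * d) * (c * x) = (c * c) * (d * x) = c * (d * x)`, that is
`L_{c*d} ∘ L_c = L_c ∘ L_d`. In finite dimension an injective `L_c` is invertible, so `L_{c₁*c₂}` is
conjugate to `L_{c₂}` by `L_{c₁}`; by commutativity it is also conjugate to `L_{c₁}` by `L_{c₂}`, and
all three operators share one characteristic polynomial. Idempotency of `c₁ * c₂` is mediality
again, and the remaining claims follow from injectivity of `L_{c₁}`.
-/

/-- Endomorphisms intertwined by an injective endomorphism of a finite-dimensional space are
conjugate, hence have the same characteristic polynomial. -/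
theorem charpoly_eq_of_intertwine {F A : Type*} [Field F] [AddCommGroup A] [Module F A]
    [Module.Finite F A] (e f g : A →ₗ[F] A) (he : Function.Injective e)
    (h : ∀ x, f (e x) = e (g x)) : f.charpoly = g.charpoly := by
  have hf : f = (LinearEquiv.ofInjectiveEndo e he).conj g := by
    ext x
    obtain ⟨y, rfl⟩ := (LinearEquiv.ofInjectiveEndo e he).surjective x
    rw [LinearEquiv.conj_apply_apply, LinearEquiv.symm_apply_apply]
    exact h y
  rw [hf, LinearEquiv.charpoly_conj]

/-- In a finite-dimensional medial commutative nonassociative algebra,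
for nonzero idempotents `c₁, c₂` with injective multiplication operators:
`c₁*c₂` is a nonzero idempotent, `L_{c₁*c₂}` is bijective with
`L_{c₁*c₂} = L_{c₁} ∘ L_{c₂} ∘ L_{c₁}⁻¹` (equivalently `L_{c₁*c₂} ∘ L_{c₁} = L_{c₁} ∘ L_{c₂}`),
the characteristic polynomials of `L_{c₁}` and `L_{c₂}` coincide, and the cancellation
property `c₂*c₁ = c₃*c₁ → c₂ = c₃` holds. -/
theorem medial_reduced_idempotents {F A : Type*} [Field F] [AddCommGroup A] [Module F A]
    [Module.Finite F A]
    (mul : A →ₗ[F] A →ₗ[F] A)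
    (hcomm : ∀ x y : A, mul x y = mul y x)
    (hmedial : ∀ x y z w : A, mul (mul x y) (mul z w) = mul (mul x z) (mul y w))
    (c₁ c₂ : A) (hc₁ : mul c₁ c₁ = c₁) (hc₂ : mul c₂ c₂ = c₂)
    (hc₁0 : c₁ ≠ 0) (hc₂0 : c₂ ≠ 0)
    (hinj₁ : Function.Injective ⇑(mul c₁)) (hinj₂ : Function.Injective ⇑(mul c₂)) :
    mul c₁ c₂ ≠ 0 ∧
    mul (mul c₁ c₂) (mul c₁ c₂) = mul c₁ c₂ ∧
    Function.Bijective ⇑(mul (mul c₁ c₂)) ∧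
    (∀ x : A, mul (mul c₁ c₂) (mul c₁ x) = mul c₁ (mul c₂ x)) ∧
    LinearMap.charpoly (mul c₁) = LinearMap.charpoly (mul c₂) ∧
    (∀ c₃ : A, c₃ ≠ 0 → mul c₃ c₃ = c₃ → Function.Injective ⇑(mul c₃) →
      mul c₂ c₁ = mul c₃ c₁ → c₂ = c₃) := by
  have key₁ (x : A) : mul (mul c₁ c₂) (mul c₁ x) = mul c₁ (mul c₂ x) := by
    rw [hmedial, hc₁]
  have key₂ (x : A) : mul (mul c₁ c₂) (mul c₂ x) = mul c₂ (mul c₁ x) := by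
    rw [hcomm c₁ c₂, hmedial, hc₂]
  have surj₁ : Function.Surjective (mul c₁) := LinearMap.injective_iff_surjective.mp hinj₁
  have surj₂ : Function.Surjective (mul c₂) := LinearMap.injective_iff_surjective.mp hinj₂
  have surj₁₂ : Function.Surjective (mul (mul c₁ c₂)) := by
    intro y
    obtain ⟨z, rfl⟩ := surj₁ y
    obtain ⟨x, rfl⟩ := surj₂ z
    exact ⟨mul c₁ x, key₁ x⟩
  refine ⟨fun h => hc₂0 (hinj₁ (by rw [h, map_zero])), by rw [hmedial, hc₁, hc₂],
    ⟨LinearMap.injective_iff_surjective.mpr surj₁₂, surj₁₂⟩, key₁, ?_, ?_⟩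
  · exact (charpoly_eq_of_intertwine _ _ _ hinj₂ key₂).symm.trans
      (charpoly_eq_of_intertwine _ _ _ hinj₁ key₁)
  · intro c₃ _ _ _ h
    exact hinj₁ (by rw [hcomm c₁ c₂, hcomm c₁ c₃, h])
end

section
/- Let A be a medial commutative nonassociative algebra over a field F and let c be an idempotent such that L_c is bijective; let T be the inverse linear map of L_c, so T(c*x) = x and c*(T x) = x for all x ∈ A. Define a new product x∘y := T(x*y). Then (A, ∘) is a commutative associative algebra with multiplicative identity c: for all x, y, z ∈ A one has x∘y = y∘x, (x∘y)∘z = x∘(y∘z) (i.e., T(T(x*y)*z) = T(x*T(y*z))), and c∘x = x. -/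
/-- If `c` is an idempotent of a medial commutative nonassociative algebra
with `L_c` bijective and `T = L_c⁻¹`, then the isotope product `x∘y := T(x*y)` is
commutative, associative, and has identity `c`. -/
theorem kaplansky_isotope_associative {F A : Type*} [Field F] [AddCommGroup A] [Module F A]
    (mul : A →ₗ[F] A →ₗ[F] A)
    (hcomm : ∀ x y : A, mul x y = mul y x)
    (hmedial : ∀ x y z w : A, mul (mul x y) (mul z w) = mul (mul x z) (mul y w))
    (c : A) (hc : mul c c = c)
    (T : A → A) (hT1 : ∀ x : A, T (mul c x) = x) (hT2 : ∀ x : A, mul c (T x) = x) :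
    (∀ x y : A, T (mul x y) = T (mul y x)) ∧
    (∀ x y z : A, T (mul (T (mul x y)) z) = T (mul x (T (mul y z)))) ∧
    (∀ x : A, T (mul c x) = x) := by
  -- Mediality with `c * c = c` makes `L_c`, hence its inverse `T`, an algebra endomorphism.
  have hT : ∀ x y : A, T (mul x y) = mul (T x) (T y) := fun x y => by
    have h : mul x y = mul c (mul (T x) (T y)) := by
      conv_lhs => rw [← hT2 x, ← hT2 y, hmedial, hc]
    rw [h, hT1]
  refine ⟨fun x y => by rw [hcomm], fun x y z => congrArg T ?_, hT1⟩
  -- Writing `z = c * T z`, mediality moves `c` next to `T x`, and `T x * c = x`.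
  calc mul (T (mul x y)) z = mul (mul (T x) (T y)) (mul c (T z)) := by rw [hT, hT2]
    _ = mul (mul (T x) c) (mul (T y) (T z)) := hmedial _ _ _ _
    _ = mul x (T (mul y z)) := by rw [hcomm (T x) c, hT2, hT]
end

section
/- Let A be a finite-dimensional medial commutative nonassociative algebra over a field F and let c be an idempotent of A such that L_c is bijective. Then for all x, y ∈ A: det(L_{x*y}) · det(L_c) = det(L_x) · det(L_y). Equivalently, the function φ(x) := det(L_x)/det(L_c) is multiplicative: φ(x*y) = φ(x)·φ(y) for all x, y ∈ A. -/
/-! Write `T = L_c`. Mediality and `c * c = c` give `T (x * y) = T x * T y`, so `T` is an algebra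
automorphism and `L_{T x} ∘ T = T ∘ L_x`; since `det T ≠ 0`, it follows that
`det L_{T x} = det L_x`. Mediality also gives `(x * y) * (c * w) = (x * c) * (y * w)`, that is
`L_{x * y} ∘ T = L_{T x} ∘ L_y`; taking determinants proves the claim. -/

/-- In a finite-dimensional medial commutative nonassociative algebra with
an idempotent `c` having bijective `L_c`, the normalized determinant
`φ(x) = det(L_x)/det(L_c)` is multiplicative:
`det(L_{x*y})·det(L_c) = det(L_x)·det(L_y)` for all `x, y`. -/
theorem medial_det_multiplicative {F A : Type*} [Field F] [AddCommGroup A] [Module F A]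
    [Module.Finite F A]
    (mul : A →ₗ[F] A →ₗ[F] A)
    (hcomm : ∀ x y : A, mul x y = mul y x)
    (hmedial : ∀ x y z w : A, mul (mul x y) (mul z w) = mul (mul x z) (mul y w))
    (c : A) (hc : mul c c = c) (hbij : Function.Bijective ⇑(mul c)) :
    ∀ x y : A,
      LinearMap.det (mul (mul x y)) * LinearMap.det (mul c) =
        LinearMap.det (mul x) * LinearMap.det (mul y) := by
  intro x y
  have hT : LinearMap.det (mul c) ≠ 0 :=
    (LinearEquiv.isUnit_det' (LinearEquiv.ofBijective (mul c) hbij)).ne_zero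
  have h₁ : mul (mul c x) ∘ₗ mul c = mul c ∘ₗ mul x := by
    ext w
    simp only [LinearMap.comp_apply]
    rw [hmedial c x c w, hc]
  have h₂ : mul (mul x y) ∘ₗ mul c = mul (mul c x) ∘ₗ mul y := by
    ext w
    simp only [LinearMap.comp_apply]
    rw [hmedial x y c w, hcomm x c]
  have hdet : LinearMap.det (mul (mul c x)) = LinearMap.det (mul x) := by
    apply mul_right_cancel₀ hT
    rw [← LinearMap.det_comp, h₁, LinearMap.det_comp, mul_comm]
  rw [← LinearMap.det_comp, h₂, LinearMap.det_comp, hdet]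
end

section
/- Let A be a medial commutative nonassociative algebra over a field F and let ζ ∈ F satisfy ζ² = 1. On the F-vector space A × A define the product (x,y)∘(z,w) := (x*z + y*w, ζ·(x*w + y*z)). Then (A × A, ∘) is a medial commutative nonassociative algebra, and the subspace A × {0} is a subalgebra on which ∘ restricts to the original multiplication of A (so it is isomorphic to A). -/
/-! Write `u = (u₀, u₁)` with indices read modulo 2. Expanding `(u ∘ v) ∘ (s ∘ t)` and using `ζ² = 1`,
its component of index `m` is the sum of all products `(uᵢ * vⱼ) * (sₖ * tₗ)` with
`i + j + k + l = m`: the twist occurs either not at all or twice. This index set is symmetric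
in `j` and `k`, so mediality of `A`, applied term by term, gives mediality of the double. -/

/-- Twisted doubling: For a medial commutative nonassociative algebra `A`
and `ζ ∈ F` with `ζ² = 1`, the product `(x,y)∘(z,w) := (x*z + y*w, ζ·(x*w + y*z))`
on `A × A` is commutative and medial, and restricts on `A × {0}` to the original
multiplication of `A`. -/
theorem twisted_doubling_medial {F A : Type*} [Field F] [AddCommGroup A] [Module F A]
    (mul : A →ₗ[F] A →ₗ[F] A)
    (hcomm : ∀ x y : A, mul x y = mul y x)
    (hmedial : ∀ x y z w : A, mul (mul x y) (mul z w) = mul (mul x z) (mul y w))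
    (ζ : F) (hζ : ζ ^ 2 = 1) :
    ∀ op : A × A → A × A → A × A,
      (∀ u v : A × A, op u v =
        (mul u.1 v.1 + mul u.2 v.2, ζ • (mul u.1 v.2 + mul u.2 v.1))) →
      (∀ u v : A × A, op u v = op v u) ∧
      (∀ u v s t : A × A, op (op u v) (op s t) = op (op u s) (op v t)) ∧
      (∀ x z : A, op (x, 0) (z, 0) = (mul x z, 0)) := by
  intro op hop
  have hζ' : ζ * ζ = 1 := by rw [← sq, hζ]
  refine ⟨fun u v => ?_, fun u v s t => ?_, fun x z => ?_⟩
  · rw [hop, hop, hcomm u.1, hcomm u.2 v.2, hcomm u.1 v.2, hcomm u.2 v.1, add_comm (mul v.2 u.1)]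
  · simp only [hop, map_add, map_smul, LinearMap.add_apply, LinearMap.smul_apply, smul_add,
      smul_smul, hζ', one_smul]
    -- Each of the sixteen terms on the left is matched with its middle-swapped partner:
    -- as a permutation rule, `hmedial` puts both sides in the same normal form.
    simp only [hmedial]
    ext <;> simp only [] <;> abel
  · simp [hop]
end

section
/- Let A be a medial commutative nonassociative algebra over a field F, let c₁, c₂ be idempotents of A, and let x₁, x₂ ∈ A and λ₁, λ₂ ∈ F satisfy c₁*x₁ = λ₁·x₁ and c₂*x₂ = λ₂·x₂. Then (c₁*c₂)*(x₁*x₂) = (λ₁·λ₂)·(x₁*x₂) and (c₁*c₂)*(c₁*x₂) = λ₂·(c₁*x₂). In particular, eigenvectors of idempotents multiply into eigenvectors of the product idempotent with the product eigenvalue. -/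
/-- In a medial commutative nonassociative algebra, eigenvectors of
idempotents multiply into eigenvectors of the product idempotent with the product
eigenvalue: if `c₁*x₁ = λ₁·x₁` and `c₂*x₂ = λ₂·x₂` then
`(c₁*c₂)*(x₁*x₂) = (λ₁λ₂)·(x₁*x₂)` and `(c₁*c₂)*(c₁*x₂) = λ₂·(c₁*x₂)`. -/
theorem medial_eigenvector_products {F A : Type*} [Field F] [AddCommGroup A] [Module F A]
    (mul : A →ₗ[F] A →ₗ[F] A)
    (hcomm : ∀ x y : A, mul x y = mul y x)
    (hmedial : ∀ x y z w : A, mul (mul x y) (mul z w) = mul (mul x z) (mul y w))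
    (c₁ c₂ : A) (hc₁ : mul c₁ c₁ = c₁) (hc₂ : mul c₂ c₂ = c₂)
    (x₁ x₂ : A) (lam₁ lam₂ : F)
    (hx₁ : mul c₁ x₁ = lam₁ • x₁) (hx₂ : mul c₂ x₂ = lam₂ • x₂) :
    mul (mul c₁ c₂) (mul x₁ x₂) = (lam₁ * lam₂) • mul x₁ x₂ ∧
    mul (mul c₁ c₂) (mul c₁ x₂) = lam₂ • mul c₁ x₂ := by
  refine ⟨?_, ?_⟩
  -- Mediality swaps the two inner factors, so each `cᵢ` meets its own eigenvector.
  · rw [hmedial, hx₁, hx₂, map_smul, LinearMap.map_smul₂, smul_smul, mul_comm lam₂]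
  -- The same swap, with `c₁` as its own eigenvector of eigenvalue `1`.
  · rw [hmedial, hc₁, hx₂, map_smul]
end

section
/- Let A be a finite-dimensional medial commutative nonassociative algebra over a field F in which every nonzero idempotent c has injective multiplication operator L_c (A is reduced). Let c₁, c₂ be nonzero idempotents of A and suppose L_{c₁} is diagonalizable (c₁ is semi-simple). Then c₁*c₂ is a nonzero idempotent, L_{c₁*c₂} is diagonalizable, and the characteristic polynomial of L_{c₁*c₂} equals that of L_{c₁}. In particular, any two semi-simple nonzero idempotents of A have identical characteristic polynomials of their multiplication operators. -/
/-!
Mediality makes multiplication by an idempotent `e` an algebra endomorphism: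
`e * (x * y) = (e * e) * (x * y) = (e * x) * (e * y)`. In a reduced finite-dimensional algebra
it is injective, hence an automorphism `φ`, and `φ ∘ L_c ∘ φ⁻¹ = L_{φ c} = L_{e * c}`.
So `L_{e * c}` is conjugate to `L_c` (`exists_conj_mul`), which transfers both
the characteristic polynomial and diagonalizability (`iSup_eigenspace_conj`). For two idempotents
`c`, `d`, the operator `L_{c * d}` is conjugate to both `L_c` and `L_d`.
-/

theorem exists_conj_mul {F A : Type*} [Field F] [AddCommGroup A] [Module F A]
    [Module.Finite F A]
    (mul : A →ₗ[F] A →ₗ[F] A)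
    (hmedial : ∀ x y z w : A, mul (mul x y) (mul z w) = mul (mul x z) (mul y w))
    (hred : ∀ c : A, c ≠ 0 → mul c c = c → Function.Injective ⇑(mul c))
    (e c : A) (he0 : e ≠ 0) (he : mul e e = e) :
    ∃ φ : A ≃ₗ[F] A, mul (mul e c) = φ.conj (mul c) := by
  refine ⟨LinearEquiv.ofInjectiveEndo (mul e) (hred e he0 he), ?_⟩
  ext x
  obtain ⟨y, rfl⟩ := (LinearEquiv.ofInjectiveEndo (mul e) (hred e he0 he)).surjective x
  have h := hmedial e e c y
  rw [he] at h
  rw [LinearEquiv.conj_apply_apply, LinearEquiv.symm_apply_apply]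
  exact h.symm

theorem iSup_eigenspace_conj {F A : Type*} [Field F] [AddCommGroup A] [Module F A]
    (φ : A ≃ₗ[F] A) (f : Module.End F A)
    (hf : (⨆ μ : F, Module.End.eigenspace f μ) = ⊤) :
    (⨆ μ : F, Module.End.eigenspace (φ.conj f) μ) = ⊤ := by
  rw [eq_top_iff, ← LinearMap.range_eq_top.2 φ.surjective, ← Submodule.map_top, ← hf,
    Submodule.map_iSup]
  refine iSup_mono fun μ => ?_
  rintro _ ⟨x, hx, rfl⟩
  have hx' : f x = μ • x := Module.End.mem_eigenspace_iff.1 hx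
  rw [Module.End.mem_eigenspace_iff]
  simp [LinearEquiv.conj_apply, hx']


/-- In a finite-dimensional reduced medial commutative nonassociative
algebra, if `c₁` is a semi-simple (diagonalizable) nonzero idempotent and `c₂` is any
nonzero idempotent, then `c₁*c₂` is a nonzero idempotent, `L_{c₁*c₂}` is diagonalizable,
and its characteristic polynomial equals that of `L_{c₁}`. In particular any two
semi-simple nonzero idempotents have identical characteristic polynomials. -/
theorem medial_semisimple_idempotents {F A : Type*} [Field F] [AddCommGroup A] [Module F A]
    [Module.Finite F A]
    (mul : A →ₗ[F] A →ₗ[F] A)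
    (hcomm : ∀ x y : A, mul x y = mul y x)
    (hmedial : ∀ x y z w : A, mul (mul x y) (mul z w) = mul (mul x z) (mul y w))
    (hred : ∀ c : A, c ≠ 0 → mul c c = c → Function.Injective ⇑(mul c))
    (c₁ c₂ : A) (hc₁ : mul c₁ c₁ = c₁) (hc₂ : mul c₂ c₂ = c₂)
    (hc₁0 : c₁ ≠ 0) (hc₂0 : c₂ ≠ 0)
    (hdiag : (⨆ μ : F, Module.End.eigenspace (mul c₁) μ) = ⊤) :
    (mul (mul c₁ c₂) (mul c₁ c₂) = mul c₁ c₂ ∧ mul c₁ c₂ ≠ 0) ∧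
    (⨆ μ : F, Module.End.eigenspace (mul (mul c₁ c₂)) μ) = ⊤ ∧
    LinearMap.charpoly (mul (mul c₁ c₂)) = LinearMap.charpoly (mul c₁) ∧
    (∀ d₁ d₂ : A, d₁ ≠ 0 → d₂ ≠ 0 → mul d₁ d₁ = d₁ → mul d₂ d₂ = d₂ →
      (⨆ μ : F, Module.End.eigenspace (mul d₁) μ) = ⊤ →
      (⨆ μ : F, Module.End.eigenspace (mul d₂) μ) = ⊤ →
      LinearMap.charpoly (mul d₁) = LinearMap.charpoly (mul d₂)) := by
  have hchar : ∀ e c : A, e ≠ 0 → mul e e = e →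
      LinearMap.charpoly (mul (mul e c)) = LinearMap.charpoly (mul c) := by
    intro e c he0 he
    obtain ⟨φ, hφ⟩ := exists_conj_mul mul hmedial hred e c he0 he
    rw [hφ, LinearEquiv.charpoly_conj]
  refine ⟨⟨by rw [hmedial, hc₁, hc₂], fun h => hc₂0 (hred c₁ hc₁0 hc₁ (by simpa using h))⟩,
    ?_, ?_, ?_⟩
  · obtain ⟨φ, hφ⟩ := exists_conj_mul mul hmedial hred c₂ c₁ hc₂0 hc₂
    rw [hcomm c₁ c₂, hφ]
    exact iSup_eigenspace_conj φ _ hdiag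
  · rw [hcomm c₁ c₂, hchar c₂ c₁ hc₂0 hc₂]
  · intro d₁ d₂ h₁0 h₂0 h₁ h₂ _ _
    rw [← hchar d₂ d₁ h₂0 h₂, hcomm d₂ d₁, hchar d₁ d₂ h₁0 h₁]
end

section
/- Let A be an n-dimensional commutative nonassociative algebra (n ≥ 1) over an algebraically closed field F of characteristic zero which is generic (A has exactly 2^n idempotents, including 0) and isospectral (all nonzero idempotents c of A have the same characteristic polynomial of L_c). Then for every nonzero idempotent c of A: the characteristic polynomial of L_c equals X^n − 1; consequently L_c^n = id, the eigenvalues of L_c are exactly the n-th roots of unity in F, and each eigenspace of L_c is one-dimensional. Moreover, A contains no nonzero element x with x*x = 0. -/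
/-!
The idempotents are the common zeros of the `n` quadratic polynomials `f` given by the coordinates
of `x * x - x`, so genericity says that Bézout's bound `2 ^ n` is attained. This makes the system a
complete intersection, with simple zeros and no zeros at infinity, and the theorem is the
Euler-Jacobi residue formula applied to characteristic polynomials.

*Residues.* The Bezoutian `B (x, y) = det (1 - L_(x + y))` has degree at most `n` and vanishes at
pairs of distinct idempotents, because `(c + c') * (c - c') = c - c'`; on the diagonal it equals
`2 ^ n * χ_c (1 / 2)`, where `χ_c` is the characteristic polynomial of `L_c`. By `exists_residue`
there are weights `w c`, not all zero, with `∑ c, w c * g c = 0` for every polynomial `g` of degree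
less than `n`. Applying this functional to the first variables of `B` leaves a constant, which
means that `w c * χ_c (1 / 2)` does not depend on `c`. Applying it in the variable `x` to
`det (t - L_x)`, which has degree at most `n` in `(x, t)`, shows that `∑ c, w c * χ_c (t)` does
not depend on `t`. If `χ_c = χ` for all `c ≠ 0`, then, as `χ_0 = X ^ n`, this reads
`(2 ^ n - 1) / χ (1 / 2) * χ (t) = 2 ^ n * (1 - t ^ n)`, so that `χ = X ^ n - 1`.

*Bézout's bound.* The facts on complete intersections come from counting dimensions. Polynomials
`b i` are called independent (`Indep`) if they are linearly independent over `F[f]`; polynomials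
that separate simple zeros of `f` are independent (`indep_of_simple`). Counting monomials shows
that there are at most `2 ^ n` independent polynomials, fewer if the quadrics meet at infinity
(`Indep.card_lt_two_pow`, which excludes square-zero elements), and that `2 ^ n` of them have
degree at least `n / 2` on average (`Indep.le_two_mul_sum_deg`). The last bound is opposite to the
one provided by the duality of the Bezoutian, and the equality yields `exists_residue`.

*Simplicity of the zeros* (`simple_of_card`). The zeros are finite in number, so by Zariski's main
theorem some polynomial `θ`, integral over `F[f]`, separates them and has nonzero derivative in a
given tangent direction. Its minimal equation over `F[f]` has degree at most `2 ^ n`, and at the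
origin it becomes the product of the `2 ^ n` distinct factors `X - θ c`; being separable, it
admits no nonzero tangent vector.
-/

/-! ### Counting monomials and Bézout's inequality -/

namespace GenIso

open MvPolynomial

section Counting

variable {F σ ι : Type*} [Field F] [Fintype σ] [DecidableEq σ]

/-- The exponents of the monomials of total degree at most `k` in the variables `σ`. -/
def lowDeg (σ : Type*) [Fintype σ] [DecidableEq σ] (k : ℕ) : Finset (σ →₀ ℕ) :=
  (Finset.range (k + 1)).biUnion fun j => Finset.finsuppAntidiag Finset.univ j

lemma mem_lowDeg {k : ℕ} {a : σ →₀ ℕ} : a ∈ lowDeg σ k ↔ a.degree ≤ k := by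
  simp [lowDeg, Finsupp.degree_eq_sum]

lemma card_lowDeg [Nonempty σ] (k : ℕ) :
    (lowDeg σ k).card = (k + Fintype.card σ).choose (Fintype.card σ) := by
  obtain ⟨m, hm⟩ : ∃ m, Fintype.card σ = m + 1 :=
    ⟨_, (Nat.succ_pred_eq_of_pos Fintype.card_pos).symm⟩
  rw [lowDeg, Finset.card_biUnion]
  · simp only [Finset.card_finsuppAntidiag_nat_eq_choose, Finset.card_univ, hm]
    rw [← add_assoc, ← Nat.sum_range_add_choose]
    refine Finset.sum_congr rfl fun i _ => ?_
    rw [show m + 1 + i - 1 = m + i by omega, add_comm i m]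
    exact Nat.choose_symm_add.symm
  · intro i _ j _ hij
    rw [Function.onFun, Finset.disjoint_left]
    intro a ha hb
    simp only [Finset.mem_finsuppAntidiag] at ha hb
    exact hij (ha.1.symm.trans hb.1)

/-- The polynomials `b i` are linearly independent over the ring of polynomial expressions
in `f`, the coefficients being taken in an abstract polynomial ring (so that a nonempty
independent family forces `f` to be algebraically independent). -/
def Indep [Fintype ι] (f : σ → MvPolynomial σ F) (b : ι → MvPolynomial σ F) : Prop :=
  ∀ g : ι → MvPolynomial σ F, ∑ i, b i * aeval f (g i) = 0 → g = 0

/-- If the products `b i * f ^ a`, `(i, a) ∈ X`, only involve monomials with exponents in `T`,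
then there are at most `#T` of them, because independence over the polynomials in `f` makes
them linearly independent over the field. -/
lemma Indep.card_le [Fintype ι] {f : σ → MvPolynomial σ F} {b : ι → MvPolynomial σ F}
    (hind : Indep f b) (X : Finset (Σ _ : ι, (σ →₀ ℕ))) (T : Finset (σ →₀ ℕ))
    (h : ∀ x ∈ X, b x.1 * aeval f (monomial x.2 (1 : F)) ∈ restrictSupport F (T : Set (σ →₀ ℕ))) :
    X.card ≤ T.card := by
  classical
  let G : (ι → MvPolynomial σ F) →ₗ[F] MvPolynomial σ F :=
    ∑ i, (LinearMap.mulLeft F (b i)).comp ((aeval f).toLinearMap.comp (LinearMap.proj i))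
  have hG : ∀ g, G g = ∑ i, b i * aeval f (g i) := by
    intro g; simp [G]
  have hker : LinearMap.ker G = ⊥ := by
    rw [LinearMap.ker_eq_bot']
    intro g hg
    exact hind g (by rw [← hG, hg])
  have hli := (Pi.basis fun _ : ι => basisMonomials σ F).linearIndependent.map' G hker
  have hval : ∀ x : (Σ _ : ι, (σ →₀ ℕ)),
      (G ∘ (Pi.basis fun _ : ι => basisMonomials σ F)) x =
        b x.1 * aeval f (monomial x.2 (1 : F)) := by
    rintro ⟨i, a⟩
    simp only [Function.comp, hG, Pi.basis_apply, coe_basisMonomials]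
    rw [Finset.sum_eq_single i]
    · simp
    · intro j _ hj
      simp [Pi.single_eq_of_ne hj]
    · simp
  let w : X → restrictSupport F (T : Set (σ →₀ ℕ)) := fun x => ⟨_, h x.1 x.2⟩
  have hw : LinearIndependent F w := by
    refine LinearIndependent.of_comp (restrictSupport F (T : Set (σ →₀ ℕ))).subtype ?_
    have h0 := hli.comp (fun x : X => x.1) Subtype.val_injective
    have h1 : (⇑(restrictSupport F (T : Set (σ →₀ ℕ))).subtype ∘ w) =
        (G ∘ (Pi.basis fun _ : ι => basisMonomials σ F)) ∘ fun x : X => x.1 :=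
      funext fun x => (hval x.1).symm
    rw [h1]
    exact h0
  have : Module.Finite F (restrictSupport F (T : Set (σ →₀ ℕ))) :=
    Module.Finite.of_basis (basisRestrictSupport F _)
  have h1 := hw.fintype_card_le_finrank
  rw [Module.finrank_eq_card_basis (basisRestrictSupport F (T : Set (σ →₀ ℕ)))] at h1
  simpa using h1

lemma totalDegree_aeval_monomial_le {f : σ → MvPolynomial σ F}
    (hf : ∀ j, (f j).totalDegree ≤ 2) (a : σ →₀ ℕ) :
    (aeval f (monomial a (1 : F))).totalDegree ≤ 2 * a.degree := by
  rw [aeval_monomial, map_one, one_mul, Finsupp.prod_fintype _ _ (by simp)]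
  refine (totalDegree_finsetProd _ _).trans ?_
  rw [Finsupp.degree_eq_sum, Finset.mul_sum]
  refine Finset.sum_le_sum fun i _ => (totalDegree_pow _ _).trans ?_
  rw [mul_comm]
  exact Nat.mul_le_mul_right _ (hf i)

lemma mem_restrictSupport_lowDeg {p : MvPolynomial σ F} {d : ℕ} (h : p.totalDegree ≤ d) :
    p ∈ restrictSupport F (lowDeg σ d : Set (σ →₀ ℕ)) := by
  rw [mem_restrictSupport_iff]
  intro a ha
  rw [Finset.mem_coe, mem_lowDeg]
  exact (le_totalDegree ha).trans h

/-- Counting monomials of total degree at most `d`. -/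
lemma Indep.sum_choose_le [Fintype ι] [Nonempty σ] {f : σ → MvPolynomial σ F}
    {b : ι → MvPolynomial σ F}
    (hind : Indep f b) (hf : ∀ j, (f j).totalDegree ≤ 2) {e : ι → ℕ}
    (he : ∀ i, (b i).totalDegree ≤ e i) (d : ℕ) :
    ∑ i, (if e i ≤ d then
      ((d - e i) / 2 + Fintype.card σ).choose (Fintype.card σ) else 0) ≤
      (d + Fintype.card σ).choose (Fintype.card σ) := by
  classical
  have := hind.card_le
    (Finset.univ.sigma fun i => if e i ≤ d then lowDeg σ ((d - e i) / 2) else ∅)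
    (lowDeg σ d) (by
      rintro ⟨i, a⟩ hx
      simp only [Finset.mem_sigma, Finset.mem_univ, true_and] at hx
      split_ifs at hx with hd
      · rw [mem_lowDeg] at hx
        apply mem_restrictSupport_lowDeg
        have h1 := totalDegree_mul (b i) (aeval f (monomial a (1 : F)))
        have h2 := totalDegree_aeval_monomial_le hf a
        have h3 := he i
        dsimp only
        omega
      · simp at hx)
  rw [Finset.card_sigma, card_lowDeg] at this
  refine le_trans (le_of_eq (Finset.sum_congr rfl fun i _ => ?_)) this
  split_ifs
  · rw [card_lowDeg]
  · simp

/-- The elementary limit `k → ∞` behind the coarse forms of Bézout's inequality. -/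
lemma le_two_pow_of_mul_pow_le {m E n : ℕ} (h : ∀ k : ℕ, m * k ^ n ≤ (2 * k + E) ^ n) :
    m ≤ 2 ^ n := by
  have hlim : Filter.Tendsto (fun k : ℕ => (2 + (E : ℝ) / k) ^ n) Filter.atTop
      (nhds ((2 + 0 : ℝ) ^ n)) :=
    ((tendsto_const_nhds).add (tendsto_const_div_atTop_nhds_zero_nat (E : ℝ))).pow n
  have : (m : ℝ) ≤ (2 + 0 : ℝ) ^ n := by
    refine ge_of_tendsto hlim ?_
    filter_upwards [Filter.eventually_gt_atTop 0] with k hk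
    have hk' : (0 : ℝ) < k := by exact_mod_cast hk
    have h1 : (m : ℝ) * (k : ℝ) ^ n ≤ (2 * k + E) ^ n := by exact_mod_cast h k
    rw [show (2 + (E : ℝ) / k) = (2 * k + E) / k by field_simp, div_pow,
      le_div_iff₀ (by positivity)]
    exact h1
  rw [add_zero] at this
  exact_mod_cast this

/-- Bézout's inequality in the form: over the polynomials in `n` quadratic polynomials `f`,
no more than `2 ^ n` polynomials are independent. -/
lemma Indep.card_le_two_pow [Fintype ι] [Nonempty σ] {f : σ → MvPolynomial σ F}
    {b : ι → MvPolynomial σ F}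
    (hind : Indep f b) (hf : ∀ j, (f j).totalDegree ≤ 2) :
    Fintype.card ι ≤ 2 ^ Fintype.card σ := by
  set n := Fintype.card σ
  let e := Finset.univ.sup fun i => (b i).totalDegree
  refine le_two_pow_of_mul_pow_le (E := e + n) fun k => ?_
  have h := hind.sum_choose_le hf (e := fun _ => e)
    (fun i => Finset.le_sup (f := fun i => (b i).totalDegree) (Finset.mem_univ i)) (2 * k + e)
  simp only [le_add_iff_nonneg_left, zero_le, if_true, Finset.sum_const, Finset.card_univ,
    smul_eq_mul, Nat.add_sub_cancel, Nat.mul_div_cancel_left k two_pos] at h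
  calc Fintype.card ι * k ^ n
      ≤ Fintype.card ι * (n.factorial * (k + n).choose n) := by
        refine Nat.mul_le_mul_left _ ?_
        rw [← Nat.ascFactorial_eq_factorial_mul_choose]
        exact (Nat.pow_le_pow_left (Nat.le_succ k) n).trans (Nat.pow_succ_le_ascFactorial _ _)
    _ = n.factorial * (Fintype.card ι * (k + n).choose n) := by ring
    _ ≤ n.factorial * (2 * k + e + n).choose n := Nat.mul_le_mul_left _ h
    _ = (2 * k + e + n).descFactorial n := (Nat.descFactorial_eq_factorial_mul_choose _ _).symm
    _ ≤ (2 * k + (e + n)) ^ n := by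
        rw [← add_assoc]; exact Nat.descFactorial_le_pow _ _

/-- Strict Bézout: if no `f j` contains the square of the variable `z`, that is, if the
quadrics have a common zero at infinity, then there are fewer than `2 ^ n` independent
polynomials. The `k`-fold products of the `f j` have degree at most `k` in `z`, and this removes
a fraction `2 ^ (-n)` of the available monomials of degree at most `2 * k`. -/
lemma Indep.card_lt_two_pow [Fintype ι] [Nonempty σ] {f : σ → MvPolynomial σ F}
    {b : ι → MvPolynomial σ F}
    (hind : Indep f b) (hf : ∀ j, (f j).totalDegree ≤ 2) (z : σ)
    (hz : ∀ j, (f j).degreeOf z ≤ 1) :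
    Fintype.card ι < 2 ^ Fintype.card σ := by
  classical
  set n := Fintype.card σ with hn
  let e := Finset.univ.sup fun i => (b i).totalDegree
  have he : ∀ i, (b i).totalDegree ≤ e := fun i =>
    Finset.le_sup (f := fun i => (b i).totalDegree) (Finset.mem_univ i)
  have hdeg : ∀ a : σ →₀ ℕ, (aeval f (monomial a (1 : F))).degreeOf z ≤ a.degree := by
    intro a
    rw [aeval_monomial, map_one, one_mul, Finsupp.prod_fintype _ _ (by simp)]
    refine (degreeOf_prod_le _ _ _).trans ?_
    rw [Finsupp.degree_eq_sum]
    refine Finset.sum_le_sum fun i _ => (degreeOf_pow_le _ _ _).trans ?_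
    simpa using Nat.mul_le_mul_left (a i) (hz i)
  have key : ∀ k, Fintype.card ι * (k + n).choose n + (k - 1 + n).choose n ≤
      (2 * k + e + n).choose n ∨ k = 0 := by
    intro k
    rcases Nat.eq_zero_or_pos k with hk | hk
    · exact Or.inr hk
    left
    have h1 := hind.card_le (Finset.univ.sigma fun _ => lowDeg σ k)
      ((lowDeg σ (2 * k + e)).filter fun a => a z ≤ k + e) (by
        rintro ⟨i, a⟩ hx
        simp only [Finset.mem_sigma, Finset.mem_univ, true_and, mem_lowDeg] at hx
        rw [mem_restrictSupport_iff]
        intro s hs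
        rw [Finset.coe_filter, Set.mem_ofPred_eq, mem_lowDeg]
        constructor
        · have h1 := totalDegree_mul (b i) (aeval f (monomial a (1 : F)))
          have h2 := totalDegree_aeval_monomial_le hf a
          have h3 := he i
          have h4 : s.degree ≤ _ := le_totalDegree hs
          dsimp only at h4
          omega
        · have h1 := degreeOf_mul_le z (b i) (aeval f (monomial a (1 : F)))
          have h2 := hdeg a
          have h3 := he i
          have h4 := degreeOf_le_totalDegree (b i) z
          have h5 := (degreeOf_le_iff.mp le_rfl s hs : s z ≤ _)
          dsimp only at h5
          omega)
    -- Multiplying by `z ^ (k + e + 1)` produces monomials that cannot occur.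
    have h2 : (lowDeg σ (k - 1)).card ≤
        ((lowDeg σ (2 * k + e)).filter fun a => ¬ a z ≤ k + e).card := by
      refine Finset.card_le_card_of_injOn (fun a => a + Finsupp.single z (k + e + 1)) ?_
        (fun a _ a' _ h => add_right_cancel h)
      intro a ha
      rw [Finset.mem_coe, mem_lowDeg] at ha
      simp only [Finset.coe_filter, Set.mem_ofPred_eq, mem_lowDeg, map_add,
        Finsupp.degree_single, Finsupp.add_apply, Finsupp.single_eq_same]
      omega
    have h3 := Finset.card_filter_add_card_filter_not (s := lowDeg σ (2 * k + e))
      (fun a => a z ≤ k + e)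
    simp only [Finset.card_sigma, card_lowDeg, Finset.sum_const, Finset.card_univ,
      smul_eq_mul, ← hn] at h1 h2 h3
    omega
  have : Fintype.card ι + 1 ≤ 2 ^ n := by
    refine le_two_pow_of_mul_pow_le (E := e + n) fun k => ?_
    rcases key k with h | rfl
    swap
    · have : n ≠ 0 := Fintype.card_ne_zero
      simp [this]
    have hpow : k ^ n ≤ n.factorial * (k - 1 + n).choose n := by
      rcases Nat.eq_zero_or_pos k with rfl | hk
      · rw [zero_pow (Fintype.card_ne_zero : Fintype.card σ ≠ 0)]
        exact Nat.zero_le _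
      obtain ⟨k, rfl⟩ : ∃ l, k = l + 1 := ⟨k - 1, by omega⟩
      rw [Nat.add_sub_cancel, ← Nat.ascFactorial_eq_factorial_mul_choose]
      exact Nat.pow_succ_le_ascFactorial _ _
    have hpow2 : k ^ n ≤ n.factorial * (k + n).choose n :=
      hpow.trans (Nat.mul_le_mul_left _ (Nat.choose_le_choose _ (by omega)))
    calc (Fintype.card ι + 1) * k ^ n = Fintype.card ι * k ^ n + k ^ n := by ring
      _ ≤ Fintype.card ι * (n.factorial * (k + n).choose n) +
            n.factorial * (k - 1 + n).choose n :=
          Nat.add_le_add (Nat.mul_le_mul_left _ hpow2) hpow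
      _ = n.factorial * (Fintype.card ι * (k + n).choose n + (k - 1 + n).choose n) := by ring
      _ ≤ n.factorial * (2 * k + e + n).choose n := Nat.mul_le_mul_left _ h
      _ = (2 * k + e + n).descFactorial n :=
          (Nat.descFactorial_eq_factorial_mul_choose _ _).symm
      _ ≤ (2 * k + (e + n)) ^ n := by
          rw [← add_assoc]; exact Nat.descFactorial_le_pow _ _
  omega

end Counting

end GenIso

/-! ### The degrees of an independent family -/

namespace GenIso

open MvPolynomial

section Series

lemma hasSum_of_eq {u v : ℕ → ℝ} {a : ℝ} (h : ∀ k, u k = v k) (hv : HasSum v a) :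
    HasSum u a :=
  (_root_.funext h : u = v) ▸ hv

/-- The Hilbert series form of Bézout's inequality: summing `Indep.sum_choose_le` against `t ^ d`
compares `∑ t ^ (e i) * (1 + t) / (1 - t ^ 2) ^ (n + 1)` with `1 / (1 - t) ^ (n + 1)`. -/
lemma Indep.sum_pow_le {F σ ι : Type*} [Field F] [Fintype σ] [DecidableEq σ] [Fintype ι]
    [Nonempty σ] {f : σ → MvPolynomial σ F} {b : ι → MvPolynomial σ F}
    (hind : Indep f b) (hf : ∀ j, (f j).totalDegree ≤ 2) {e : ι → ℕ}
    (he : ∀ i, (b i).totalDegree ≤ e i) {t : ℝ} (h0 : 0 < t) (h1 : t < 1) :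
    ∑ i, t ^ e i ≤ (1 + t) ^ Fintype.card σ := by
  set n := Fintype.card σ
  have hS := hasSum_choose_mul_geometric_of_norm_lt_one (𝕜 := ℝ) n
    (r := t) (by rw [Real.norm_of_nonneg h0.le]; exact h1)
  have hS2 := hasSum_choose_mul_geometric_of_norm_lt_one (𝕜 := ℝ) n
    (r := t ^ 2) (by
      rw [Real.norm_of_nonneg (by positivity)]
      exact pow_lt_one₀ h0.le h1 two_ne_zero)
  set s : ℝ := 1 / (1 - t ^ 2) ^ (n + 1) with hs
  have hU : HasSum (fun d : ℕ => ((d / 2 + n).choose n : ℝ) * t ^ d) (s + t * s) := by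
    refine HasSum.even_add_odd ?_ ?_
    · refine hasSum_of_eq (fun k => ?_) hS2
      rw [Nat.mul_div_cancel_left k two_pos, pow_mul]
    · refine hasSum_of_eq (fun k => ?_) (hS2.mul_left t)
      rw [show (2 * k + 1) / 2 = k by omega, pow_succ, pow_mul]
      ring
  have hV : ∀ a : ℕ, HasSum (fun d : ℕ => if a ≤ d then
      (((d - a) / 2 + n).choose n : ℝ) * t ^ d else 0) (t ^ a * (s + t * s)) := by
    intro a
    refine ((add_left_injective a).hasSum_iff ?_).mp ?_
    · intro d hd
      rw [if_neg]
      intro had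
      exact hd ⟨d - a, Nat.sub_add_cancel had⟩
    · refine hasSum_of_eq (fun d => ?_) (hU.mul_left (t ^ a))
      simp only [Function.comp, le_add_iff_nonneg_left, zero_le, if_true, Nat.add_sub_cancel]
      rw [pow_add]
      ring
  have hW := hasSum_sum (s := Finset.univ) fun i (_ : i ∈ Finset.univ) => hV (e i)
  have hle := hasSum_le (fun d => ?_) hW hS
  · rw [← Finset.sum_mul] at hle
    have hp1 : 0 < 1 - t := by linarith
    have hp2 : 0 < 1 + t := by linarith
    have hfac : s + t * s = 1 / ((1 + t) ^ n * (1 - t) ^ (n + 1)) := by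
      rw [hs, show (1 : ℝ) - t ^ 2 = (1 + t) * (1 - t) by ring, mul_pow, pow_succ (1 + t)]
      field_simp
    rw [hfac, mul_one_div, div_le_div_iff₀ (by positivity) (by positivity), one_mul] at hle
    exact le_of_mul_le_mul_right hle (by positivity)
  · have := hind.sum_choose_le hf he d
    have h2 : ((∑ i, (if e i ≤ d then ((d - e i) / 2 + n).choose n else 0) : ℕ) : ℝ) * t ^ d ≤
        ((d + n).choose n : ℝ) * t ^ d :=
      mul_le_mul_of_nonneg_right (by exact_mod_cast this) (by positivity)
    refine le_trans (le_of_eq ?_) h2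
    rw [Nat.cast_sum, Finset.sum_mul]
    refine Finset.sum_congr rfl fun i _ => ?_
    split_ifs <;> simp

/-- Comparing first derivatives at `t = 1` in `Indep.sum_pow_le`: if the bound `2 ^ n` is attained,
the degrees are at least `n / 2` on average. -/
lemma Indep.le_two_mul_sum_deg {F σ ι : Type*} [Field F] [Fintype σ] [DecidableEq σ] [Fintype ι]
    [Nonempty σ] {f : σ → MvPolynomial σ F} {b : ι → MvPolynomial σ F}
    (hind : Indep f b) (hf : ∀ j, (f j).totalDegree ≤ 2) {e : ι → ℕ}
    (he : ∀ i, (b i).totalDegree ≤ e i) (hcard : Fintype.card ι = 2 ^ Fintype.card σ) :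
    Fintype.card σ * 2 ^ Fintype.card σ ≤ 2 * ∑ i, e i := by
  set n := Fintype.card σ
  let p : ℝ → ℝ := fun t => (1 + t) ^ n - ∑ i, t ^ e i
  have hp1 : p 1 = 0 := by
    simp only [p, one_pow, Finset.sum_const, Finset.card_univ, hcard, nsmul_eq_mul, mul_one]
    push_cast
    norm_num
  have hd : HasDerivAt p (n * 2 ^ (n - 1) - ∑ i, (e i : ℝ)) 1 := by
    refine HasDerivAt.sub ?_ ?_
    · have := ((hasDerivAt_id' (1 : ℝ)).const_add 1).fun_pow n
      rwa [mul_one, one_add_one_eq_two] at this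
    · have := HasDerivAt.fun_sum (u := Finset.univ)
        (fun i (_ : i ∈ Finset.univ) => hasDerivAt_pow (e i) (1 : ℝ))
      simpa using this
  have hslope := (hasDerivAt_iff_tendsto_slope_left_right.mp hd).1
  have hle : (n * 2 ^ (n - 1) - ∑ i, (e i : ℝ)) ≤ 0 := by
    refine le_of_tendsto hslope ?_
    filter_upwards [Ioo_mem_nhdsLT (show (0 : ℝ) < 1 by norm_num)] with t ht
    rw [slope_def_field, hp1, sub_zero]
    refine div_nonpos_of_nonneg_of_nonpos ?_ (by linarith [ht.2])
    exact sub_nonneg.mpr (hind.sum_pow_le hf he ht.1 ht.2)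
  have hn : n ≠ 0 := Fintype.card_ne_zero
  obtain ⟨m, hm⟩ : ∃ m, n = m + 1 := ⟨n - 1, by omega⟩
  have : (n * 2 ^ (n - 1) : ℝ) ≤ ∑ i, (e i : ℝ) := by linarith
  have h3 : n * 2 ^ (n - 1) ≤ ∑ i, e i := by exact_mod_cast this
  rw [hm, Nat.add_sub_cancel] at h3
  rw [hm, pow_succ]
  linarith

end Series

end GenIso

/-! ### Independence of polynomials separating simple zeros -/

namespace GenIso

open MvPolynomial

section SimpleZeros

variable {F σ : Type*} [Field F]

lemma aeval_X_mul_homogeneous {g : MvPolynomial σ F} {k : ℕ} (hg : g.IsHomogeneous k)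
    (ξ : σ → Polynomial F) :
    aeval (fun j => Polynomial.X * ξ j) g = Polynomial.X ^ k * aeval ξ g := by
  rw [aeval_def, aeval_def, eval₂_eq, eval₂_eq, Finset.mul_sum]
  refine Finset.sum_congr rfl fun s hs => ?_
  have hdeg : ∑ i ∈ s.support, s i = k := by
    have := hg (mem_support_iff.mp hs)
    simpa [Finsupp.weight_apply, Finsupp.sum] using this
  rw [← hdeg, ← Finset.prod_pow_eq_pow_sum]
  simp only [mul_pow, Finset.prod_mul_distrib]
  ring

/-- Substituting an arc `X * ξ` through the origin into a polynomial of order at least `m` gives a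
multiple of `X ^ m`, whose leading term is the value of the initial form. -/
lemma exists_aeval_X_mul {g : MvPolynomial σ F} {m : ℕ}
    (hg : ∀ k < m, homogeneousComponent k g = 0) (ξ : σ → Polynomial F) :
    ∃ G : Polynomial F, aeval (fun j => Polynomial.X * ξ j) g = Polynomial.X ^ m * G ∧
      G.eval 0 = eval (fun j => (ξ j).eval 0) (homogeneousComponent m g) := by
  have hsum : ∑ k ∈ Finset.range (g.totalDegree + 1 + m), homogeneousComponent k g = g := by
    conv_rhs => rw [← sum_homogeneousComponent g]
    symm
    refine Finset.sum_subset (Finset.range_mono (by omega)) fun k _ hk => ?_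
    exact homogeneousComponent_eq_zero _ _ (by simpa using hk)
  refine ⟨∑ k ∈ Finset.range (g.totalDegree + 1 + m),
    if k < m then 0 else Polynomial.X ^ (k - m) * aeval ξ (homogeneousComponent k g), ?_, ?_⟩
  · conv_lhs => rw [← hsum]
    rw [map_sum, Finset.mul_sum]
    refine Finset.sum_congr rfl fun k _ => ?_
    rw [aeval_X_mul_homogeneous (homogeneousComponent_isHomogeneous k g)]
    split_ifs with h
    · rw [hg k h, map_zero, mul_zero, mul_zero]
    · rw [← mul_assoc, ← pow_add, Nat.add_sub_cancel' (not_lt.mp h)]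
  · rw [Polynomial.eval_finsetSum, Finset.sum_eq_single m]
    · rw [if_neg (lt_irrefl m), Nat.sub_self, pow_zero, one_mul, ← Polynomial.coe_evalRingHom,
        aeval_def, hom_eval₂, eval, coe_eval₂Hom]
      congr 1
      ext x
      simp
    · intro k _ hk
      split_ifs with h
      · simp
      · rw [Polynomial.eval_mul, Polynomial.eval_pow, Polynomial.eval_X,
          zero_pow (by omega), zero_mul]
    · intro h
      exact absurd (Finset.mem_range.mpr (by omega)) h

/-- A system with a simple zero at each point `p c` is inverted to first order by arcs through
`p c`, so that polynomials `b i` separated by the points `p c` are independent over `F[f]`. -/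
lemma indep_of_simple [Infinite F] {ι κ : Type*} [Fintype ι] {f : σ → MvPolynomial σ F}
    {b : ι → MvPolynomial σ F} (p : κ → σ → F)
    (hp : ∀ c, ∀ w : σ → F, ∃ v q : σ → F, ∀ j,
      aeval (fun i => Polynomial.C (p c i) + Polynomial.C (v i) * Polynomial.X) (f j) =
        Polynomial.X * (Polynomial.C (w j) + Polynomial.C (q j) * Polynomial.X))
    (hb : ∀ α : ι → F, (∀ c, ∑ i, eval (p c) (b i) * α i = 0) → α = 0) :
    Indep f b := by
  intro g hg
  have key : ∀ m : ℕ, ∀ i, homogeneousComponent m (g i) = 0 := by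
    intro m
    induction m using Nat.strong_induction_on with
    | _ m ih =>
      -- The initial forms of degree `m` vanish at every vector `w`.
      have hw : ∀ w : σ → F, ∀ i, eval w (homogeneousComponent m (g i)) = 0 := by
        intro w
        refine fun i => congrFun (hb (fun i => eval w (homogeneousComponent m (g i))) fun c => ?_) i
        obtain ⟨v, q, hvq⟩ := hp c w
        choose G hG hG0 using fun i => exists_aeval_X_mul (fun k hk => ih k hk i)
          (fun j => Polynomial.C (w j) + Polynomial.C (q j) * Polynomial.X)
        set x : σ → Polynomial F :=
          fun i => Polynomial.C (p c i) + Polynomial.C (v i) * Polynomial.X with hx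
        have h1 : ∑ i, aeval x (b i) * (Polynomial.X ^ m * G i) = 0 := by
          rw [← map_zero (aeval (R := F) x), ← hg, map_sum]
          refine Finset.sum_congr rfl fun i _ => ?_
          rw [map_mul, ← hG i]
          congr 1
          rw [← AlgHom.comp_apply, comp_aeval]
          simp only [hvq]
        have h2 : Polynomial.X ^ m * ∑ i, aeval x (b i) * G i = 0 := by
          rw [← h1, Finset.mul_sum]
          exact Finset.sum_congr rfl fun i _ => by ring
        have h3 := (mul_eq_zero.mp h2).resolve_left (pow_ne_zero _ Polynomial.X_ne_zero)
        have h4 := congrArg (Polynomial.eval 0) h3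
        rw [Polynomial.eval_finsetSum, Polynomial.eval_zero] at h4
        rw [← h4]
        refine Finset.sum_congr rfl fun i _ => ?_
        rw [Polynomial.eval_mul, hG0]
        congr 1
        · rw [← Polynomial.coe_evalRingHom, aeval_def, hom_eval₂, eval, coe_eval₂Hom]
          congr 1
          · ext; simp
          · ext; simp [hx]
        · simp
      intro i
      exact MvPolynomial.funext fun w => by rw [hw w i, map_zero]
  refine _root_.funext fun i => ?_
  rw [← sum_homogeneousComponent (g i)]
  exact Finset.sum_eq_zero fun k _ => key k i

end SimpleZeros

end GenIso

/-! ### Simplicity of the zeros when Bézout's bound is attained -/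

namespace GenIso

open MvPolynomial

section Zariski

/-- Zariski's main theorem at a point `c` that is isolated in its fibre: near `c`, every function
becomes integral over the base after multiplication by a power of an integral `r` with
`c r ≠ 0`. The function `g` cuts `c` out of its fibre. -/
lemma exists_integral_of_isolated {S T F : Type*} [CommRing S] [CommRing T] [Field F]
    (φ : S →+* T) (hφ : φ.FiniteType) (c : T →+* F) (g : T) (hg : c g ≠ 0)
    (h : ∀ P : Ideal T, P.IsPrime → P.comap φ = (RingHom.ker c).comap φ → g ∉ P →
      P = RingHom.ker c) :
    ∃ r, c r ≠ 0 ∧ φ.IsIntegralElem r ∧ ∀ x, ∃ m : ℕ, φ.IsIntegralElem (r ^ m * x) := by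
  let : Algebra S T := φ.toAlgebra
  have : Algebra.FiniteType S T := hφ
  have hp : (RingHom.ker c).IsPrime := RingHom.ker_isPrime c
  let q : PrimeSpectrum T := ⟨RingHom.ker c, hp⟩
  have : Algebra.QuasiFiniteAt S q.asIdeal := by
    refine Algebra.QuasiFiniteAt.of_isOpen_singleton_fiber q ?_
    have hopen := (PrimeSpectrum.basicOpen g).isOpen.preimage
      (continuous_subtype_val (p := (· ∈ (PrimeSpectrum.comap (algebraMap S T) ⁻¹'
        {q.comap (algebraMap S T)} : Set (PrimeSpectrum T)))))
    have heq : (Subtype.val ⁻¹' (PrimeSpectrum.basicOpen g : Set (PrimeSpectrum T)) :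
        Set ((PrimeSpectrum.comap (algebraMap S T) ⁻¹'
        {q.comap (algebraMap S T)} : Set (PrimeSpectrum T)))) = {⟨q, rfl⟩} := by
      ext ⟨P, hP⟩
      constructor
      · intro hgP
        refine Set.mem_singleton_iff.mpr (Subtype.ext (PrimeSpectrum.ext ?_))
        exact h P.asIdeal P.isPrime (congrArg PrimeSpectrum.asIdeal hP) hgP
      · intro hPq
        have : P = q := congrArg Subtype.val (Set.mem_singleton_iff.mp hPq)
        subst this
        exact hg
    rw [← heq]
    exact hopen
  obtain ⟨r, hr, h1, h2⟩ := Algebra.zariskisMainProperty_iff.mp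
    (Algebra.ZariskisMainProperty.of_finiteType (R := S) q.asIdeal)
  exact ⟨r, hr, h1, h2⟩

/-- Over an integrally closed base, an integral element satisfying an algebraic equation of degree
at most `N` satisfies a monic one. -/
lemma exists_monic_of_integral {S T : Type*} [CommRing S] [IsDomain S] [IsIntegrallyClosed S]
    [CommRing T] [IsDomain T] (φ : S →+* T) (hφ : Function.Injective φ) {θ : T}
    (hθ : φ.IsIntegralElem θ) {p : Polynomial S} (hp : p ≠ 0) (hp0 : p.eval₂ φ θ = 0) :
    ∃ q : Polynomial S, q.Monic ∧ q.eval₂ φ θ = 0 ∧ q.natDegree ≤ p.natDegree := by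
  let : Algebra S T := φ.toAlgebra
  have : FaithfulSMul S T := (faithfulSMul_iff_algebraMap_injective S T).mpr hφ
  have hθ' : IsIntegral S θ := hθ
  refine ⟨minpoly S θ, minpoly.monic hθ', minpoly.aeval S θ, ?_⟩
  exact Polynomial.natDegree_le_natDegree (minpoly.IsIntegrallyClosed.degree_le_of_ne_zero hp hp0)

/-- The elements integral over a ring homomorphism of algebras, as a linear subspace. -/
def integralSubspace {F S T : Type*} [Field F] [CommRing S] [CommRing T] [Algebra F S] [Algebra F T]
    (φ : S →ₐ[F] T) : Submodule F T where
  carrier := {x | φ.toRingHom.IsIntegralElem x}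
  add_mem' ha hb := RingHom.IsIntegralElem.add _ ha hb
  zero_mem' := RingHom.isIntegralElem_zero _
  smul_mem' a x hx := by
    have : a • x = φ.toRingHom (algebraMap F S a) * x := by
      rw [Algebra.smul_def]; congr 1; exact (φ.commutes a).symm
    rw [Set.mem_ofPred_eq, this]
    exact RingHom.IsIntegralElem.mul _ (RingHom.isIntegralElem_map _) hx

end Zariski

section Simple

variable {F σ : Type*} [Field F] [Fintype σ] [Nonempty σ]

/-- A zero that is separated from all the other zeros of `f` by a polynomial satisfies the
hypothesis of `exists_integral_of_isolated`: this is the Nullstellensatz. -/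
lemma isolated_of_finite [IsAlgClosed F] {f : σ → MvPolynomial σ F} {V : Finset (σ → F)}
    (hV : ∀ x, x ∈ V ↔ ∀ j, eval x (f j) = 0) {c : σ → F} (hc : c ∈ V) :
    ∃ r, eval c r ≠ 0 ∧ (aeval (R := F) f).toRingHom.IsIntegralElem r ∧
      ∀ x, ∃ m : ℕ, (aeval (R := F) f).toRingHom.IsIntegralElem (r ^ m * x) := by
  classical
  have hsep : ∀ c' : σ → F, c' ≠ c → ∃ i, c' i ≠ c i := fun c' h => Function.ne_iff.mp h
  choose! k hk using hsep
  set g : MvPolynomial σ F := ∏ c' ∈ V.erase c, (X (k c') - C (c' (k c'))) with hgdef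
  have hgV : ∀ c' ∈ V.erase c, eval c' g = 0 := by
    intro c' hc'
    rw [hgdef, map_prod]
    exact Finset.prod_eq_zero hc' (by simp)
  have hgc : eval c g ≠ 0 := by
    rw [hgdef, map_prod]
    refine Finset.prod_ne_zero_iff.mpr fun c' hc' => ?_
    have := hk c' (Finset.ne_of_mem_erase hc')
    simpa [sub_eq_zero] using this.symm
  refine exists_integral_of_isolated _ ?_ (eval c) g hgc ?_
  · refine RingHom.FiniteType.of_comp_finiteType (f := (C : F →+* MvPolynomial σ F)) ?_
    have : (aeval (R := F) f).toRingHom.comp C = (C : F →+* MvPolynomial σ F) := by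
      ext a : 1
      simp
    rw [this, ← algebraMap_eq]
    exact RingHom.finiteType_algebraMap.mpr inferInstance
  · intro P hP hfib hgP
    have hfP : ∀ j, f j ∈ P := by
      intro j
      have : X j ∈ P.comap (aeval (R := F) f).toRingHom := by
        rw [hfib, Ideal.mem_comap, RingHom.mem_ker]
        simpa using (hV c).mp hc j
      simpa [Ideal.mem_comap] using this
    have hle : RingHom.ker (eval c) ≤ P := by
      intro h hh
      have hhg : h * g ∈ P := by
        rw [← hP.isRadical.radical, ← vanishingIdeal_zeroLocus_eq_radical (K := F) P,
          mem_vanishingIdeal_iff]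
        intro x hx
        have hxV : x ∈ V := (hV x).mpr fun j => by simpa using hx _ (hfP j)
        rw [map_mul]
        by_cases hxc : x = c
        · rw [hxc, show aeval c h = 0 by simpa using hh, zero_mul]
        · rw [show aeval x g = 0 by simpa using hgV x (Finset.mem_erase.mpr ⟨hxc, hxV⟩), mul_zero]
      exact (hP.mem_or_mem hhg).resolve_right hgP
    have : (RingHom.ker (eval c)).IsMaximal :=
      RingHom.ker_isMaximal_of_surjective _ fun a => ⟨C a, eval_C a⟩
    exact (Ideal.IsMaximal.eq_of_le this hP.ne_top hle).symm

open TrivSqZeroExt in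
/-- If a quadratic system attains Bézout's bound, all its zeros are simple: a zero over the dual
numbers, that is, a zero `c` with a tangent vector `v`, has `v = 0`. -/
lemma simple_of_card [IsAlgClosed F] [DecidableEq σ] {f : σ → MvPolynomial σ F}
    (hf : ∀ j, (f j).totalDegree ≤ 2) (hinj : Function.Injective (aeval (R := F) f))
    {V : Finset (σ → F)} (hV : ∀ x, x ∈ V ↔ ∀ j, eval x (f j) = 0)
    (hcard : V.card = 2 ^ Fintype.card σ) {c : σ → F} (hc : c ∈ V) {v : σ → F}
    (hv : ∀ j, aeval (fun i => (inl (c i) + inr (v i) : DualNumber F)) (f j) = 0) : v = 0 := by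
  by_contra hv0
  obtain ⟨i0, hi0⟩ := Function.ne_iff.mp hv0
  set φ := aeval (R := F) f with hφ
  let χ : MvPolynomial σ F →ₐ[F] DualNumber F :=
    aeval (fun i => (inl (c i) + inr (v i) : DualNumber F))
  have hfst : ∀ p, fst (χ p) = eval c p := by
    intro p
    have : (fstHom F F F).comp χ = aeval c := by
      ext i
      simp [χ]
    simpa using congrArg (fun h : MvPolynomial σ F →ₐ[F] F => h p) this
  let D : Module.Dual F (MvPolynomial σ F) := (sndHom F F).comp χ.toLinearMap
  have hsnd : ∀ p, D p = snd (χ p) := fun p => rfl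
  -- The functionals on which `θ` below must not vanish: the derivative along `v`, and the
  -- differences of values at two zeros.
  let K := Option {p : V × V // p.1 ≠ p.2}
  let ℓ : K → Module.Dual F (MvPolynomial σ F) := fun k => match k with
    | none => D
    | some p => (aeval (R := F) p.1.1.1).toLinearMap - (aeval (R := F) p.1.2.1).toLinearMap
  have hℓ : ∀ p z, ℓ (some p) z = eval p.1.1.1 z - eval p.1.2.1 z := by
    intro p z
    change aeval p.1.1.1 z - aeval p.1.2.1 z = _
    rw [aeval_eq_eval, aeval_eq_eval]
  -- An integral `θ` that separates the zeros and has nonzero derivative in the direction `v`.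
  obtain ⟨θ, hθ, hθl⟩ := Module.Dual.exists_forall_mem_ne_zero_of_forall_exists
    (integralSubspace φ) ℓ (by
      rintro (_ | ⟨⟨⟨x, hx⟩, ⟨y, hy⟩⟩, hxy⟩)
      · obtain ⟨r, hr, -, h2⟩ := isolated_of_finite hV hc
        obtain ⟨m, hm⟩ := h2 (X i0 - C (c i0))
        refine ⟨_, hm, ?_⟩
        change D _ ≠ 0
        rw [hsnd, map_mul, DualNumber.snd_mul, map_pow, fst_pow, hfst, hfst]
        have h3 : snd (χ (X i0 - C (c i0))) = v i0 := by
          simp [χ, ← algebraMap_eq, algebraMap_eq_inl]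
        rw [h3, map_sub, eval_X, eval_C, sub_self, mul_zero, add_zero]
        exact mul_ne_zero (pow_ne_zero _ hr) hi0
      · obtain ⟨r, hr, h1, h2⟩ := isolated_of_finite hV hx
        by_cases hrr : eval y r = eval x r
        · have hne : x ≠ y := fun h => hxy (Subtype.ext h)
          obtain ⟨i, hi⟩ := Function.ne_iff.mp hne
          obtain ⟨m, hm⟩ := h2 (X i - C (x i))
          refine ⟨_, hm, ?_⟩
          rw [hℓ]
          simp only [map_mul, map_pow, map_sub, eval_X, eval_C, sub_self, mul_zero, zero_sub, hrr]
          exact neg_ne_zero.mpr (mul_ne_zero (pow_ne_zero _ hr) (sub_ne_zero.mpr hi.symm))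
        · refine ⟨r, h1, ?_⟩
          rw [hℓ]
          exact sub_ne_zero.mpr (Ne.symm hrr))
  have hDθ : snd (χ θ) ≠ 0 := hθl none
  have hθinj : Set.InjOn (fun x : σ → F => eval x θ) V := by
    intro x hx y hy hxy
    by_contra hne
    have := hθl (some ⟨(⟨x, hx⟩, ⟨y, hy⟩), fun h => hne (congrArg Subtype.val h)⟩)
    rw [hℓ] at this
    exact this (sub_eq_zero.mpr hxy)
  -- Bézout's inequality bounds the degree of `θ` over `F[f]`.
  obtain ⟨p, hp, hp0, hpdeg⟩ : ∃ p : Polynomial (MvPolynomial σ F), p ≠ 0 ∧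
      p.eval₂ φ.toRingHom θ = 0 ∧ p.natDegree ≤ 2 ^ Fintype.card σ := by
    have hnot : ¬ Indep f (fun i : Fin (2 ^ Fintype.card σ + 1) => θ ^ (i : ℕ)) := by
      intro h
      have := h.card_le_two_pow hf
      simp at this
    simp only [Indep, not_forall] at hnot
    obtain ⟨g, hg, hg0⟩ := hnot
    refine ⟨∑ i : Fin (2 ^ Fintype.card σ + 1), Polynomial.monomial (i : ℕ) (g i), ?_, ?_, ?_⟩
    · intro h
      apply hg0
      ext1 i
      have := congrArg (fun p => Polynomial.coeff p i) h
      simpa [Polynomial.finsetSum_coeff, Polynomial.coeff_monomial, Fin.val_inj] using this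
    · rw [← hg, Polynomial.eval₂_finsetSum]
      refine Finset.sum_congr rfl fun i _ => ?_
      rw [Polynomial.eval₂_monomial, mul_comm]
      rfl
    · refine Polynomial.natDegree_sum_le_of_forall_le _ _ fun i _ => ?_
      exact (Polynomial.natDegree_monomial_le _).trans (by omega)
  obtain ⟨q, hq, hq0, hqdeg⟩ := exists_monic_of_integral φ.toRingHom hinj hθ hp hp0
  -- Specializing the equation of `θ` at the origin.
  set q0 := q.map (eval (0 : σ → F)) with hq0def
  have hspec : ∀ {B : Type _} [CommRing B] [Algebra F B] (ψ : MvPolynomial σ F →ₐ[F] B),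
      (∀ j, ψ (f j) = 0) → Polynomial.aeval (ψ θ) q0 = 0 := by
    intro B _ _ ψ hψ
    rw [hq0def, Polynomial.aeval_def, Polynomial.eval₂_map, ← map_zero ψ, ← hq0]
    change _ = ψ.toRingHom _
    rw [Polynomial.hom_eval₂]
    congr 1
    refine MvPolynomial.ringHom_ext (fun a => ?_) fun j => ?_
    · simp [← algebraMap_eq]
    · simp [hφ, hψ]
  have hroot : ∀ x ∈ V, Polynomial.eval (eval x θ) q0 = 0 := by
    intro x hx
    have := hspec (aeval (R := F) x) fun j => by simpa using (hV x).mp hx j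
    simpa using this
  have hprod : q0 = ∏ x ∈ V, (Polynomial.X - Polynomial.C (eval x θ)) := by
    refine Polynomial.eq_of_monic_of_dvd_of_natDegree_le
      (Polynomial.monic_prod_of_monic _ _ fun x _ => Polynomial.monic_X_sub_C _) (hq.map _) ?_ ?_
    · refine Finset.prod_dvd_of_coprime ?_ fun x hx => Polynomial.dvd_iff_isRoot.mpr (hroot x hx)
      intro x hx y hy hxy
      exact Polynomial.isCoprime_X_sub_C_of_isUnit_sub
        (sub_ne_zero.mpr fun h => hxy (hθinj hx hy h)).isUnit
    · rw [Polynomial.natDegree_prod_of_monic _ _ fun x _ => Polynomial.monic_X_sub_C _]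
      simp only [Polynomial.natDegree_X_sub_C, Finset.sum_const, smul_eq_mul, mul_one, hcard]
      exact (Polynomial.natDegree_map_le).trans (hqdeg.trans hpdeg)
  have hsep : q0.Separable := by
    rw [hprod]
    exact Polynomial.separable_prod_X_sub_C_iff'.mpr fun x hx y hy h => hθinj hx hy h
  have hder : q0.derivative.eval (eval c θ) ≠ 0 := by
    have := hsep.aeval_derivative_ne_zero (x := eval c θ) (by simpa using hroot c hc)
    simpa using this
  have hχ := hspec χ hv
  have hdec : χ θ = inl (eval c θ) + inr (snd (χ θ)) := by
    rw [← hfst, inl_fst_add_inr_snd_eq]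
  rw [hdec, Polynomial.aeval_add_of_sq_eq_zero _ _ _ (by rw [sq, inr_mul_inr])] at hχ
  have hinl : ∀ (p : Polynomial F) (a : F),
      Polynomial.aeval (inl a : DualNumber F) p = inl (p.eval a) := by
    intro p a
    have := Polynomial.aeval_algHom_apply (inlAlgHom F F F) a p
    simpa using this
  rw [hinl, hinl, hroot c hc, inl_zero, zero_add, inl_mul_inr] at hχ
  have := congrArg snd hχ
  rw [snd_inr, snd_zero, smul_eq_mul] at this
  exact (mul_ne_zero hder hDθ) this

end Simple

end GenIso

/-! ### Idempotents as zeros of a quadratic system -/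

namespace GenIso

open MvPolynomial

section Interpolation

/-- Lagrange interpolation at finitely many points of affine space. -/
lemma exists_interpolation {F σ κ : Type*} [Field F] [Fintype κ] [DecidableEq κ] (p : κ → σ → F)
    (hp : Function.Injective p) (c : κ) :
    ∃ g : MvPolynomial σ F, ∀ c', eval (p c') g = if c' = c then 1 else 0 := by
  have hsep : ∀ c' : κ, ∃ h : MvPolynomial σ F, eval (p c) h = 1 ∧ (c' ≠ c → eval (p c') h = 0) := by
    intro c'
    by_cases h : c' = c
    · exact ⟨1, map_one _, fun h' => absurd h h'⟩
    · obtain ⟨i, hi⟩ := Function.ne_iff.mp (hp.ne h)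
      refine ⟨C (p c i - p c' i)⁻¹ * (X i - C (p c' i)), ?_, fun _ => by simp⟩
      simpa using inv_mul_cancel₀ (sub_ne_zero.mpr hi.symm)
  choose h h1 h2 using hsep
  refine ⟨∏ c' ∈ Finset.univ.erase c, h c', fun c' => ?_⟩
  rw [map_prod]
  split_ifs with hc
  · rw [hc]
    exact Finset.prod_eq_one fun k _ => h1 k
  · exact Finset.prod_eq_zero (Finset.mem_erase.mpr ⟨hc, Finset.mem_univ _⟩) (h2 c' hc)

end Interpolation

section Idempotents

variable {F A σ : Type*} [Field F] [AddCommGroup A] [Module F A] [Fintype σ]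

/-- The quadratic polynomials whose common zeros are the coordinate vectors of the idempotents:
the coordinates of `x * x - x` in the basis `b`. -/
noncomputable def idemPoly (mul : A →ₗ[F] A →ₗ[F] A) (b : Module.Basis σ F A) (j : σ) :
    MvPolynomial σ F :=
  ∑ i, ∑ k, C (b.repr (mul (b i) (b k)) j) * (X i * X k) - X j

variable (mul : A →ₗ[F] A →ₗ[F] A) (b : Module.Basis σ F A)

lemma aeval_idemPoly {B : Type*} [CommRing B] [Algebra F B] (x : σ → B) (j : σ) :
    aeval x (idemPoly mul b j) =
      ∑ i, ∑ k, algebraMap F B (b.repr (mul (b i) (b k)) j) * (x i * x k) - x j := by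
  simp [idemPoly]

lemma repr_mul (u v : A) (j : σ) : b.repr (mul u v) j =
    ∑ i, ∑ k, b.repr (mul (b i) (b k)) j * (b.repr u i * b.repr v k) := by
  conv_lhs => rw [← b.sum_repr u, ← b.sum_repr v]
  simp only [map_sum, map_smul, LinearMap.sum_apply, LinearMap.smul_apply, Finsupp.coe_finsetSum,
    Finset.sum_apply, Finsupp.smul_apply, smul_eq_mul, Finset.mul_sum]
  rw [Finset.sum_comm]
  refine Finset.sum_congr rfl fun i _ => Finset.sum_congr rfl fun k _ => by ring

lemma eval_idemPoly (u : A) (j : σ) :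
    eval (b.equivFun u) (idemPoly mul b j) = b.repr (mul u u - u) j := by
  rw [← aeval_eq_eval, aeval_idemPoly, map_sub, Finsupp.sub_apply, repr_mul]
  rfl

lemma totalDegree_idemPoly_le (j : σ) : (idemPoly mul b j).totalDegree ≤ 2 := by
  refine (totalDegree_sub _ _).trans (max_le ?_ ?_)
  · refine totalDegree_finsetSum_le fun i _ => totalDegree_finsetSum_le fun k _ => ?_
    refine (totalDegree_mul _ _).trans ?_
    rw [totalDegree_C, zero_add]
    refine (totalDegree_mul _ _).trans ?_
    rw [totalDegree_X, totalDegree_X]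
  · rw [totalDegree_X]
    exact one_le_two

lemma degreeOf_idemPoly_le [DecidableEq σ] {z : σ} (hz : mul (b z) (b z) = 0) (j : σ) :
    (idemPoly mul b j).degreeOf z ≤ 1 := by
  refine (degreeOf_sub_le _ _ _).trans (max_le ?_ ?_)
  · refine (degreeOf_sum_le _ _ _).trans (Finset.sup_le fun i _ => ?_)
    refine (degreeOf_sum_le _ _ _).trans (Finset.sup_le fun k _ => ?_)
    by_cases h : i = z ∧ k = z
    · rw [h.1, h.2, hz]
      simp
    · refine (degreeOf_C_mul_le _ _ _).trans ((degreeOf_mul_le _ _ _).trans ?_)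
      rw [degreeOf_X, degreeOf_X]
      split_ifs with h1 h2
      · exact absurd ⟨h1.symm, h2.symm⟩ h
      all_goals omega
  · rw [degreeOf_X]
    split_ifs <;> omega

/-- Expansion of the system along the line through an idempotent `c` in the direction `v`. -/
lemma aeval_line_idemPoly (hcomm : ∀ x y, mul x y = mul y x) {c : A} (hc : mul c c = c) (v : A)
    {B : Type*} [CommRing B] [Algebra F B] (t : B) (j : σ) :
    aeval (fun i => algebraMap F B (b.repr c i) + algebraMap F B (b.repr v i) * t)
        (idemPoly mul b j) =
      t * (algebraMap F B (b.repr ((2 : F) • mul c v - v) j) +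
        algebraMap F B (b.repr (mul v v) j) * t) := by
  have h1 := repr_mul mul b c c j
  have h2 := repr_mul mul b c v j
  have h3 := repr_mul mul b v c j
  have h4 := repr_mul mul b v v j
  rw [hcomm v c] at h3
  rw [hc] at h1
  have e : ∑ i, ∑ k, algebraMap F B (b.repr (mul (b i) (b k)) j) *
      ((algebraMap F B (b.repr c i) + algebraMap F B (b.repr v i) * t) *
      (algebraMap F B (b.repr c k) + algebraMap F B (b.repr v k) * t)) =
      algebraMap F B (b.repr c j) + algebraMap F B (b.repr (mul c v) j) * t +
      algebraMap F B (b.repr (mul c v) j) * t + algebraMap F B (b.repr (mul v v) j) * (t * t) := by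
    rw [h1]
    nth_rewrite 1 [h2]
    rw [h3, h4]
    simp only [map_sum, map_mul, Finset.sum_mul, ← Finset.sum_add_distrib]
    refine Finset.sum_congr rfl fun i _ => Finset.sum_congr rfl fun k _ => by ring
  rw [aeval_idemPoly, e]
  simp only [map_sub, map_smul, Finsupp.sub_apply, Finsupp.smul_apply, smul_eq_mul, map_mul,
    map_ofNat]
  ring

variable [Module.Finite F A]

variable {mul} in
lemma surj_of_simple {c : A} (hs : ∀ v, (2 : F) • mul c v = v → v = 0) (w : A) :
    ∃ v, (2 : F) • mul c v - v = w := by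
  let E : A →ₗ[F] A := (2 : F) • mul c - LinearMap.id
  have hE : Function.Injective E := by
    rw [injective_iff_map_eq_zero]
    intro v hv
    exact hs v (sub_eq_zero.mp hv)
  obtain ⟨v, hv⟩ := LinearMap.injective_iff_surjective.mp hE w
  exact ⟨v, hv⟩

variable {mul} in
/-- Polynomials that separate a family of simple idempotents are independent over `F[f]`. -/
lemma indep_of_simple_idempotents [Infinite F] (hcomm : ∀ x y, mul x y = mul y x)
    {ι κ : Type*} [Fintype ι]
    (c : κ → A) (hc : ∀ k, mul (c k) (c k) = c k)
    (hs : ∀ k, ∀ v, (2 : F) • mul (c k) v = v → v = 0)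
    {g : ι → MvPolynomial σ F}
    (hg : ∀ α : ι → F, (∀ k, ∑ i, eval (b.equivFun (c k)) (g i) * α i = 0) → α = 0) :
    Indep (idemPoly mul b) g := by
  refine indep_of_simple (fun k => b.equivFun (c k)) (fun k w => ?_) hg
  obtain ⟨v, hv⟩ := surj_of_simple (hs k) (b.equivFun.symm w)
  refine ⟨b.equivFun v, b.equivFun (mul v v), fun j => ?_⟩
  have := aeval_line_idemPoly mul b hcomm (hc k) v (Polynomial.X : Polynomial F) j
  rw [hv] at this
  rw [show w j = b.repr (b.equivFun.symm w) j by
    rw [← b.equivFun_apply, LinearEquiv.apply_symm_apply]]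
  exact this

variable {mul} in
/-- In a generic algebra, `1 / 2` is not an eigenvalue of the multiplication by an idempotent. -/
lemma idempotent_simple [IsAlgClosed F] [Nonempty σ] (b : Module.Basis σ F A)
    (hcomm : ∀ x y, mul x y = mul y x)
    (hgen : {c : A | mul c c = c}.ncard = 2 ^ Fintype.card σ)
    {c : A} (hc : mul c c = c) {v : A} (hv : (2 : F) • mul c v = v) : v = 0 := by
  classical
  have hfin : {c : A | mul c c = c}.Finite := Set.finite_of_ncard_pos (by rw [hgen]; positivity)
  let V : Finset (σ → F) := hfin.toFinset.image b.equivFun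
  have hV : ∀ x, x ∈ V ↔ ∀ j, eval x (idemPoly mul b j) = 0 := by
    intro x
    obtain ⟨u, rfl⟩ := b.equivFun.surjective x
    simp only [eval_idemPoly]
    have h0 : (∀ j, b.repr (mul u u - u) j = 0) ↔ mul u u - u = 0 :=
      ⟨fun h => b.repr.map_eq_zero_iff.mp (Finsupp.ext h), fun h => by simp [h]⟩
    rw [h0, sub_eq_zero]
    simp [V]
  have hcard : V.card = 2 ^ Fintype.card σ := by
    rw [Finset.card_image_of_injective _ b.equivFun.injective, ← hgen,
      Set.ncard_eq_toFinset_card _ hfin]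
  have hinj : Function.Injective (aeval (R := F) (idemPoly mul b)) := by
    -- The zero idempotent is always simple, which makes the system algebraically independent.
    have h1 : Indep (idemPoly mul b) (fun _ : Unit => (1 : MvPolynomial σ F)) := by
      refine indep_of_simple_idempotents b hcomm (fun _ : Unit => (0 : A)) (by simp) (by simp) ?_
      intro α hα
      ext1
      simpa using hα ()
    rw [injective_iff_map_eq_zero]
    intro g hg
    exact congrFun (h1 (fun _ => g) (by simpa using hg)) ()
  have := simple_of_card (totalDegree_idemPoly_le mul b) hinj hV hcard (c := b.equivFun c)
    (by simpa [V] using hc) (v := b.equivFun v) fun j => by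
      have := aeval_line_idemPoly mul b hcomm hc v (DualNumber.eps : DualNumber F) j
      rw [hv, sub_self, map_zero, Finsupp.zero_apply, map_zero, zero_add, mul_left_comm,
        DualNumber.eps_mul_eps, mul_zero] at this
      rw [← this]
      congr 2
      ext i
      · change _ = TrivSqZeroExt.fst (TrivSqZeroExt.inl (b.repr c i) +
          TrivSqZeroExt.inl (b.repr v i) * DualNumber.eps : DualNumber F)
        simp
      · change _ = TrivSqZeroExt.snd (TrivSqZeroExt.inl (b.repr c i) +
          TrivSqZeroExt.inl (b.repr v i) * DualNumber.eps : DualNumber F)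
        simp
  exact b.equivFun.map_eq_zero_iff.mp this

variable {mul} in
/-- A square-zero basis vector `z` makes the system `idemPoly` of degree at most one in `z`, which
is incompatible with Bézout's bound being attained. -/
lemma sq_zero_eq_zero [IsAlgClosed F] (hcomm : ∀ x y, mul x y = mul y x)
    (hgen : {c : A | mul c c = c}.ncard = 2 ^ Module.finrank F A)
    {z : A} (hz : mul z z = 0) : z = 0 := by
  classical
  by_contra hz0
  have hli : LinearIndepOn F id {z} := LinearIndepOn.singleton hz0
  let B := Module.Basis.extend hli
  let : Fintype (hli.extend (Set.subset_univ _)) := FiniteDimensional.fintypeBasisIndex B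
  let z' : hli.extend (Set.subset_univ _) := ⟨z, hli.subset_extend _ rfl⟩
  have hBz : B z' = z := Module.Basis.extend_apply_self hli z'
  have : Nonempty (hli.extend (Set.subset_univ _)) := ⟨z'⟩
  rw [Module.finrank_eq_card_basis B] at hgen
  have hfin : {c : A | mul c c = c}.Finite := Set.finite_of_ncard_pos (by rw [hgen]; positivity)
  let : Fintype {c : A | mul c c = c} := hfin.fintype
  have hint := exists_interpolation (fun c : {c : A | mul c c = c} => (B.equivFun c.1 : _ → F))
    (B.equivFun.injective.comp Subtype.val_injective)
  choose g hg using hint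
  have hind : Indep (idemPoly mul B) g := by
    refine indep_of_simple_idempotents B hcomm (fun c : {c : A | mul c c = c} => c.1)
      (fun c => c.2) (fun c v hv => idempotent_simple B hcomm hgen c.2 hv) fun α hα => ?_
    ext1 c
    simpa only [hg, Pi.zero_apply, ite_mul, one_mul, zero_mul, Finset.sum_ite_eq,
      Finset.mem_univ, if_true] using hα c
  have hlt := hind.card_lt_two_pow (totalDegree_idemPoly_le mul B) z'
    (degreeOf_idemPoly_le mul B (by rw [hBz, hz]))
  rw [← hgen, ← Nat.card_coe_set_eq, Nat.card_eq_fintype_card] at hlt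
  exact lt_irrefl _ hlt

end Idempotents

end GenIso

/-! ### Residues and Bezoutian duality -/

namespace GenIso

open MvPolynomial

section AdaptedBasis

/-- A basis adapted to a chain of subspaces: each vector `w` of `s` lies in the step `e w`, and
the levels `e w` sum to `∑ i < j, (dim U j - dim U i)`. -/
lemma exists_adapted_basis {F W : Type*} [Field F] [AddCommGroup W] [Module F W]
    [Module.Finite F W] {U : ℕ → Submodule F W} (hU : Monotone U) (j : ℕ) :
    ∃ (s : Finset W) (e : W → ℕ), LinearIndepOn F id (s : Set W) ∧
      Submodule.span F (s : Set W) = U j ∧ (∀ w ∈ s, w ∈ U (e w)) ∧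
      ∑ w ∈ s, e w + ∑ i ∈ Finset.range j, Module.finrank F (U i) =
        j * Module.finrank F (U j) := by
  classical
  have hext : ∀ (s : Finset W) (V : Submodule F W), LinearIndepOn F id (s : Set W) →
      (s : Set W) ⊆ V → ∃ s' : Finset W, s ⊆ s' ∧ LinearIndepOn F id (s' : Set W) ∧
        Submodule.span F (s' : Set W) = V := by
    intro s V hs hsV
    obtain ⟨t, htV, hst, hsp, ht⟩ := exists_linearIndepOn_extension hs hsV
    have hfin : t.Finite := LinearIndependent.setFinite ht
    lift t to Finset W using hfin
    refine ⟨t, by exact_mod_cast hst, ht, le_antisymm (Submodule.span_le.mpr htV) ?_⟩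
    simpa using hsp
  induction j with
  | zero =>
    obtain ⟨s, -, hs, hsp⟩ := hext ∅ (U 0) (by simp) (by simp)
    refine ⟨s, fun _ => 0, hs, hsp, fun w hw => ?_, by simp⟩
    exact hsp ▸ Submodule.subset_span hw
  | succ j ih =>
    obtain ⟨s, e, hs, hsp, hse, hsum⟩ := ih
    have hsU : (s : Set W) ⊆ U (j + 1) := fun w hw =>
      hU (Nat.le_succ j) (hsp ▸ Submodule.subset_span hw)
    obtain ⟨s', hss', hs', hsp'⟩ := hext s (U (j + 1)) hs hsU
    refine ⟨s', fun w => if w ∈ s then e w else j + 1, hs', hsp', fun w hw => ?_, ?_⟩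
    · by_cases h : w ∈ s
      · simpa [h] using hse w h
      · simpa [h] using hsp' ▸ Submodule.subset_span (R := F) hw
    · have hc := finrank_span_finset_eq_card hs
      have hc' := finrank_span_finset_eq_card hs'
      rw [hsp] at hc
      rw [hsp'] at hc'
      rw [← Finset.sum_sdiff hss', Finset.sum_congr rfl (g := fun _ => j + 1)
        (fun w hw => if_neg (Finset.mem_sdiff.mp hw).2),
        Finset.sum_congr (s₁ := s) rfl (g := e) (fun w hw => if_pos hw), Finset.sum_const,
        Finset.card_sdiff_of_subset hss', Finset.sum_range_succ, ← hc', ← hc, smul_eq_mul]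
      have hle : Module.finrank F (U j) ≤ Module.finrank F (U (j + 1)) :=
        Submodule.finrank_mono (hU (Nat.le_succ j))
      obtain ⟨k, hk⟩ := Nat.exists_eq_add_of_le hle
      rw [hk, Nat.add_sub_cancel_left]
      linarith

end AdaptedBasis

section Residues

variable {F σ κ : Type*} [Field F]

/-- The values on the points `p c` of the polynomials of degree at most `d`. -/
noncomputable def evalSpace (p : κ → σ → F) (d : ℕ) : Submodule F (κ → F) :=
  (restrictTotalDegree σ F d).map (LinearMap.pi fun c => (aeval (R := F) (p c)).toLinearMap)

lemma mem_evalSpace {p : κ → σ → F} {d : ℕ} {u : κ → F} :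
    u ∈ evalSpace p d ↔ ∃ g : MvPolynomial σ F, g.totalDegree ≤ d ∧ ∀ c, eval (p c) g = u c := by
  simp only [evalSpace, Submodule.mem_map, mem_restrictTotalDegree]
  refine exists_congr fun g => and_congr_right fun _ => ?_
  rw [_root_.funext_iff]
  simp [aeval_eq_eval]

lemma evalSpace_mono (p : κ → σ → F) : Monotone (evalSpace p) := by
  intro a b hab u hu
  obtain ⟨g, hg, hgu⟩ := mem_evalSpace.mp hu
  exact mem_evalSpace.mpr ⟨g, hg.trans hab, hgu⟩

variable [Fintype κ]

/-- The functional `h ↦ ∑ c, lam c * h (p c)` on polynomials, applied to the first set of variables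
of a polynomial in two sets of variables. -/
noncomputable def partialSum {τ : Type*} (p : κ → σ → F) (lam : κ → F)
    (P : MvPolynomial (σ ⊕ τ) F) : MvPolynomial τ F :=
  ∑ c, C (lam c) * aeval (Sum.elim (fun i => C (p c i)) X) P

lemma eval_partialSum {τ : Type*} (p : κ → σ → F) (lam : κ → F)
    (P : MvPolynomial (σ ⊕ τ) F) (y : τ → F) :
    eval y (partialSum p lam P) = ∑ c, lam c * eval (Sum.elim (p c) y) P := by
  rw [partialSum, map_sum]
  refine Finset.sum_congr rfl fun c _ => ?_
  rw [map_mul, eval_C]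
  congr 1
  rw [← aeval_eq_eval, ← aeval_eq_eval, ← AlgHom.comp_apply, comp_aeval]
  congr 2
  ext (i | i) <;> simp

/-- If a functional kills the polynomials of degree at most `j`, then applying it to the first
variables of a polynomial of degree at most `n` leaves degree at most `n - j - 1` in the others. -/
lemma partialSum_degree [Fintype σ] {τ : Type*} [Fintype τ] {p : κ → σ → F} {lam : κ → F} {j n : ℕ}
    (hlam : ∀ g : MvPolynomial σ F, g.totalDegree ≤ j → ∑ c, lam c * eval (p c) g = 0)
    {P : MvPolynomial (σ ⊕ τ) F} (hP : P.totalDegree ≤ n) :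
    (partialSum p lam P).totalDegree ≤ n - (j + 1) ∧ (n ≤ j → partialSum p lam P = 0) := by
  let g : (σ ⊕ τ →₀ ℕ) → MvPolynomial σ F := fun s => ∏ i, X i ^ s (Sum.inl i)
  let h : (σ ⊕ τ →₀ ℕ) → MvPolynomial τ F := fun s => ∏ i, X i ^ s (Sum.inr i)
  have hexp : partialSum p lam P =
      ∑ s ∈ P.support, C (coeff s P * ∑ c, lam c * eval (p c) (g s)) * h s := by
    simp only [partialSum, aeval_def, eval₂_eq', Fintype.prod_sum_type, Sum.elim_inl, Sum.elim_inr,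
      algebraMap_eq]
    simp only [Finset.mul_sum, map_sum, Finset.sum_mul]
    rw [Finset.sum_comm]
    refine Finset.sum_congr rfl fun s _ => Finset.sum_congr rfl fun c _ => ?_
    simp only [g, h, map_mul, map_prod, map_pow, eval_X]
    ring
  have hg : ∀ s, (g s).totalDegree ≤ ∑ i, s (Sum.inl i) := fun s =>
    (totalDegree_finsetProd _ _).trans (Finset.sum_le_sum fun i _ => by
      rw [totalDegree_X_pow])
  have hh : ∀ s, (h s).totalDegree ≤ ∑ i, s (Sum.inr i) := fun s =>
    (totalDegree_finsetProd _ _).trans (Finset.sum_le_sum fun i _ => by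
      rw [totalDegree_X_pow])
  have hs : ∀ s ∈ P.support, ∑ i, s (Sum.inl i) + ∑ i, s (Sum.inr i) ≤ n := by
    intro s hs
    have := (le_totalDegree hs).trans hP
    rwa [Finsupp.sum_fintype _ _ (fun _ => rfl), Fintype.sum_sum_type] at this
  have hz : ∀ s, ∑ i, s (Sum.inl i) ≤ j →
      C (coeff s P * ∑ c, lam c * eval (p c) (g s)) * h s = 0 := by
    intro s hsj
    rw [hlam _ ((hg s).trans hsj), mul_zero, map_zero, zero_mul]
  rw [hexp]
  refine ⟨totalDegree_finsetSum_le fun s hsP => ?_, fun hnj => Finset.sum_eq_zero fun s hsP =>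
    hz s (by have := hs s hsP; omega)⟩
  by_cases hsj : ∑ i, s (Sum.inl i) ≤ j
  · rw [hz s hsj, totalDegree_zero]
    exact Nat.zero_le _
  · refine (totalDegree_mul _ _).trans ?_
    rw [totalDegree_C, zero_add]
    have := hs s hsP
    exact (hh s).trans (by omega)

variable [Fintype σ] [DecidableEq κ]

lemma dual_apply_eq (φ : Module.Dual F (κ → F)) (u : κ → F) :
    φ u = ∑ c, φ (Pi.single c 1) * u c := by
  conv_lhs => rw [← Finset.univ_sum_single u, map_sum]
  refine Finset.sum_congr rfl fun c _ => ?_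
  rw [show Pi.single c (u c) = u c • (Pi.single c 1 : κ → F) by
    rw [← Pi.single_smul, smul_eq_mul, mul_one], map_smul, smul_eq_mul, mul_comm]

lemma annihilator_kills {p : κ → σ → F} {j : ℕ} {φ : Module.Dual F (κ → F)}
    (hφ : φ ∈ (evalSpace p j).dualAnnihilator) (g : MvPolynomial σ F) (hg : g.totalDegree ≤ j) :
    ∑ c, φ (Pi.single c 1) * eval (p c) g = 0 := by
  rw [← dual_apply_eq φ fun c => eval (p c) g]
  exact (Submodule.mem_dualAnnihilator φ).mp hφ _ (mem_evalSpace.mpr ⟨g, hg, fun _ => rfl⟩)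

lemma eval_partialSum_bezoutian {p : κ → σ → F} {B : MvPolynomial (σ ⊕ σ) F}
    (hB0 : ∀ c c', c ≠ c' → eval (Sum.elim (p c) (p c')) B = 0) (lam : κ → F) (c : κ) :
    eval (p c) (partialSum p lam B) = lam c * eval (Sum.elim (p c) (p c)) B := by
  rw [eval_partialSum, Finset.sum_eq_single c]
  · intro c' _ h
    rw [hB0 c' c h, mul_zero]
  · exact fun h => absurd (Finset.mem_univ c) h

/-- Multiplication by the diagonal of the Bezoutian `B` embeds the functionals killing the
polynomials of degree at most `j` into the value vectors of polynomials of degree at most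
`n - j - 1`. -/
lemma card_le_finrank_add {p : κ → σ → F} {n : ℕ} {B : MvPolynomial (σ ⊕ σ) F}
    (hB : B.totalDegree ≤ n) (hB0 : ∀ c c', c ≠ c' → eval (Sum.elim (p c) (p c')) B = 0)
    (hB1 : ∀ c, eval (Sum.elim (p c) (p c)) B ≠ 0) (j : ℕ) :
    Fintype.card κ ≤ Module.finrank F (evalSpace p j) +
      Module.finrank F (evalSpace p (n - (j + 1))) := by
  let T : Module.Dual F (κ → F) →ₗ[F] (κ → F) :=
    { toFun := fun φ c => φ (Pi.single c 1) * eval (Sum.elim (p c) (p c)) B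
      map_add' := fun φ ψ => by ext c; simp [add_mul]
      map_smul' := fun a φ => by ext c; simp [mul_assoc] }
  have hT : Function.Injective T := by
    rw [injective_iff_map_eq_zero]
    intro φ hφ
    ext c
    simpa [hB1 c] using (mul_eq_zero.mp (congrFun hφ c)).resolve_right (hB1 c)
  have hle : (evalSpace p j).dualAnnihilator.map T ≤ evalSpace p (n - (j + 1)) := by
    rintro _ ⟨φ, hφ, rfl⟩
    exact mem_evalSpace.mpr ⟨_, (partialSum_degree (annihilator_kills hφ) hB).1,
      fun c => eval_partialSum_bezoutian hB0 _ c⟩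
  have h1 := Submodule.finrank_mono hle
  rw [← (Submodule.equivMapOfInjective T hT _).finrank_eq] at h1
  have h2 := Subspace.finrank_add_finrank_dualAnnihilator_eq (evalSpace p j)
  rw [Module.finrank_fintype_fun_eq_card] at h2
  omega

lemma evalSpace_eq_top {p : κ → σ → F} {n : ℕ} {B : MvPolynomial (σ ⊕ σ) F}
    (hB : B.totalDegree ≤ n) (hB0 : ∀ c c', c ≠ c' → eval (Sum.elim (p c) (p c')) B = 0)
    (hB1 : ∀ c, eval (Sum.elim (p c) (p c)) B ≠ 0) : evalSpace p n = ⊤ := by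
  have hbot : (evalSpace p n).dualAnnihilator = ⊥ := by
    refine (Submodule.eq_bot_iff _).mpr fun φ hφ => ?_
    have h0 := (partialSum_degree (annihilator_kills hφ) hB).2 le_rfl
    ext c
    have := eval_partialSum_bezoutian hB0 (fun c => φ (Pi.single c 1)) c
    rw [h0, map_zero] at this
    simpa using (mul_eq_zero.mp this.symm).resolve_right (hB1 c)
  have h2 := Subspace.finrank_add_finrank_dualAnnihilator_eq (evalSpace p n)
  rw [hbot, finrank_bot, add_zero] at h2
  exact Submodule.eq_top_of_finrank_eq h2

/-- The Cayley-Bacharach property: for a quadratic system attaining Bézout's bound, some nonzero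
functional on the zeros kills all polynomials of degree less than `n`. The duality of
`card_le_finrank_add` and the degree bound of `Indep.le_two_mul_sum_deg` for a basis adapted to the
chain `evalSpace p` point in opposite directions, so both are equalities; thus
`evalSpace p (n - 1)`, which is dual to the constants, is proper. -/
lemma exists_residue [DecidableEq σ] [Nonempty σ] {p : κ → σ → F} {B : MvPolynomial (σ ⊕ σ) F}
    (hB : B.totalDegree ≤ Fintype.card σ)
    (hB0 : ∀ c c', c ≠ c' → eval (Sum.elim (p c) (p c')) B = 0)
    (hB1 : ∀ c, eval (Sum.elim (p c) (p c)) B ≠ 0)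
    {f : σ → MvPolynomial σ F} (hf : ∀ j, (f j).totalDegree ≤ 2)
    (hcard : Fintype.card κ = 2 ^ Fintype.card σ)
    (hI : ∀ (s : Finset (κ → F)) (g : s → MvPolynomial σ F),
      (∀ α : s → F, (∀ c, ∑ w, eval (p c) (g w) * α w = 0) → α = 0) → Indep f g) :
    ∃ lam : κ → F, lam ≠ 0 ∧ ∀ g : MvPolynomial σ F, g.totalDegree ≤ Fintype.card σ - 1 →
      ∑ c, lam c * eval (p c) g = 0 := by
  set n := Fintype.card σ with hn
  have hn0 : n ≠ 0 := Fintype.card_ne_zero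
  let d : ℕ → ℕ := fun i => Module.finrank F (evalSpace p i)
  have htop := evalSpace_eq_top hB hB0 hB1
  have hdn : d n = 2 ^ n := by
    simp only [d]
    rw [htop, finrank_top, Module.finrank_fintype_fun_eq_card, hcard]
  obtain ⟨s, e, hs, hsp, hse, hsum⟩ := exists_adapted_basis (evalSpace_mono p) n
  have hscard : s.card = 2 ^ n := by
    rw [← finrank_span_finset_eq_card hs, hsp]
    exact hdn
  choose g hgdeg hgval using fun w : s => mem_evalSpace.mp (hse w w.2)
  have hind : Indep f g := by
    refine hI s g fun α hα => ?_
    have hlin : ∑ w : s, α w • (w : κ → F) = 0 := by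
      ext c
      rw [Finset.sum_apply, Pi.zero_apply, ← hα c]
      refine Finset.sum_congr rfl fun w _ => ?_
      rw [hgval, Pi.smul_apply, smul_eq_mul, mul_comm]
    ext1 w
    exact Fintype.linearIndependent_iff.mp hs α hlin w
  -- Both bounds on `∑ w ∈ s, e w` equal `n * 2 ^ (n - 1)`, which forces equality throughout.
  have hlow := hind.le_two_mul_sum_deg hf hgdeg (by rw [Fintype.card_coe, hscard])
  rw [Finset.sum_coe_sort s e] at hlow
  have hup : ∀ i ∈ Finset.range n, 2 ^ n ≤ d i + d (n - 1 - i) := by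
    intro i _
    have := card_le_finrank_add hB hB0 hB1 i
    rwa [hcard, show n - (i + 1) = n - 1 - i by omega] at this
  have hrefl : ∑ i ∈ Finset.range n, (d i + d (n - 1 - i)) = 2 * ∑ i ∈ Finset.range n, d i := by
    rw [Finset.sum_add_distrib, Finset.sum_range_reflect d n, two_mul]
  have hsum' : ∑ w ∈ s, e w + ∑ i ∈ Finset.range n, d i = n * 2 ^ n := hdn ▸ hsum
  have hconst : ∑ i ∈ Finset.range n, 2 ^ n = n * 2 ^ n := by simp
  have heq : ∑ i ∈ Finset.range n, 2 ^ n = ∑ i ∈ Finset.range n, (d i + d (n - 1 - i)) :=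
    le_antisymm (Finset.sum_le_sum hup) (by rw [hrefl, hconst]; linarith)
  have h0 := (Finset.sum_eq_sum_iff_of_le hup).mp heq 0 (Finset.mem_range.mpr (by omega))
  rw [Nat.sub_zero] at h0
  have hd0 : 0 < d 0 := by
    have hne : Nonempty κ := Fintype.card_pos_iff.mp (by rw [hcard]; positivity)
    have h1 : (1 : κ → F) ∈ evalSpace p 0 := mem_evalSpace.mpr ⟨1, by simp, by simp⟩
    refine Module.finrank_pos_iff_exists_ne_zero.mpr ⟨⟨1, h1⟩, fun h => ?_⟩
    exact one_ne_zero (congrArg Subtype.val h)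
  have hann := Subspace.finrank_add_finrank_dualAnnihilator_eq (evalSpace p (n - 1))
  rw [Module.finrank_fintype_fun_eq_card, hcard] at hann
  have hne : (evalSpace p (n - 1)).dualAnnihilator ≠ ⊥ := by
    intro h
    rw [h, finrank_bot] at hann
    change d (n - 1) + _ = _ at hann
    omega
  obtain ⟨φ, hφ, hφ0⟩ := Submodule.exists_mem_ne_zero_of_ne_bot hne
  refine ⟨fun c => φ (Pi.single c 1), fun h => hφ0 ?_, annihilator_kills hφ⟩
  ext c
  simpa using congrFun h c

end Residues

end GenIso

/-! ### Characteristic polynomials of the idempotents -/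

namespace GenIso

open MvPolynomial

section Characteristic

variable {F A σ τ : Type*} [Field F] [AddCommGroup A] [Module F A]

lemma totalDegree_det_le {m : Type*} [Fintype m] [DecidableEq m]
    {M : Matrix m m (MvPolynomial τ F)} (hM : ∀ i j, (M i j).totalDegree ≤ 1) :
    M.det.totalDegree ≤ Fintype.card m := by
  rw [Matrix.det_apply]
  refine (totalDegree_finsetSum _ _).trans (Finset.sup_le fun e _ => ?_)
  have h : ((∏ i, M (e i) i).totalDegree) ≤ Fintype.card m := by
    refine (totalDegree_finsetProd _ _).trans ?_
    refine (Finset.sum_le_sum fun i _ => hM (e i) i).trans ?_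
    simp
  rcases Int.units_eq_one_or (Equiv.Perm.sign e) with h1 | h1
  · simpa [h1] using h
  · simpa [h1, totalDegree_neg] using h

/-- The value at `s` of the characteristic polynomial of multiplication by the generic element
`∑ i, l i • b i`, as a polynomial in the variables occurring in `l` and `s`. -/
noncomputable def charDet [Fintype σ] [DecidableEq σ] (mul : A →ₗ[F] A →ₗ[F] A)
    (b : Module.Basis σ F A) (l : σ → MvPolynomial τ F) (s : MvPolynomial τ F) :
    MvPolynomial τ F :=
  (Matrix.of fun j k => (if j = k then s else 0) - ∑ i, C (b.repr (mul (b i) (b k)) j) * l i).det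

variable [Fintype σ] [DecidableEq σ] (mul : A →ₗ[F] A →ₗ[F] A) (b : Module.Basis σ F A)

lemma totalDegree_charDet_le {l : σ → MvPolynomial τ F} {s : MvPolynomial τ F}
    (hl : ∀ i, (l i).totalDegree ≤ 1) (hs : s.totalDegree ≤ 1) :
    (charDet mul b l s).totalDegree ≤ Fintype.card σ := by
  refine totalDegree_det_le fun j k => ?_
  rw [Matrix.of_apply]
  refine (totalDegree_sub _ _).trans (max_le ?_ ?_)
  · split_ifs
    · exact hs
    · simp
  · refine (totalDegree_finsetSum _ _).trans (Finset.sup_le fun i _ => ?_)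
    exact (totalDegree_mul _ _).trans (by simpa using hl i)

lemma eval_charDet [Module.Finite F A] (l : σ → MvPolynomial τ F) (s : MvPolynomial τ F)
    (y : τ → F) {u : A} (hu : ∀ i, eval y (l i) = b.repr u i) :
    eval y (charDet mul b l s) = (LinearMap.charpoly (mul u)).eval (eval y s) := by
  rw [LinearMap.eval_charpoly, ← LinearMap.det_toMatrix b, charDet, RingHom.map_det]
  congr 1
  ext j k
  have hmul : b.repr (mul u (b k)) j = ∑ i, b.repr (mul (b i) (b k)) j * b.repr u i := by
    conv_lhs => rw [← b.sum_repr u]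
    simp only [map_sum, map_smul, LinearMap.sum_apply, LinearMap.smul_apply, Finsupp.finsetSum_apply,
      Finsupp.smul_apply, smul_eq_mul]
    exact Finset.sum_congr rfl fun i _ => mul_comm _ _
  simp only [RingHom.mapMatrix_apply, Matrix.map_apply, Matrix.of_apply, map_sub, map_sum,
    map_mul, eval_C, hu, LinearMap.toMatrix_apply, LinearMap.sub_apply, Finsupp.sub_apply, hmul]
  congr 1
  split_ifs with h
  · simp [Module.algebraMap_end_apply, h]
  · simp [Module.algebraMap_end_apply, Finsupp.single_eq_of_ne h]

/-- The identity `det (1 - 2 L) = 2 ^ n * det (1 / 2 - L)`. -/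
lemma charpoly_two_smul_eval [Module.Finite F A] (h2 : (2 : F) ≠ 0) (f : Module.End F A) :
    (LinearMap.charpoly (f + f)).eval 1 =
      2 ^ Module.finrank F A * (LinearMap.charpoly f).eval (1 / 2) := by
  rw [LinearMap.eval_charpoly, LinearMap.eval_charpoly, ← LinearMap.det_smul]
  congr 1
  ext v
  simp only [LinearMap.sub_apply, LinearMap.smul_apply, Module.algebraMap_end_apply,
    LinearMap.add_apply, smul_sub, smul_smul, one_smul]
  rw [mul_one_div_cancel h2, one_smul, two_smul]

lemma charpoly_zero_end [Module.Finite F A] :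
    LinearMap.charpoly (0 : Module.End F A) = Polynomial.X ^ Module.finrank F A := by
  simp [LinearMap.charpoly_zero]

end Characteristic

section Residue

/-- A functional killing the polynomials of degree less than `n` turns a polynomial of degree at
most `n` in two sets of variables into a constant. -/
lemma partialSum_eq_C {F σ κ τ : Type*} [Field F] [Fintype κ] [Fintype σ] [Fintype τ]
    {p : κ → σ → F} {w : κ → F}
    (hw : ∀ g : MvPolynomial σ F, g.totalDegree ≤ Fintype.card σ - 1 →
      ∑ c, w c * eval (p c) g = 0)
    {P : MvPolynomial (σ ⊕ τ) F} (hP : P.totalDegree ≤ Fintype.card σ) :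
    ∃ K, partialSum p w P = C K := by
  have := (partialSum_degree hw hP).1
  exact ⟨_, totalDegree_eq_zero_iff_eq_C.mp (by omega)⟩

/-- `1` is a root of the characteristic polynomial exactly when there is a nonzero fixed vector. -/
lemma charpoly_eval_one_eq_zero_iff {F A : Type*} [Field F] [AddCommGroup A] [Module F A]
    [Module.Finite F A] (f : Module.End F A) : f.charpoly.eval 1 = 0 ↔ ∃ v, v ≠ 0 ∧ f v = v := by
  rw [← Polynomial.IsRoot.def, ← Module.End.hasEigenvalue_iff_isRoot_charpoly]
  constructor
  · intro h
    obtain ⟨v, hv⟩ := h.exists_hasEigenvector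
    exact ⟨v, hv.2, by simpa using hv.apply_eq_smul⟩
  · rintro ⟨v, hv0, hv⟩
    exact Module.End.hasEigenvalue_of_hasEigenvector
      (x := v) ⟨Module.End.mem_eigenspace_iff.mpr (by simpa using hv), hv0⟩

variable {F A σ : Type*} [Field F] [IsAlgClosed F] [CharZero F] [AddCommGroup A] [Module F A]
  [Module.Finite F A] [Fintype σ] [DecidableEq σ] [Nonempty σ] {mul : A →ₗ[F] A →ₗ[F] A}

/-- The residue relations: a nonzero weight on the idempotents which is inversely proportional to
`det (1 / 2 - L_c)`, and for which the weighted sum of the characteristic polynomials is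
constant. -/
lemma exists_weights (b : Module.Basis σ F A) (hcomm : ∀ x y, mul x y = mul y x)
    (hgen : {c : A | mul c c = c}.ncard = 2 ^ Fintype.card σ)
    [Fintype {c : A // mul c c = c}] :
    ∃ (w : {c : A // mul c c = c} → F) (K : F), K ≠ 0 ∧
      (∀ c, w c * (LinearMap.charpoly (mul c.1)).eval (1 / 2) = K) ∧
      ∀ t t' : F, ∑ c, w c * (LinearMap.charpoly (mul c.1)).eval t =
        ∑ c, w c * (LinearMap.charpoly (mul c.1)).eval t' := by
  classical
  have h2 : (2 : F) ≠ 0 := two_ne_zero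
  have hsimple : ∀ c : {c : A // mul c c = c}, ∀ v, (2 : F) • mul c.1 v = v → v = 0 :=
    fun c v hv => idempotent_simple b hcomm hgen c.2 hv
  have hcard : Fintype.card {c : A // mul c c = c} = 2 ^ Fintype.card σ := by
    rw [← hgen, ← Nat.card_coe_set_eq, ← Nat.card_eq_fintype_card]
    rfl
  have hpos : 0 < Fintype.card σ := Fintype.card_pos
  have hdim : Module.finrank F A = Fintype.card σ := Module.finrank_eq_card_basis b
  obtain ⟨p, hp⟩ : ∃ p : {c : A // mul c c = c} → σ → F, p = fun c => b.equivFun c.1 := ⟨_, rfl⟩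
  obtain ⟨B, hBdef⟩ : ∃ B : MvPolynomial (σ ⊕ σ) F,
    B = charDet mul b (fun i => X (Sum.inl i) + X (Sum.inr i)) 1 := ⟨_, rfl⟩
  have hBval : ∀ c c' : {c : A // mul c c = c}, eval (Sum.elim (p c) (p c')) B =
      (LinearMap.charpoly (mul (c.1 + c'.1))).eval 1 := by
    intro c c'
    rw [hBdef, eval_charDet mul b _ _ _ (u := c.1 + c'.1) (by intro i; simp [hp]), map_one]
  have hBdeg : B.totalDegree ≤ Fintype.card σ := by
    rw [hBdef]
    refine totalDegree_charDet_le mul b (fun i => ?_) (by simp)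
    exact (totalDegree_add _ _).trans (by simp [totalDegree_X])
  have hB0 : ∀ c c', c ≠ c' → eval (Sum.elim (p c) (p c')) B = 0 := by
    intro c c' hne
    rw [hBval, charpoly_eval_one_eq_zero_iff]
    -- `(c + c') * (c - c') = c - c'` for idempotents of a commutative algebra
    refine ⟨c.1 - c'.1, sub_ne_zero.mpr fun h => hne (Subtype.ext h), ?_⟩
    simp only [map_add, map_sub, LinearMap.add_apply, c.2, c'.2, hcomm c'.1 c.1]
    abel
  have hB1 : ∀ c, eval (Sum.elim (p c) (p c)) B ≠ 0 := by
    intro c h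
    rw [hBval, charpoly_eval_one_eq_zero_iff] at h
    obtain ⟨v, hv0, hv⟩ := h
    refine hv0 (hsimple c v ?_)
    simpa [two_smul] using hv
  obtain ⟨w, hw0, hw⟩ := exists_residue hBdeg hB0 hB1 (totalDegree_idemPoly_le mul b) hcard
    (fun s g hg => indep_of_simple_idempotents b hcomm
      (fun c : {c : A // mul c c = c} => c.1) (fun c => c.2) hsimple (by subst hp; exact hg))
  obtain ⟨K, hK⟩ := partialSum_eq_C hw hBdeg
  have hwK : ∀ c, w c * eval (Sum.elim (p c) (p c)) B = K := by
    intro c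
    rw [← eval_partialSum_bezoutian hB0 w c, hK, eval_C]
  obtain ⟨c₀, hc₀⟩ : ∃ c, w c ≠ 0 := by
    by_contra! h
    exact hw0 (_root_.funext h)
  have hK0 : K ≠ 0 := hwK c₀ ▸ mul_ne_zero hc₀ (hB1 c₀)
  have hpow : (2 : F) ^ Fintype.card σ ≠ 0 := pow_ne_zero _ h2
  refine ⟨w, K / 2 ^ Fintype.card σ, div_ne_zero hK0 hpow, fun c => ?_, ?_⟩
  · rw [eq_div_iff hpow, ← hwK c, hBval, map_add, charpoly_two_smul_eval h2, hdim]
    ring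
  · obtain ⟨P, hPdef⟩ : ∃ P : MvPolynomial (σ ⊕ Unit) F,
      P = charDet mul b (fun i => X (Sum.inl i)) (X (Sum.inr ())) := ⟨_, rfl⟩
    have hPdeg : P.totalDegree ≤ Fintype.card σ := hPdef ▸
      totalDegree_charDet_le mul b (fun i => by simp [totalDegree_X]) (by simp [totalDegree_X])
    obtain ⟨S, hS⟩ := partialSum_eq_C hw hPdeg
    have hPval : ∀ t, ∑ c, w c * (LinearMap.charpoly (mul c.1)).eval t = S := by
      intro t
      have := eval_partialSum p w P (fun _ => t)
      rw [hS, eval_C] at this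
      rw [this]
      refine Finset.sum_congr rfl fun c _ => ?_
      rw [hPdef, eval_charDet mul b _ _ _ (u := c.1) (by intro i; simp [hp])]
      simp
    intro t t'
    rw [hPval, hPval]

/-- The relations of `exists_weights` determine the characteristic polynomial common to the nonzero
idempotents, because the idempotent `0` contributes the known term `X ^ n`. -/
lemma charpoly_eq (b : Module.Basis σ F A) (hcomm : ∀ x y, mul x y = mul y x)
    (hgen : {c : A | mul c c = c}.ncard = 2 ^ Fintype.card σ)
    (hiso : ∀ c c' : A, c ≠ 0 → c' ≠ 0 → mul c c = c → mul c' c' = c' →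
      LinearMap.charpoly (mul c) = LinearMap.charpoly (mul c'))
    {c : A} (hc0 : c ≠ 0) (hc : mul c c = c) :
    LinearMap.charpoly (mul c) = Polynomial.X ^ Fintype.card σ - 1 := by
  classical
  have hfin : {c : A | mul c c = c}.Finite := Set.finite_of_ncard_pos (by rw [hgen]; positivity)
  let _ : Fintype {c : A // mul c c = c} := hfin.fintype
  have hcard : Fintype.card {c : A // mul c c = c} = 2 ^ Fintype.card σ := by
    rw [← hgen, ← Nat.card_coe_set_eq, ← Nat.card_eq_fintype_card]
    rfl
  have hpos : Fintype.card σ ≠ 0 := Fintype.card_ne_zero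
  have hdim : Module.finrank F A = Fintype.card σ := Module.finrank_eq_card_basis b
  obtain ⟨w, K, hK, hwK, hsum⟩ := exists_weights b hcomm hgen
  set n := Fintype.card σ
  set χ := LinearMap.charpoly (mul c) with hχ
  set d := χ.eval (1 / 2) with hd
  have hd0 : d ≠ 0 := by
    intro h
    have := hwK ⟨c, hc⟩
    rw [← hχ, ← hd, h, mul_zero] at this
    exact hK this.symm
  let z : {c : A // mul c c = c} := ⟨0, by simp⟩
  have hz : LinearMap.charpoly (mul z.1) = Polynomial.X ^ n := by
    rw [← hdim, ← charpoly_zero_end]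
    simp [z]
  have hwz : w z = K * 2 ^ n := by
    have := hwK z
    rw [hz] at this
    rw [← this]
    simp
  have hne : ∀ c' : {c : A // mul c c = c}, c' ≠ z → LinearMap.charpoly (mul c'.1) = χ :=
    fun c' h => hiso _ _ (fun h' => h (Subtype.ext h')) hc0 c'.2 hc
  have hw : ∀ c', c' ≠ z → w c' = K / d := fun c' h => by
    rw [eq_div_iff hd0, ← hwK c', hne c' h]
  have hval : ∀ t : F, ((2 : F) ^ n - 1) / d * χ.eval t = 2 ^ n * (1 - t ^ n) := by
    intro t
    have h1 := hsum t (1 / 2)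
    rw [Finset.sum_congr rfl fun c _ => hwK c, ← Finset.add_sum_erase _ _ (Finset.mem_univ z),
      Finset.sum_congr rfl (g := fun _ => K / d * χ.eval t) fun c' hc' => by
        rw [hw c' (Finset.ne_of_mem_erase hc'), hne c' (Finset.ne_of_mem_erase hc')]] at h1
    simp only [Finset.sum_const, Finset.card_erase_of_mem (Finset.mem_univ z), Finset.card_univ,
      hcard, hz, hwz, nsmul_eq_mul, Polynomial.eval_pow, Polynomial.eval_X] at h1
    rw [Nat.cast_sub Nat.one_le_two_pow] at h1
    push_cast at h1
    apply mul_left_cancel₀ hK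
    linear_combination h1
  have hpoly : Polynomial.C (((2 : F) ^ n - 1) / d) * χ =
      Polynomial.C (2 ^ n) * (1 - Polynomial.X ^ n) :=
    Polynomial.funext fun t => by simpa using hval t
  have hlead : χ.coeff n = 1 := by
    have h1 : χ.Monic := LinearMap.charpoly_monic _
    have h2 : χ.natDegree = n := by rw [hχ, LinearMap.charpoly_natDegree, hdim]
    rw [← h2]
    exact h1
  -- Comparing the coefficients of `X ^ n`.
  have ha : ((2 : F) ^ n - 1) / d = - 2 ^ n := by
    have := congrArg (fun q => Polynomial.coeff q n) hpoly
    rw [Polynomial.coeff_C_mul, Polynomial.coeff_C_mul, hlead] at this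
    simpa [Polynomial.coeff_one, hpos] using this
  rw [ha] at hpoly
  apply mul_left_cancel₀ (a := Polynomial.C (-(2 : F) ^ n)) (by simp)
  rw [hpoly]
  simp only [map_neg]
  ring

end Residue

/-- An operator with characteristic polynomial `X ^ n - 1` has order dividing `n` and simple
spectrum, as that polynomial is separable in characteristic zero. -/
lemma spectrum_of_charpoly {F A : Type*} [Field F] [CharZero F] [AddCommGroup A] [Module F A]
    [Module.Finite F A] {n : ℕ} (hn : 1 ≤ n) {f : Module.End F A}
    (hf : f.charpoly = Polynomial.X ^ n - 1) :
    f ^ n = 1 ∧ (∀ μ : F, f.HasEigenvalue μ ↔ μ ^ n = 1) ∧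
      ∀ μ : F, f.HasEigenvalue μ → Module.finrank F (f.eigenspace μ) = 1 := by
  refine ⟨?_, fun μ => ?_, fun μ hμ => ?_⟩
  · have := LinearMap.aeval_self_charpoly f
    rw [hf] at this
    simpa [sub_eq_zero] using this
  · rw [Module.End.hasEigenvalue_iff_isRoot_charpoly, hf]
    simp [sub_eq_zero]
  · have hsep : (Polynomial.X ^ n - 1 : Polynomial F).Separable :=
      Polynomial.separable_X_pow_sub_C 1 (by exact_mod_cast (by omega : n ≠ 0)) one_ne_zero
    have h1 : Module.finrank F (f.eigenspace μ) ≤ 1 := by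
      refine (LinearMap.finrank_genEigenspace_le f μ 1).trans ?_
      rw [hf]
      exact Polynomial.rootMultiplicity_le_one_of_separable hsep μ
    have h2 : 0 < Module.finrank F (f.eigenspace μ) := by
      rw [Module.finrank_pos_iff, Submodule.nontrivial_iff_ne_bot]
      exact hμ
    omega

end GenIso

/-- In an `n`-dimensional (`n ≥ 1`) generic isospectral commutative
nonassociative algebra over an algebraically closed field of characteristic zero,
every nonzero idempotent `c` satisfies: `charpoly(L_c) = Xⁿ − 1`, `L_cⁿ = id`,
the eigenvalues of `L_c` are exactly the `n`-th roots of unity, each eigenspace is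
one-dimensional, and `A` has no nonzero square-zero elements. -/
theorem generic_isospectral_cyclotomic_spectrum {F A : Type*} [Field F] [IsAlgClosed F]
    [CharZero F] [AddCommGroup A] [Module F A] [Module.Finite F A]
    (mul : A →ₗ[F] A →ₗ[F] A)
    (hcomm : ∀ x y : A, mul x y = mul y x)
    (n : ℕ) (hn : 1 ≤ n) (hdim : Module.finrank F A = n)
    (hgen : {c : A | mul c c = c}.ncard = 2 ^ n)
    (hiso : ∀ c c' : A, c ≠ 0 → c' ≠ 0 → mul c c = c → mul c' c' = c' →
      LinearMap.charpoly (mul c) = LinearMap.charpoly (mul c')) :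
    (∀ c : A, c ≠ 0 → mul c c = c →
      LinearMap.charpoly (mul c) = Polynomial.X ^ n - 1 ∧
      (mul c) ^ n = (1 : Module.End F A) ∧
      (∀ μ : F, Module.End.HasEigenvalue (mul c) μ ↔ μ ^ n = 1) ∧
      (∀ μ : F, Module.End.HasEigenvalue (mul c) μ →
        Module.finrank F ↥(Module.End.eigenspace (mul c) μ) = 1)) ∧
    (∀ x : A, mul x x = 0 → x = 0) := by
  refine ⟨fun c hc0 hc => ?_, fun x hx => ?_⟩
  · have : Nonempty (Fin n) := ⟨⟨0, hn⟩⟩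
    have hχ : LinearMap.charpoly (mul c) = Polynomial.X ^ n - 1 := by
      simpa using GenIso.charpoly_eq (Module.finBasisOfFinrankEq F A hdim) hcomm
        (by simpa using hgen) hiso hc0 hc
    exact ⟨hχ, GenIso.spectrum_of_charpoly hn hχ⟩
  · exact GenIso.sq_zero_eq_zero hcomm (by rw [hdim]; exact hgen) hx
end

section
/- Let A be a medial commutative nonassociative algebra over a field F, let c be an idempotent of A, let ε ∈ F be nonzero, and let w ∈ A satisfy c*w = ε·w. Define the principal powers of w by w^1 = w and w^{m+1} = w*(w^m). Then c*(w^m) = ε^m·(w^m) for every m ≥ 1, and for all integers k, m ≥ 1: ε^{(k−1)(m−1)} · (w^k * w^m) = w^{k+m}. -/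
/-!
Since `c` is idempotent, mediality gives `c*(x*y) = (c*c)*(x*y) = (c*x)*(c*y)`, so multiplication by
`c` is multiplicative and its eigenvalues multiply; this is the first claim. For the second, fix `k`
and induct on `m`: mediality yields
`ε·(w*(w^k*w^m)) = (c*w)*(w^k*w^m) = (c*w^k)*(w*w^m) = ε^k·(w^k*w^{m+1})`,
and `ε ≠ 0` may be cancelled, so each step in `m` contributes a factor `ε^{k-1}`.
-/

/-- In a medial commutative nonassociative algebra, if `c` is an
idempotent, `ε ≠ 0` and `c*w = ε·w`, then the principal powers `w^m`
(`w^1 = w`, `w^{m+1} = w*(w^m)`) satisfy `c*(w^m) = ε^m·(w^m)` for all `m ≥ 1`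
and `ε^{(k−1)(m−1)}·(w^k * w^m) = w^{k+m}` for all `k, m ≥ 1`. -/
theorem medial_principal_powers {F A : Type*} [Field F] [AddCommGroup A] [Module F A]
    (mul : A →ₗ[F] A →ₗ[F] A)
    (hcomm : ∀ x y : A, mul x y = mul y x)
    (hmedial : ∀ x y z w : A, mul (mul x y) (mul z w) = mul (mul x z) (mul y w))
    (c : A) (hc : mul c c = c)
    (ε : F) (hε : ε ≠ 0)
    (w : A) (hw : mul c w = ε • w)
    (pw : ℕ → A) (hpw1 : pw 1 = w)
    (hpwsucc : ∀ m : ℕ, 1 ≤ m → pw (m + 1) = mul w (pw m)) :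
    (∀ m : ℕ, 1 ≤ m → mul c (pw m) = (ε ^ m) • pw m) ∧
    (∀ k m : ℕ, 1 ≤ k → 1 ≤ m →
      (ε ^ ((k - 1) * (m - 1))) • mul (pw k) (pw m) = pw (k + m)) := by
  have h1 : ∀ m : ℕ, 1 ≤ m → mul c (pw m) = (ε ^ m) • pw m := by
    intro m hm
    induction m, hm using Nat.le_induction with
    | base => simp [hpw1, hw]
    | succ n hn ih =>
      calc mul c (pw (n + 1)) = mul (mul c c) (mul w (pw n)) := by rw [hc, hpwsucc n hn]
        _ = mul (mul c w) (mul c (pw n)) := hmedial _ _ _ _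
        _ = ε ^ (n + 1) • pw (n + 1) := by
          rw [hw, ih, hpwsucc n hn, pow_succ']
          simp only [map_smul, LinearMap.smul_apply, smul_smul, mul_comm]
  refine ⟨h1, ?_⟩
  intro k m hk hm
  -- Writing `k = i + 1` removes the truncated subtraction from the exponent.
  obtain ⟨i, rfl⟩ := Nat.exists_eq_add_of_le' hk
  induction m, hm using Nat.le_induction with
  | base => simp [hpw1, hcomm _ w, hpwsucc _ hk]
  | succ n hn ih =>
    obtain ⟨j, rfl⟩ := Nat.exists_eq_add_of_le' hn
    have key : mul w (mul (pw (i + 1)) (pw (j + 1)))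
        = ε ^ i • mul (pw (i + 1)) (pw (j + 1 + 1)) := by
      apply smul_right_injective A hε
      calc ε • mul w (mul (pw (i + 1)) (pw (j + 1)))
          = mul (mul c w) (mul (pw (i + 1)) (pw (j + 1))) := by
            rw [hw, map_smul, LinearMap.smul_apply]
        _ = mul (mul c (pw (i + 1))) (mul w (pw (j + 1))) := hmedial _ _ _ _
        _ = ε • ε ^ i • mul (pw (i + 1)) (pw (j + 1 + 1)) := by
            rw [h1 _ hk, ← hpwsucc _ hn, map_smul, LinearMap.smul_apply, smul_smul, pow_succ']
    rw [← add_assoc, hpwsucc (i + 1 + (j + 1)) (by omega), ← ih, map_smul, key, smul_smul,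
      ← pow_add]
    simp only [Nat.add_sub_cancel, Nat.mul_succ]
end

section
/- Let F be an algebraically closed field of characteristic zero and let A and B be finite-dimensional medial commutative nonassociative F-algebras, each generic (having exactly 2^{dim} idempotents, including 0) and isospectral (all nonzero idempotents have the same characteristic polynomial of the multiplication operator). If dim A = dim B, then A and B are isomorphic as F-algebras: there exists an F-linear bijection φ : A → B with φ(x*y) = φ(x)*φ(y) for all x, y ∈ A. -/
/-!
Up to isomorphism the algebra is `F ^ n` with `x * y = σ (x y)`, where `x y` is the coordinatewise
product and `σ` the cyclic shift of the coordinates; this determines it by its dimension.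

Write `L_c` for multiplication by a nonzero idempotent `c`; mediality makes it an endomorphism of
the algebra. If `L_c` is bijective, then `x · y = L_c⁻¹ (x * y)` is a commutative associative
product with unit `c`, the map `φ = L_c` is an automorphism of it, and the idempotents of `*` are
the solutions of `φ (d · d) = d` (`medial_orbit`). Isospectrality enters through
`medial_mul_ne_zero`: the product of two nonzero idempotents is nonzero, so a `φ`-fixed ring
idempotent `e` is `0` or `1`, as `e` and `1 - e` multiply to zero. Solutions are closed under
products and finite in number, so every nonzero one is a root of unity in the ring
(`isot_torsion`); averaging over a group of solutions yields `φ`-fixed ring idempotents, and it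
follows that a single character `χ` separates the solutions (`isot_char_injOn`). If `k` is the
length of the `φ`-orbit of `χ`, the values `t = χ d` satisfy `t ^ 2 ^ k = t`, so there are at most
`2 ^ k` solutions (`isot_orbit`). Genericity forces `k = n`, and the `n` characters of the orbit
are the desired coordinates (`medial_coordinates`).

That `L_c` is bijective is itself a consequence of this bound (`medial_bijective`). The Fitting
component `W` on which `L_c` is invertible is a subalgebra to which the preceding paragraph
applies. Isospectrality shows that all `L_y` have the same generalized kernel, whence every
idempotent lies in `W`; so `2 ^ n ≤ 2 ^ dim W` and `W` is the whole algebra.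
-/

/-! ### Solutions of `φ (d * d) = d` in a commutative ring -/

theorem isot_pow {R : Type*} [CommRing R] (φ : R ≃+* R) {d : R} (hd : φ (d * d) = d) (k : ℕ) :
    φ (d ^ k * d ^ k) = d ^ k := by
  rw [← mul_pow, map_pow, hd]

/-- Powers of a solution are solutions, so finiteness makes some power of `d` a ring idempotent
`e`, which is again a solution; as `e` and `1 - e` multiply to zero, `e` must be `1`. -/
theorem isot_torsion {R : Type*} [CommRing R] (φ : R ≃+* R)
    (hfin : {d : R | φ (d * d) = d}.Finite)
    (hz : ∀ a b : R, φ (a * a) = a → φ (b * b) = b → a * b = 0 → a = 0 ∨ b = 0)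
    {d : R} (hd : φ (d * d) = d) (h0 : d ≠ 0) : ∃ m, 0 < m ∧ d ^ m = 1 := by
  -- `d` is the image of `d ^ 2 ^ k` under a power of `φ`, so it is not nilpotent.
  have hnil : ∀ k, d ^ (2 ^ k) ≠ 0 := by
    intro k
    induction k with
    | zero => simpa using h0
    | succ k ih =>
      intro h
      apply ih
      rw [← isot_pow φ hd (2 ^ k), ← pow_add, ← two_mul, ← pow_succ', h, map_zero]
  have hnil' : ∀ k, d ^ k ≠ 0 := fun k h =>
    hnil k (pow_eq_zero_of_le k.lt_two_pow_self.le h)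
  obtain ⟨a, b, hab, hlt⟩ : ∃ a b, d ^ a = d ^ b ∧ a < b := by
    by_contra! h
    refine Set.infinite_of_injective_forall_mem (f := fun k : ℕ => d ^ k) ?_
      (fun k => isot_pow φ hd k) hfin
    intro a b hab
    exact le_antisymm (h b a hab.symm) (h a b hab)
  obtain ⟨p, rfl⟩ := Nat.exists_eq_add_of_lt hlt
  have hstep : ∀ i j, a ≤ j → d ^ (j + (p + 1) * i) = d ^ j := by
    intro i j hj
    obtain ⟨l, rfl⟩ := Nat.exists_eq_add_of_le hj
    induction i with
    | zero => simp
    | succ i ih =>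
      rw [← ih, show a + l + (p + 1) * (i + 1) = (a + p + 1) + (l + (p + 1) * i) by ring, pow_add,
        ← hab, ← pow_add, add_assoc]
  refine ⟨(p + 1) * (a + 1), by positivity, ?_⟩
  have hle : a ≤ (p + 1) * (a + 1) := by nlinarith
  have hee := hstep (a + 1) _ hle
  rw [pow_add] at hee
  have hse := isot_pow φ hd ((p + 1) * (a + 1))
  have hne := hnil' ((p + 1) * (a + 1))
  generalize d ^ ((p + 1) * (a + 1)) = e at *
  rw [hee] at hse
  rcases hz e (1 - e) (by rw [hee, hse])
    (by rw [show (1 - e) * (1 - e) = 1 - e by linear_combination hee, map_sub, hse, map_one])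
    (by linear_combination -hee) with h | h
  · exact absurd h hne
  · exact (sub_eq_zero.1 h).symm

/-- If `χ u = 1` with `u ≠ 1`, the average of the finite group of solutions in the kernel of `χ`
is a `φ`-fixed ring idempotent different from `0` and `1`. -/
theorem isot_char_eq_one {F R : Type*} [Field F] [CharZero F] [CommRing R] [Algebra F R]
    (φ : R ≃ₐ[F] R) (hfin : {d : R | φ (d * d) = d}.Finite)
    (hz : ∀ a b : R, φ (a * a) = a → φ (b * b) = b → a * b = 0 → a = 0 ∨ b = 0)
    (χ : R →ₐ[F] F) {u : R} (hu : φ (u * u) = u) (hχ : χ u = 1) : u = 1 := by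
  classical
  have hfH : {d : R | φ (d * d) = d ∧ χ d = 1}.Finite := hfin.subset fun d hd => hd.1
  set H := hfH.toFinset with hH
  have memH : ∀ d, d ∈ H ↔ φ (d * d) = d ∧ χ d = 1 := by simp [hH]
  have hunit : ∀ d ∈ H, IsUnit d := by
    intro d hd
    rw [memH] at hd
    obtain ⟨m, hm, h⟩ := isot_torsion φ.toRingEquiv hfin hz (d := d) hd.1
      (by rintro rfl; simpa using hd.2)
    exact IsUnit.of_pow_eq_one h hm.ne'
  have hmul : ∀ a ∈ H, ∀ b ∈ H, a * b ∈ H := by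
    intro a ha b hb
    rw [memH] at *
    refine ⟨?_, by rw [map_mul, ha.2, hb.2, one_mul]⟩
    rw [mul_mul_mul_comm, map_mul, ha.1, hb.1]
  have hone : (1 : R) ∈ H := by rw [memH]; simp
  have huH : u ∈ H := (memH u).2 ⟨hu, hχ⟩
  have hcard : (H.card : F) ≠ 0 := by
    exact_mod_cast (Finset.card_pos.2 ⟨1, hone⟩).ne'
  have hinjimg : ∀ f : R → R, (∀ a ∈ H, f a ∈ H) → Set.InjOn f H → ∑ h ∈ H, f h = ∑ h ∈ H, h := by
    intro f hf hinj
    have : H.image f = H := Finset.eq_of_subset_of_card_le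
      (Finset.image_subset_iff.2 hf) (Finset.card_image_of_injOn hinj).ge
    conv_rhs => rw [← this]
    rw [Finset.sum_image hinj]
  set s : R := (H.card : F)⁻¹ • ∑ h ∈ H, h with hs
  have hus : ∀ a ∈ H, a * s = s := by
    intro a ha
    rw [hs, mul_smul_comm, Finset.mul_sum, hinjimg _ (hmul a ha)]
    intro x _ y _ hxy
    exact (hunit a ha).mul_left_cancel hxy
  have hss : s * s = s := by
    conv_lhs => lhs; rw [hs]
    rw [smul_mul_assoc, Finset.sum_mul, Finset.sum_congr rfl hus, Finset.sum_const,
      ← Nat.cast_smul_eq_nsmul F, smul_smul, inv_mul_cancel₀ hcard, one_smul]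
  have hχs : χ s = 1 := by
    rw [hs, map_smul, map_sum, Finset.sum_congr rfl fun x hx => ((memH x).1 hx).2]
    simp [hcard]
  have hφs : φ s = s := by
    -- Squaring permutes the group, being inverted by `φ`.
    have hsq : ∑ h ∈ H, h * h = ∑ h ∈ H, h := by
      refine hinjimg (fun h => h * h) (fun a ha => hmul a ha a ha) ?_
      intro x hx y hy hxy
      rw [← ((memH x).1 hx).1, ← ((memH y).1 hy).1]
      exact congrArg φ hxy
    conv_lhs => rw [hs, ← hsq]
    rw [map_smul, map_sum, Finset.sum_congr rfl fun x hx => ((memH x).1 hx).1]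
  rcases hz s (1 - s) (by rw [hss, hφs])
    (by rw [show (1 - s) * (1 - s) = 1 - s by linear_combination hss, map_sub, hφs, map_one])
    (by linear_combination -hss) with h | h
  · rw [h, map_zero] at hχs
    exact absurd hχs zero_ne_one
  · have h1 : s = 1 := (sub_eq_zero.1 h).symm
    have := hus u huH
    rwa [h1, mul_one] at this

/-- A character separates the solutions: two nonzero solutions are units, and their quotient is
again a solution. -/
theorem isot_char_injOn {F R : Type*} [Field F] [CharZero F] [CommRing R] [Algebra F R]
    (φ : R ≃ₐ[F] R) (hfin : {d : R | φ (d * d) = d}.Finite)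
    (hz : ∀ a b : R, φ (a * a) = a → φ (b * b) = b → a * b = 0 → a = 0 ∨ b = 0)
    (χ : R →ₐ[F] F) : Set.InjOn χ {d : R | φ (d * d) = d} := by
  have hne : ∀ d : R, φ (d * d) = d → χ d = 0 → d = 0 := by
    intro d hd h
    by_contra h0
    obtain ⟨m, hm, h1⟩ := isot_torsion φ.toRingEquiv hfin hz (d := d) hd h0
    have := congrArg χ h1
    rw [map_pow, h, zero_pow hm.ne', map_one] at this
    exact zero_ne_one this
  intro a ha b hb hab
  by_cases hb0 : b = 0
  · rw [hb0, map_zero] at hab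
    rw [hb0, hne a ha hab]
  obtain ⟨m, hm, h1⟩ := isot_torsion φ.toRingEquiv hfin hz (d := b) hb hb0
  obtain ⟨m, rfl⟩ := Nat.exists_eq_succ_of_ne_zero hm.ne'
  have key : a * b ^ m = 1 := by
    apply isot_char_eq_one φ hfin hz χ
    · rw [mul_mul_mul_comm, map_mul, ha]
      exact congrArg (a * ·) (isot_pow φ.toRingEquiv hb m)
    · rw [map_mul, hab, ← map_mul, ← pow_succ', h1, map_one]
  calc a = a * b ^ m.succ := by rw [h1, mul_one]
    _ = (a * b ^ m) * b := by rw [pow_succ, mul_assoc]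
    _ = b := by rw [key, one_mul]

theorem ncard_pow_eq_self_le {F : Type*} [Field F] {m : ℕ} (hm : 1 < m) :
    {t : F | t ^ m = t}.Finite ∧ {t : F | t ^ m = t}.ncard ≤ m := by
  classical
  have hd := FiniteField.X_pow_card_sub_X_natDegree_eq F hm
  have hp : (Polynomial.X ^ m - Polynomial.X : Polynomial F) ≠ 0 :=
    FiniteField.X_pow_card_sub_X_ne_zero F hm
  have : {t : F | t ^ m = t} = ((Polynomial.X ^ m - Polynomial.X : Polynomial F).roots.toFinset :
      Set F) := by
    ext t
    simp [Polynomial.mem_roots hp, sub_eq_zero]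
  rw [this]
  refine ⟨Finset.finite_toSet _, ?_⟩
  rw [Set.ncard_coe_finset]
  exact ((Multiset.toFinset_card_le _).trans (Polynomial.card_roots' _)).trans hd.le

/-- A character is the quotient by a maximal ideal, whose residue field is algebraic over `F`. -/
theorem exists_character (F R : Type*) [Field F] [IsAlgClosed F] [CommRing R] [Algebra F R]
    [Module.Finite F R] [Nontrivial R] : Nonempty (R →ₐ[F] F) := by
  obtain ⟨I, hI⟩ := Ideal.exists_maximal R
  exact ⟨(IsAlgClosed.lift (R := F) (S := R ⧸ I) (M := F)).comp (Ideal.Quotient.mkₐ F I)⟩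

/-- The orbit of a character under `φ`. A solution `d` is determined by the value `t = χ d`, and
`t ^ 2 ^ k = t` where `k` is the length of the orbit; this bounds the number of solutions. -/
theorem isot_orbit {F R : Type*} [Field F] [CharZero F] [IsAlgClosed F] [CommRing R] [Algebra F R]
    [Module.Finite F R] [Nontrivial R]
    (φ : R ≃ₐ[F] R) (hfin : {d : R | φ (d * d) = d}.Finite)
    (hz : ∀ a b : R, φ (a * a) = a → φ (b * b) = b → a * b = 0 → a = 0 ∨ b = 0) :
    ∃ (k : ℕ) (χ : ℕ → R →ₐ[F] F), (∀ i x, χ i (φ x) = χ (i + 1) x) ∧ (∀ i, χ (i + k) = χ i) ∧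
      LinearIndependent F (fun i : Fin k => (χ i).toLinearMap) ∧
      {d : R | φ (d * d) = d}.ncard ≤ 2 ^ k := by
  obtain ⟨χ₀⟩ := exists_character F R
  have hli := linearIndependent_algHom_toLinearMap F R F
  have : Finite (R →ₐ[F] F) := hli.finite
  let T : (R →ₐ[F] F) → (R →ₐ[F] F) := fun χ => χ.comp φ.toAlgHom
  have hT : Function.Injective T := by
    intro a b hab
    ext x
    have := DFunLike.congr_fun hab (φ.symm x)
    simpa [T] using this
  have hpos := Function.minimalPeriod_pos_of_mem_periodicPts (hT.mem_periodicPts χ₀)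
  have hper := Function.isPeriodicPt_minimalPeriod T χ₀
  have hinj := Function.iterate_injOn_Iio_minimalPeriod (f := T) (x := χ₀)
  set k := Function.minimalPeriod T χ₀
  have hstep : ∀ i x, (T^[i] χ₀) (φ x) = (T^[i + 1] χ₀) x := by
    intro i x
    rw [Function.iterate_succ_apply']
    rfl
  refine ⟨k, fun i => T^[i] χ₀, hstep, fun i => ?_, ?_, ?_⟩
  · show T^[i + k] χ₀ = T^[i] χ₀
    rw [Function.iterate_add_apply, hper]
  · exact hli.comp (fun i : Fin k => T^[i] χ₀) fun i j hij => Fin.ext (hinj i.2 j.2 hij)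
  · have hval : ∀ d, φ (d * d) = d → ∀ j, χ₀ d = (T^[j] χ₀ d) ^ (2 ^ j) := by
      intro d hd j
      induction j with
      | zero => simp
      | succ j ih =>
        rw [ih]
        conv_lhs => rw [← hd, hstep, map_mul, ← pow_two, ← pow_mul, ← pow_succ']
    obtain ⟨hf, hle⟩ := ncard_pow_eq_self_le (F := F) (m := 2 ^ k) (Nat.one_lt_two_pow hpos.ne')
    refine le_trans (Set.ncard_le_ncard_of_injOn χ₀ ?_ (isot_char_injOn φ hfin hz χ₀) hf) hle
    intro d hd
    have := hval d hd k
    rw [hper] at this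
    exact this.symm

/-! ### The associative isotope of a medial algebra -/

/-- For `c` with `L_c` bijective, `x · y = L_c⁻¹ (x * y)` makes the algebra a commutative
associative ring with unit `c`, on which `L_c` is an automorphism and `x * y = L_c (x · y)`. -/
theorem medial_orbit {F V : Type*} [Field F] [CharZero F] [IsAlgClosed F] [AddCommGroup V]
    [Module F V] [Module.Finite F V] (mul : V →ₗ[F] V →ₗ[F] V)
    (hcomm : ∀ x y : V, mul x y = mul y x)
    (hmed : ∀ x y z w : V, mul (mul x y) (mul z w) = mul (mul x z) (mul y w))
    (hfin : {d : V | mul d d = d}.Finite)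
    (hz : ∀ a b : V, mul a a = a → mul b b = b → mul a b = 0 → a = 0 ∨ b = 0)
    {c : V} (hc : mul c c = c) (hc0 : c ≠ 0) (hbij : Function.Bijective (mul c)) :
    (∀ d : V, mul d d = d → d ≠ 0 → ∀ z, mul d z = 0 → z = 0) ∧
    ∃ (k : ℕ) (χ : ℕ → V →ₗ[F] F),
      (∀ i x y, χ i (mul x y) = χ (i + 1) x * χ (i + 1) y) ∧ (∀ i, χ (i + k) = χ i) ∧
      LinearIndependent F (fun i : Fin k => χ i) ∧ {d : V | mul d d = d}.ncard ≤ 2 ^ k := by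
  let e : V ≃ₗ[F] V := LinearEquiv.ofBijective (mul c) hbij
  have he : ∀ x, e x = mul c x := fun x => rfl
  have hemul : ∀ x y, e (mul x y) = mul (e x) (e y) := by
    intro x y
    rw [he, he, he, ← hmed, hc]
  have hassoc : ∀ x y z, mul (e.symm (mul x y)) z = mul x (e.symm (mul y z)) := by
    intro x y z
    apply e.injective
    rw [hemul, hemul, e.apply_symm_apply, e.apply_symm_apply, he z, hmed, he x, hcomm c x]
  let ring : CommRing V :=
    { (inferInstance : AddCommGroup V) with
      mul := fun x y => e.symm (mul x y)
      one := c
      mul_assoc := fun x y z => congrArg e.symm (hassoc x y z)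
      one_mul := fun x => e.symm_apply_apply x
      mul_one := fun x => (congrArg e.symm (hcomm x c)).trans (e.symm_apply_apply x)
      mul_comm := fun x y => congrArg e.symm (hcomm x y)
      left_distrib := fun x y z => by
        show e.symm (mul x (y + z)) = e.symm (mul x y) + e.symm (mul x z)
        rw [map_add, map_add]
      right_distrib := fun x y z => by
        show e.symm (mul (x + y) z) = e.symm (mul x z) + e.symm (mul y z)
        rw [map_add, LinearMap.add_apply, map_add]
      zero_mul := fun x => by
        show e.symm (mul 0 x) = 0
        rw [map_zero, LinearMap.zero_apply, map_zero]
      mul_zero := fun x => by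
        show e.symm (mul x 0) = 0
        rw [map_zero, map_zero] }
  have hmul : ∀ x y : V, x * y = e.symm (mul x y) := fun x y => rfl
  let alg : Algebra F V := Algebra.ofModule
    (fun r x y => by
      rw [hmul, hmul, map_smul, LinearMap.smul_apply, map_smul])
    (fun r x y => by
      rw [hmul, hmul, map_smul, map_smul])
  have hmulφ : ∀ x y : V, e (x * y) = mul x y := fun x y => e.apply_symm_apply _
  let φ : V ≃ₐ[F] V := AlgEquiv.ofLinearEquiv e hc (fun x y => by
    rw [hmulφ, hmul, ← hemul, e.symm_apply_apply])
  have hφ : ∀ x y : V, φ (x * y) = mul x y := hmulφ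
  have hS : {d : V | φ (d * d) = d} = {d : V | mul d d = d} := by
    ext d
    rw [Set.mem_ofPred_eq, Set.mem_ofPred_eq, hφ]
  have hfin' : {d : V | φ (d * d) = d}.Finite := hS ▸ hfin
  have hz' : ∀ a b : V, φ (a * a) = a → φ (b * b) = b → a * b = 0 → a = 0 ∨ b = 0 := by
    intro a b ha hb hab
    rw [hφ] at ha hb
    exact hz a b ha hb (by rw [← hφ, hab, map_zero])
  have : Nontrivial V := ⟨c, 0, hc0⟩
  constructor
  · intro d hd hd0 z hdz
    obtain ⟨m, hm, h1⟩ := isot_torsion φ.toRingEquiv hfin' hz' (d := d)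
      ((hφ d d).trans hd) hd0
    have : d * z = 0 := by rw [hmul, hdz, map_zero]
    obtain ⟨m, rfl⟩ := Nat.exists_eq_succ_of_ne_zero hm.ne'
    rw [← one_mul z, ← h1, pow_succ, mul_assoc, this, mul_zero]
  · obtain ⟨k, χ, h1, h2, h3, h4⟩ := isot_orbit φ hfin' hz'
    refine ⟨k, fun i => (χ i).toLinearMap, fun i x y => ?_, fun i => ?_, h3, hS ▸ h4⟩
    · show χ i (mul x y) = χ (i + 1) x * χ (i + 1) y
      rw [← hφ, h1, map_mul]
    · show (χ (i + k)).toLinearMap = (χ i).toLinearMap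
      rw [h2]

/-- If `c * e = 0` then `L_c L_e = L_e L_c = 0`, whence `p_c p_e = X ^ n p_{c + e}` for the
characteristic polynomials; isospectrality turns this into `p = X ^ n`, against `p(1) = 0`. -/
theorem medial_mul_ne_zero {F A : Type*} [Field F] [CharZero F] [AddCommGroup A]
    [Module F A] [Module.Finite F A] (mul : A →ₗ[F] A →ₗ[F] A)
    (hcomm : ∀ x y : A, mul x y = mul y x)
    (hmed : ∀ x y z w : A, mul (mul x y) (mul z w) = mul (mul x z) (mul y w))
    (hiso : ∀ c c' : A, c ≠ 0 → c' ≠ 0 → mul c c = c → mul c' c' = c' →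
      LinearMap.charpoly (mul c) = LinearMap.charpoly (mul c'))
    {c e : A} (hc : mul c c = c) (he : mul e e = e) (hce : mul c e = 0) : c = 0 ∨ e = 0 := by
  by_contra! h
  obtain ⟨hc0, he0⟩ := h
  have hec : mul e c = 0 := by rw [hcomm, hce]
  have hs : mul (c + e) (c + e) = c + e := by
    simp [hc, he, hce, hec]
  have hs0 : c + e ≠ 0 := by
    intro h
    have := congrArg (mul c) h
    rw [map_add, hc, hce, add_zero, map_zero] at this
    exact hc0 this
  have hprod : ∀ x, mul c (mul e x) = 0 := by
    intro x
    rw [← hc, hmed, hce, map_zero, LinearMap.zero_apply]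
  have h1 := hiso e c he0 hc0 he hc
  have h2 := hiso (c + e) c hs0 hc0 hs hc
  have key : LinearMap.charpoly (mul c) * LinearMap.charpoly (mul c) =
      Polynomial.X ^ (Module.finrank F A) * LinearMap.charpoly (mul c) := by
    apply Polynomial.funext
    intro t
    rw [Polynomial.eval_mul, Polynomial.eval_mul, Polynomial.eval_pow, Polynomial.eval_X]
    conv_lhs => rhs; rw [← h1]
    conv_lhs => rw [LinearMap.eval_charpoly, LinearMap.eval_charpoly]
    conv_rhs => rw [← h2, LinearMap.eval_charpoly, ← LinearMap.det_smul]
    rw [← LinearMap.det_comp]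
    congr 1
    ext x
    simp only [LinearMap.comp_apply, LinearMap.sub_apply, Module.algebraMap_end_apply,
      LinearMap.smul_apply, map_add, map_sub, map_smul, LinearMap.add_apply, hprod]
    module
  have hp := mul_right_cancel₀ (LinearMap.charpoly_monic (mul c)).ne_zero key
  have h3 := LinearMap.eval_charpoly (mul c) 1
  rw [hp, Polynomial.eval_pow, Polynomial.eval_X, one_pow] at h3
  have h4 : LinearMap.det ((algebraMap F (A →ₗ[F] A)) 1 - mul c) = 0 := by
    by_contra h
    have := (LinearMap.equivOfDetNeZero _ h).injective (a₁ := c) (a₂ := 0)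
    apply hc0
    apply this
    rw [map_zero]
    show ((algebraMap F (A →ₗ[F] A)) 1 - mul c) c = 0
    simp [hc]
  rw [h4] at h3
  exact one_ne_zero h3

/-! ### Invertibility of multiplication by an idempotent -/

/-- Every idempotent lies in the Fitting component `W = range (L_c ^ N)` on which `L_c` is
invertible; the bound `2 ^ dim W` for the idempotents of `W` then forces `W` to be everything. -/
theorem medial_bijective {F A : Type*} [Field F] [CharZero F] [IsAlgClosed F] [AddCommGroup A]
    [Module F A] [Module.Finite F A] (mul : A →ₗ[F] A →ₗ[F] A)
    (hcomm : ∀ x y : A, mul x y = mul y x)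
    (hmed : ∀ x y z w : A, mul (mul x y) (mul z w) = mul (mul x z) (mul y w))
    (hgen : {c : A | mul c c = c}.ncard = 2 ^ (Module.finrank F A))
    (hiso : ∀ c c' : A, c ≠ 0 → c' ≠ 0 → mul c c = c → mul c' c' = c' →
      LinearMap.charpoly (mul c) = LinearMap.charpoly (mul c'))
    {c : A} (hc : mul c c = c) (hc0 : c ≠ 0) : Function.Bijective (mul c) := by
  have hfin : {d : A | mul d d = d}.Finite :=
    Set.finite_of_ncard_pos (by rw [hgen]; positivity)
  have hz : ∀ a b : A, mul a a = a → mul b b = b → mul a b = 0 → a = 0 ∨ b = 0 :=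
    fun a b ha hb hab => medial_mul_ne_zero mul hcomm hmed hiso ha hb hab
  -- `y * x = y` forces `x = y`, because `x - y` is an idempotent with `y * (x - y) = 0`.
  have hcancel : ∀ x y : A, mul x x = x → mul y y = y → y ≠ 0 → mul y x = y → x = y := by
    intro x y hx hy hy0 hyx
    have h1 : mul y (x - y) = 0 := by rw [map_sub, hyx, hy, sub_self]
    have h2 : mul (x - y) (x - y) = x - y := by
      rw [map_sub (mul) x y, LinearMap.sub_apply, h1, map_sub, hx, hcomm x y, hyx, sub_zero]
    exact sub_eq_zero.1 ((hz _ _ hy h2 h1).resolve_left hy0)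
  have hidmul : ∀ x y : A, mul x x = x → mul y y = y → mul (mul x y) (mul x y) = mul x y := by
    intro x y hx hy
    rw [hmed, hx, hy]
  let φ : Module.End F A := mul c
  have hφ : ∀ x, φ x = mul c x := fun _ => rfl
  obtain ⟨N, hcompl, hN⟩ := ((LinearMap.eventually_isCompl_ker_pow_range_pow φ).and
    (Filter.eventually_ge_atTop 1)).exists
  have hPmul' : ∀ n, ∀ x y, (φ ^ n) (mul x y) = mul ((φ ^ n) x) ((φ ^ n) y) := by
    intro n
    induction n with
    | zero => intro x y; simp
    | succ n ih =>
      intro x y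
      rw [pow_succ', Module.End.mul_apply, Module.End.mul_apply, Module.End.mul_apply, ih,
        hφ, hφ, hφ, ← hmed, hc]
  have hPne' : ∀ n, ∀ y, mul y y = y → y ≠ 0 →
      mul ((φ ^ n) y) ((φ ^ n) y) = (φ ^ n) y ∧ (φ ^ n) y ≠ 0 := by
    intro n y hy hy0
    induction n with
    | zero => exact ⟨by simpa using hy, by simpa using hy0⟩
    | succ n ih =>
      rw [pow_succ', Module.End.mul_apply, hφ]
      exact ⟨hidmul _ _ hc ih.1, fun h => (hz _ _ hc ih.1 h).elim hc0 ih.2⟩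
  have hPc : (φ ^ N) c = c := by
    have : ∀ n, (φ ^ n) c = c := by
      intro n
      induction n with
      | zero => simp
      | succ n ih => rw [pow_succ, Module.End.mul_apply, hφ, hc, ih]
    exact this N
  have hker : ∀ x, φ x = 0 → (φ ^ N) x = 0 := by
    intro x hx
    obtain ⟨n, rfl⟩ := Nat.exists_eq_succ_of_ne_zero (by omega : N ≠ 0)
    rw [pow_succ, Module.End.mul_apply, hx, map_zero]
  have hPmul := hPmul' N
  have hPne := hPne' N
  have hK : LinearMap.ker (φ ^ N) ≤ Module.End.maxGenEigenspace φ 0 := by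
    intro x hx
    rw [Module.End.mem_maxGenEigenspace]
    exact ⟨N, by simpa using hx⟩
  generalize φ ^ N = P at *
  have hdisj : ∀ x, P x = 0 → x ∈ LinearMap.range P → x = 0 := fun x h1 h2 =>
    (Submodule.disjoint_def.1 hcompl.disjoint) x h1 h2
  -- The Fitting component `W`, as an algebra in its own right.
  let W := LinearMap.range P
  have hWmul : ∀ x y : W, mul (x : A) (y : A) ∈ W := by
    rintro ⟨_, x, rfl⟩ ⟨_, y, rfl⟩
    exact ⟨mul x y, hPmul x y⟩
  let mulW : W →ₗ[F] W →ₗ[F] W := LinearMap.mk₂ F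
    (fun x y => (⟨mul (x : A) (y : A), hWmul x y⟩ : W))
    (fun x y z => by ext; simp) (fun r x y => by ext; simp)
    (fun x y z => by ext; simp) (fun r x y => by ext; simp)
  have hmulW : ∀ x y : W, ((mulW x y : W) : A) = mul x y := fun _ _ => rfl
  have hidW : ∀ d : W, mulW d d = d ↔ mul (d : A) (d : A) = d := by
    intro d
    rw [← hmulW, Subtype.ext_iff]
  have hfinW : {d : W | mulW d d = d}.Finite :=
    Set.Finite.of_finite_image (f := Subtype.val) (hfin.subset (by
      rintro _ ⟨d, hd, rfl⟩
      exact (hidW d).1 hd)) Subtype.val_injective.injOn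
  let cW : W := ⟨c, c, hPc⟩
  have hinjW : Function.Injective (mulW cW) := by
    rw [injective_iff_map_eq_zero]
    intro x hx
    have : mul c (x : A) = 0 := congrArg Subtype.val hx
    exact Subtype.ext (hdisj x (hker x this) x.2)
  obtain ⟨hreg, k, χ, -, -, hli, hle⟩ := medial_orbit mulW
    (fun x y => Subtype.ext (hcomm x y)) (fun x y z w => Subtype.ext (hmed x y z w)) hfinW
    (fun a b ha hb hab => by
      rcases hz a b ((hidW a).1 ha) ((hidW b).1 hb) (congrArg Subtype.val hab) with h | h
      · exact Or.inl (Subtype.ext h)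
      · exact Or.inr (Subtype.ext h))
    (c := cW) ((hidW cW).2 hc) (fun h => hc0 (congrArg Subtype.val h))
    ⟨hinjW, LinearMap.injective_iff_surjective.1 hinjW⟩
  -- Every `L_y` has the same generalized kernel: `P` carries the one of `L_y` into `W`, where
  -- `L_(P y)` is injective, and the dimensions agree by isospectrality.
  have hgker : ∀ y, mul y y = y → y ≠ 0 →
      Module.End.maxGenEigenspace (mul y) 0 = LinearMap.ker P := by
    intro y hy hy0
    obtain ⟨hPy, hPy0⟩ := hPne y hy hy0
    refine Submodule.eq_of_le_of_finrank_le ?_ ?_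
    · intro v hv
      rw [Module.End.mem_maxGenEigenspace, zero_smul, sub_zero] at hv
      obtain ⟨j, hj⟩ := hv
      have : ∀ j v, P (((mul y : Module.End F A) ^ j) v) = 0 → P v = 0 := by
        intro j
        induction j with
        | zero => intro v h; simpa using h
        | succ j ih =>
          intro v h
          apply ih
          rw [pow_succ', Module.End.mul_apply, hPmul] at h
          have := hreg ⟨P y, y, rfl⟩ ((hidW _).2 hPy) (fun h => hPy0 (congrArg Subtype.val h))
            ⟨P (((mul y : Module.End F A) ^ j) v), _, rfl⟩ (Subtype.ext h)
          exact congrArg Subtype.val this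
      exact this j v (by rw [hj, map_zero])
    · have h1 := LinearMap.finrank_maxGenEigenspace_zero_eq (mul y)
      have h2 := LinearMap.finrank_maxGenEigenspace_zero_eq (mul c)
      rw [hiso y c hy0 hc0 hy hc, ← h2] at h1
      rw [h1]
      exact Submodule.finrank_mono hK
  -- An idempotent `x` has the same image under `P` as its component `y ∈ W`; then `x - y` lies in
  -- the generalized kernel of `L_y`, and cancelling `y` repeatedly from `L_y ^ j x = y` gives `x = y`.
  have hall : ∀ x, mul x x = x → x ∈ W := by
    intro x hx
    by_cases hx0 : x = 0
    · rw [hx0]; exact W.zero_mem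
    obtain ⟨v, hv, y, hy, hvy⟩ := Submodule.mem_sup.1
      (hcompl.sup_eq_top ▸ Submodule.mem_top : x ∈ LinearMap.ker P ⊔ LinearMap.range P)
    have hPxy : P y = P x := by
      rw [← hvy, map_add, LinearMap.mem_ker.1 hv, zero_add]
    have hyy : mul y y = y := by
      refine sub_eq_zero.1 (hdisj _ ?_ (Submodule.sub_mem _ (hWmul ⟨y, hy⟩ ⟨y, hy⟩) hy))
      rw [map_sub, hPmul, hPxy, ← hPmul, hx, sub_self]
    have hy0 : y ≠ 0 := by
      rintro rfl
      rw [map_zero] at hPxy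
      exact (hPne x hx hx0).2 hPxy.symm
    have hv' : v ∈ Module.End.maxGenEigenspace (mul y) 0 := hgker y hyy hy0 ▸ hv
    rw [Module.End.mem_maxGenEigenspace, zero_smul, sub_zero] at hv'
    obtain ⟨j, hj⟩ := hv'
    have hyj : ∀ j, ((mul y : Module.End F A) ^ j) y = y := by
      intro j
      induction j with
      | zero => simp
      | succ j ih => rw [pow_succ, Module.End.mul_apply, hyy, ih]
    have hlast : ∀ j x, mul x x = x → ((mul y : Module.End F A) ^ j) x = y → x = y := by
      intro j
      induction j with
      | zero => intro x _ h; simpa using h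
      | succ j ih =>
        intro x hx h
        rw [pow_succ, Module.End.mul_apply] at h
        exact hcancel x y hx hyy hy0 (ih _ (hidmul _ _ hyy hx) h)
    rw [hlast j x hx (by rw [← hvy, map_add, hj, hyj, zero_add])]
    exact hy
  have hcard : {d : A | mul d d = d}.ncard ≤ {d : W | mulW d d = d}.ncard := by
    rw [← Set.ncard_image_of_injective {d : W | mulW d d = d} Subtype.val_injective]
    refine Set.ncard_le_ncard ?_ (hfinW.image _)
    intro d hd
    exact ⟨⟨d, hall d hd⟩, (hidW _).2 hd, rfl⟩
  have hk : k ≤ Module.finrank F W := by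
    simpa [Subspace.dual_finrank_eq] using hli.fintype_card_le_finrank
  have hn : Module.finrank F A ≤ Module.finrank F W := by
    rw [hgen] at hcard
    exact ((Nat.pow_le_pow_iff_right (by norm_num)).1 (hcard.trans hle)).trans hk
  have htop : W = ⊤ := Submodule.eq_top_of_finrank_eq (le_antisymm W.finrank_le hn)
  have hinj : Function.Injective (mul c) := by
    rw [injective_iff_map_eq_zero]
    intro x hx
    exact hdisj x (hker x hx) (by show x ∈ W; rw [htop]; exact Submodule.mem_top)
  exact ⟨hinj, LinearMap.injective_iff_surjective.1 hinj⟩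

/-! ### Coordinates and uniqueness -/

/-- Coordinates in which the product is the coordinatewise product of `F ^ n` followed by the
cyclic shift. The coordinate functionals `χ i` are indexed by all `i : ℕ`, with period `n`. -/
theorem medial_coordinates {F A : Type*} [Field F] [CharZero F] [IsAlgClosed F] [AddCommGroup A]
    [Module F A] [Module.Finite F A] (mul : A →ₗ[F] A →ₗ[F] A)
    (hcomm : ∀ x y : A, mul x y = mul y x)
    (hmed : ∀ x y z w : A, mul (mul x y) (mul z w) = mul (mul x z) (mul y w))
    (hgen : {c : A | mul c c = c}.ncard = 2 ^ (Module.finrank F A))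
    (hiso : ∀ c c' : A, c ≠ 0 → c' ≠ 0 → mul c c = c → mul c' c' = c' →
      LinearMap.charpoly (mul c) = LinearMap.charpoly (mul c'))
    {n : ℕ} (hn : Module.finrank F A = n) (hpos : 0 < n) :
    ∃ χ : ℕ → A →ₗ[F] F, (∀ i x y, χ i (mul x y) = χ (i + 1) x * χ (i + 1) y) ∧
      (∀ i, χ (i + n) = χ i) ∧
      Function.Bijective (LinearMap.pi fun i : Fin n => χ i) := by
  have hfin : {d : A | mul d d = d}.Finite :=
    Set.finite_of_ncard_pos (by rw [hgen]; positivity)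
  obtain ⟨c, hc, hc0⟩ : ∃ c, mul c c = c ∧ c ≠ 0 :=
    Set.exists_ne_of_one_lt_ncard (s := {c : A | mul c c = c})
      (by rw [hgen, hn]; exact Nat.one_lt_two_pow hpos.ne') 0
  obtain ⟨-, k, χ, h1, h2, hli, hle⟩ := medial_orbit mul hcomm hmed hfin
    (fun a b ha hb hab => medial_mul_ne_zero mul hcomm hmed hiso ha hb hab) hc hc0
    (medial_bijective mul hcomm hmed hgen hiso hc hc0)
  have hk : k ≤ Module.finrank F A := by
    simpa [Subspace.dual_finrank_eq] using hli.fintype_card_le_finrank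
  have hk' : Module.finrank F A ≤ k := by
    rw [hgen] at hle
    exact (Nat.pow_le_pow_iff_right (by norm_num)).1 hle
  obtain rfl : k = n := by omega
  refine ⟨χ, h1, h2, ?_⟩
  -- `k` independent functionals span the dual, hence separate points.
  have hspan : Submodule.span F (Set.range fun i : Fin k => χ i) = ⊤ :=
    hli.span_eq_top_of_card_eq_finrank' (by simp [Subspace.dual_finrank_eq, hn])
  have hinj : Function.Injective (LinearMap.pi fun i : Fin k => χ i) := by
    rw [injective_iff_map_eq_zero]
    intro x hx
    rw [← Module.forall_dual_apply_eq_zero_iff F]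
    intro f
    have hf : f ∈ Submodule.span F (Set.range fun i : Fin k => χ i) := hspan ▸ Submodule.mem_top
    induction hf using Submodule.span_induction with
    | mem f hf =>
      obtain ⟨i, rfl⟩ := hf
      exact congrFun hx i
    | zero => rfl
    | add f g _ _ hf hg => rw [LinearMap.add_apply, hf, hg, add_zero]
    | smul r f _ hf => rw [LinearMap.smul_apply, hf, smul_zero]
  exact ⟨hinj, (LinearMap.injective_iff_surjective_of_finrank_eq_finrank (by simp [hn])).1 hinj⟩


/-- Over an algebraically closed field of characteristic zero, two
finite-dimensional medial, generic, isospectral commutative nonassociative algebras of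
the same dimension are isomorphic. -/
theorem medial_generic_isospectral_unique {F A B : Type*} [Field F] [IsAlgClosed F]
    [CharZero F]
    [AddCommGroup A] [Module F A] [Module.Finite F A]
    [AddCommGroup B] [Module F B] [Module.Finite F B]
    (mulA : A →ₗ[F] A →ₗ[F] A) (mulB : B →ₗ[F] B →ₗ[F] B)
    (hcommA : ∀ x y : A, mulA x y = mulA y x)
    (hmedialA : ∀ x y z w : A, mulA (mulA x y) (mulA z w) = mulA (mulA x z) (mulA y w))
    (hcommB : ∀ x y : B, mulB x y = mulB y x)
    (hmedialB : ∀ x y z w : B, mulB (mulB x y) (mulB z w) = mulB (mulB x z) (mulB y w))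
    (hgenA : {c : A | mulA c c = c}.ncard = 2 ^ (Module.finrank F A))
    (hgenB : {c : B | mulB c c = c}.ncard = 2 ^ (Module.finrank F B))
    (hisoA : ∀ c c' : A, c ≠ 0 → c' ≠ 0 → mulA c c = c → mulA c' c' = c' →
      LinearMap.charpoly (mulA c) = LinearMap.charpoly (mulA c'))
    (hisoB : ∀ c c' : B, c ≠ 0 → c' ≠ 0 → mulB c c = c → mulB c' c' = c' →
      LinearMap.charpoly (mulB c) = LinearMap.charpoly (mulB c'))
    (hdim : Module.finrank F A = Module.finrank F B) :
    ∃ φ : A ≃ₗ[F] B, ∀ x y : A, φ (mulA x y) = mulB (φ x) (φ y) := by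
  rcases Nat.eq_zero_or_pos (Module.finrank F A) with h0 | hpos
  · have hA : Subsingleton A := Module.finrank_zero_iff.1 h0
    have hB : Subsingleton B := Module.finrank_zero_iff.1 (hdim ▸ h0)
    exact ⟨LinearEquiv.ofFinrankEq A B hdim, fun x y => Subsingleton.elim _ _⟩
  obtain ⟨χ, hχ, hχn, hχb⟩ := medial_coordinates mulA hcommA hmedialA hgenA hisoA rfl hpos
  obtain ⟨ψ, hψ, hψn, hψb⟩ := medial_coordinates mulB hcommB hmedialB hgenB hisoB hdim.symm hpos
  let eA := LinearEquiv.ofBijective _ hχb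
  let eB := LinearEquiv.ofBijective _ hψb
  have hcoord : ∀ x i, ψ i ((eA.trans eB.symm) x) = χ i x := by
    intro x
    have hlt : ∀ i : Fin (Module.finrank F A), ψ i ((eA.trans eB.symm) x) = χ i x :=
      fun i => congrFun (eB.apply_symm_apply (eA x)) i
    intro i
    induction i using Nat.strong_induction_on with
    | _ i ih =>
      by_cases hi : i < Module.finrank F A
      · exact hlt ⟨i, hi⟩
      · obtain ⟨j, rfl⟩ := Nat.exists_eq_add_of_le' (not_lt.1 hi)
        rw [hψn, hχn]
        exact ih j (by omega)
  refine ⟨eA.trans eB.symm, fun x y => hψb.injective (funext fun i => ?_)⟩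
  show ψ i _ = ψ i _
  rw [hcoord, hψ, hχ, hcoord, hcoord]
end

section
/- Let A be a medial commutative nonassociative algebra of dimension n over an algebraically closed field of characteristic zero which is generic (A has exactly 2^n idempotents, including 0) and isospectral (all nonzero idempotents c have the same characteristic polynomial of L_c). Then there exists a bijection φ from the set of nonzero idempotents of A onto ZMod(2^n − 1) such that for all nonzero idempotents x, y of A, the product x*y is again a nonzero idempotent and 2·φ(x*y) = φ(x) + φ(y) in ZMod(2^n − 1). -/
/-!
The nonzero idempotents form a finite set `S` of size `2 ^ n - 1`, and each left translation
`mul c` with `c ∈ S` is an endomorphism of the algebra. The proof has three ingredients.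

* No two nonzero idempotents `x`, `y` are orthogonal. Otherwise `x + y` is an idempotent and
  mediality gives `L_x L_y = 0`, so the common characteristic polynomial `p` satisfies
  `p * p = X ^ n * p`, that is `p = X ^ n`, although `1` is an eigenvalue of `L_x`
  (`charpoly_eq_X_pow`). Hence `S` is closed under the product, and `x * y = x` forces `x = y`
  on `S`, since `y - x` would be an idempotent orthogonal to `x`.
* A finite commutative idempotent medial magma in which `x * y = x` forces `x = y` is a quasigroup
  (`IsRigidMedial.exists_iterate_eq`). By Toyoda's construction, for a fixed `c ∈ S` the operation
  `x ∘ y = L_c⁻¹ (x * y)` is an abelian group law on `S` (`IsRigidMedial.commGroup`). Since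
  `x * y` is idempotent, `(x * y) ∘ (x * y) = x ∘ y`, which is the required identity, written
  multiplicatively.
* The group `(S, ∘)` is cyclic because it has a faithful character. Some character `χ` extends to
  the linear span of `S` (`exists_character`), so the average of its kernel `K` is nonzero. As `K`
  is closed under the product, this average is an idempotent `t` with `k * t = t` for `k ∈ K`,
  hence `k = t` by rigidity and `K` is trivial.
-/


/-! ### Rigid medial magmas are quasigroups -/

/-- A commutative, idempotent, medial binary operation which contains no two-element
subsemilattice: `x ∧ y = x` happens only for `x = y`. -/
structure IsRigidMedial {M : Type*} (op : M → M → M) : Prop where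
  comm : ∀ x y, op x y = op y x
  idem : ∀ x, op x x = x
  medial : ∀ x y z w, op (op x y) (op z w) = op (op x z) (op y w)
  rigid : ∀ x y, op x y = x → x = y

namespace IsRigidMedial

variable {M : Type*} {op : M → M → M}

theorem semiconj (h : IsRigidMedial op) (y x : M) :
    Function.Semiconj (op y) (op x) (op (op y x)) := fun z => by
  conv_lhs => rw [← h.idem y]
  exact h.medial y y x z

/-- Left translations are endomorphisms, and so are their iterates. -/
theorem iterate_op (h : IsRigidMedial op) (c : M) (k : ℕ) (x y : M) :
    (op c)^[k] (op x y) = op ((op c)^[k] x) ((op c)^[k] y) := by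
  induction k generalizing x y with
  | zero => rfl
  | succ k ih => rw [Function.iterate_succ_apply, h.semiconj c x y, ih]; rfl

theorem iterate_iterate (h : IsRigidMedial op) (y x z : M) (k j : ℕ) :
    (op y)^[k] ((op x)^[j] z) = (op ((op y)^[k] x))^[j] ((op y)^[k] z) := by
  have hs : Function.Semiconj (op y)^[k] (op x) (op ((op y)^[k] x)) :=
    fun z => h.iterate_op y k x z
  exact hs.iterate_right j z

theorem iterate_self (h : IsRigidMedial op) (y : M) (k : ℕ) : (op y)^[k] y = y :=
  Function.iterate_fixed (h.idem y) k

/-- If `p ≠ x` reached `x` under iteration of `op x`, the last iterate `z ≠ x` would satisfy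
`x * z = x`, against rigidity. -/
theorem eq_of_iterate_eq (h : IsRigidMedial op) (x : M) (k : ℕ) (p : M)
    (hp : (op x)^[k] p = x) : p = x := by
  induction k with
  | zero => exact hp
  | succ k ih =>
    rw [Function.iterate_succ_apply'] at hp
    exact ih (h.rigid _ _ hp).symm

/-- If `x` is periodic under translation by `y`, then `y` is periodic under translation by `x`.
In the monoid with unit `y` underlying the operation, `f = (op x)^[k] y` is the product of the
orbit of `x`, hence is fixed by `op y`; rigidity then forces `f = y`. -/
theorem periodic_symm (h : IsRigidMedial op) (x y : M) (k : ℕ) (hx : (op y)^[k] x = x) :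
    (op x)^[k] y = y := by
  have key : ∀ j, op y ((op x)^[j + 1] y) = op ((op x)^[j] y) ((op y)^[j + 1] x) := by
    intro j
    induction j with
    | zero =>
      change op y (op x y) = op y (op y x)
      rw [h.comm x y]
    | succ j ih =>
      rw [Function.iterate_succ_apply' (op x) (j + 1) y, h.semiconj y x, ih,
        Function.iterate_succ_apply' (op x) j y, Function.iterate_succ_apply' (op y) (j + 1) x,
        h.medial x, h.comm x y]
  rcases k with _ | j
  · rfl
  · have h1 := key j
    rw [hx, h.comm _ x, ← Function.iterate_succ_apply' (op x), h.comm y] at h1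
    exact h.rigid _ _ h1

/-- On a finite set, all left translations are permutations, with a common exponent `m`. -/
theorem exists_iterate_eq [Finite M] (h : IsRigidMedial op) :
    ∃ m : ℕ, ∀ y x : M, (op y)^[m + 1] x = x := by
  -- a common exponent for which the iterates are retractions
  obtain ⟨m, hm⟩ : ∃ m : ℕ, ∀ y x : M, (op y)^[m + 1] ((op y)^[m + 1] x) = (op y)^[m + 1] x := by
    obtain ⟨i, j, hij, heq⟩ : ∃ i j : ℕ, i < j ∧
        (fun y : M => (op y)^[i]) = (fun y : M => (op y)^[j]) := by
      obtain ⟨i, j, hne, heq⟩ := Finite.exists_ne_map_eq_of_infinite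
        (fun i : ℕ => fun y : M => (op y)^[i])
      rcases lt_or_gt_of_ne hne with hlt | hlt
      · exact ⟨i, j, hlt, heq⟩
      · exact ⟨j, i, hlt, heq.symm⟩
    obtain ⟨d, rfl⟩ := Nat.exists_eq_add_of_lt hij
    have hper : ∀ (k a : ℕ) (y x : M), (op y)^[i + a + k * (d + 1)] x = (op y)^[i + a] x := by
      intro k
      induction k with
      | zero => intros; simp
      | succ k ih =>
        intro a y x
        rw [← ih a y x]
        have e := congrFun (congrFun heq y) ((op y)^[a + k * (d + 1)] x)
        simp only [← Function.iterate_add_apply] at e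
        rw [show i + a + (k + 1) * (d + 1) = i + d + 1 + (a + k * (d + 1)) by ring, ← e]
        exact congrArg (fun t => (op y)^[t] x) (by ring)
    refine ⟨i + (i * d + d), fun y x => ?_⟩
    have e := hper (i + 1) (i * d + d + 1) y x
    rw [← Function.iterate_add_apply]
    rwa [show i + (i * d + d + 1) + (i + 1) * (d + 1) = i + (i * d + d) + 1 + (i + (i * d + d) + 1)
      by ring] at e
  -- with `p = (op y)^[m + 1] x`, apply the endomorphism `(op x)^[m + 1]` to see that it maps `p`
  -- to `x`; then `p = x`
  refine ⟨m, fun y x => ?_⟩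
  have h1 : (op x)^[m + 1] ((op y)^[m + 1] x) = x := by
    rw [h.iterate_iterate, h.iterate_self]
    exact h.periodic_symm _ _ _ (hm x y)
  exact h.eq_of_iterate_eq x (m + 1) _ h1

/-- Toyoda's construction: fixing `c`, the operation `x ∘ y = (op c)⁻¹ (x * y)` is an abelian group
law with unit `c`. The inverse of `op c` is written as `(op c)^[m]`. -/
abbrev commGroup (h : IsRigidMedial op) (c : M) (m : ℕ)
    (hm : ∀ y x : M, (op y)^[m + 1] x = x) : CommGroup M where
  mul x y := (op c)^[m] (op x y)
  one := c
  inv x := (op x)^[m] c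
  mul_assoc x y z := by
    change (op c)^[m] (op ((op c)^[m] (op x y)) z) = (op c)^[m] (op x ((op c)^[m] (op y z)))
    congr 1
    conv_lhs => rw [← hm c z, Function.iterate_succ_apply, ← h.iterate_op]
    conv_rhs => rw [← hm c x, Function.iterate_succ_apply, ← h.iterate_op]
    rw [h.medial, h.comm x c]
  one_mul x := by
    change (op c)^[m] (op c x) = x
    rw [← Function.iterate_succ_apply]; exact hm c x
  mul_one x := by
    change (op c)^[m] (op x c) = x
    rw [h.comm, ← Function.iterate_succ_apply]; exact hm c x
  inv_mul_cancel x := by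
    change (op c)^[m] (op ((op x)^[m] c) x) = c
    rw [h.comm, ← Function.iterate_succ_apply' (op x), hm, h.iterate_self]
  mul_comm x y := by
    change (op c)^[m] (op x y) = (op c)^[m] (op y x)
    rw [h.comm]

end IsRigidMedial

/-! ### Characters extending to a linear span -/

/-- Let a finite abelian group `G` be mapped to a vector space by `ι`, so that translations of `G`
are induced by linear maps. Then some character of `G` extends to the span of `ι`, and therefore
the sum of `ι` over its kernel is nonzero. -/
theorem exists_character_s14 {F A G : Type*} [Field F] [IsAlgClosed F] [CharZero F] [AddCommGroup A]
    [Module F A] [CommGroup G] [Fintype G] (ι : G → A) (T : G → A →ₗ[F] A)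
    (hT : ∀ g h, T g (ι h) = ι (g * h)) (hι : ι 1 ≠ 0) :
    ∃ χ : G →* F, ∀ K : Finset G, (∀ g, g ∈ K ↔ χ g = 1) → ∑ g ∈ K, ι g ≠ 0 := by
  classical
  let π : MonoidAlgebra F G →ₗ[F] A :=
    Finsupp.linearCombination F ι ∘ₗ (MonoidAlgebra.coeffLinearEquiv F).toLinearMap
  have hπ : ∀ g r, π (MonoidAlgebra.single g r) = r • ι g := fun g r =>
    Finsupp.linearCombination_single F r g
  have hmul : ∀ g r a, π (MonoidAlgebra.single g r * a) = r • T g (π a) := by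
    intro g r a
    induction a using MonoidAlgebra.induction_linear with
    | zero => simp
    | add a b ha hb => simp only [mul_add, map_add, ha, hb, smul_add]
    | single h t => rw [MonoidAlgebra.single_mul_single, hπ, hπ, map_smul, hT, smul_smul]
  -- the kernel of `π` is a proper ideal of the group algebra
  let J : Ideal (MonoidAlgebra F G) :=
    { carrier := {a | π a = 0}
      add_mem' := fun {a b} ha hb => by
        change π (a + b) = 0
        rw [map_add, show π a = 0 from ha, show π b = 0 from hb, add_zero]
      zero_mem' := map_zero π
      smul_mem' := fun b a ha => by
        change π (b * a) = 0
        replace ha : π a = 0 := ha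
        induction b using MonoidAlgebra.induction_linear with
        | zero => simp
        | add b b' hb hb' => simp only [add_mul, map_add, hb, hb', add_zero]
        | single h t => rw [hmul, ha, map_zero, smul_zero] }
  have hJ : J ≠ ⊤ := by
    intro hJ
    have h1 : π 1 = 0 := (Ideal.eq_top_iff_one J).1 hJ
    rw [MonoidAlgebra.one_def, hπ, one_smul] at h1
    exact hι h1
  obtain ⟨m, hm, hJm⟩ := Ideal.exists_le_maximal J hJ
  let _ : Field (MonoidAlgebra F G ⧸ m) := Ideal.Quotient.field m
  have _ : Module.Finite F (MonoidAlgebra F G) :=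
    Module.Finite.equiv (MonoidAlgebra.coeffLinearEquiv F).symm
  let e : F ≃ₐ[F] (MonoidAlgebra F G ⧸ m) :=
    AlgEquiv.ofBijective (Algebra.ofId F _) IsAlgClosed.algebraMap_bijective_of_isIntegral
  let Φ : MonoidAlgebra F G →ₐ[F] F := e.symm.toAlgHom.comp (Ideal.Quotient.mkₐ F m)
  have hΦ : ∀ a, π a = 0 → Φ a = 0 := by
    intro a ha
    have : Ideal.Quotient.mk m a = 0 := Ideal.Quotient.eq_zero_iff_mem.2 (hJm ha)
    change e.symm (Ideal.Quotient.mk m a) = 0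
    rw [this, map_zero]
  refine ⟨(Φ : MonoidAlgebra F G →* F).comp (MonoidAlgebra.of F G), fun K hK h0 => ?_⟩
  have h1 : Φ (∑ g ∈ K, MonoidAlgebra.of F G g) = 0 := by
    apply hΦ
    rw [map_sum, ← h0]
    exact Finset.sum_congr rfl fun g _ => by rw [MonoidAlgebra.of_apply, hπ, one_smul]
  have hK1 : ∀ g ∈ K, Φ (MonoidAlgebra.of F G g) = 1 := fun g hg => (hK g).1 hg
  rw [map_sum, Finset.sum_congr rfl hK1] at h1
  have hne : K.Nonempty := ⟨1, (hK 1).2 (map_one _)⟩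
  simp [hne.ne_empty] at h1

/-! ### Characteristic polynomials and orthogonal idempotents -/

open Polynomial in
/-- If the product of two operators vanishes, `(X - f)(X - g) = X (X - (f + g))`; when `f`, `g` and
`f + g` have the same characteristic polynomial `p`, this gives `p = Xⁿ`. -/
theorem charpoly_eq_X_pow {F A : Type*} [Field F] [AddCommGroup A] [Module F A] [Module.Finite F A]
    (f g : A →ₗ[F] A) (hfg : f * g = 0) (hg : g.charpoly = f.charpoly)
    (hs : (f + g).charpoly = f.charpoly) : f.charpoly = X ^ Module.finrank F A := by
  let b := Module.finBasis F A
  rw [← LinearMap.charpoly_toMatrix f b] at *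
  rw [← LinearMap.charpoly_toMatrix g b] at hg
  rw [← LinearMap.charpoly_toMatrix (f + g) b] at hs
  have h0 : LinearMap.toMatrix b b f * LinearMap.toMatrix b b g = 0 := by
    rw [← LinearMap.toMatrix_mul, hfg, map_zero]
  rw [map_add] at hs
  generalize LinearMap.toMatrix b b f = P at *
  generalize LinearMap.toMatrix b b g = Q at *
  have hm : P.charmatrix * Q.charmatrix = (X : F[X]) • (P + Q).charmatrix := by
    have h1 : C.mapMatrix P * C.mapMatrix Q = 0 := by rw [← map_mul, h0, map_zero]
    have hX : ∀ N : Matrix (Fin (Module.finrank F A)) (Fin (Module.finrank F A)) F[X],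
        Matrix.scalar _ (X : F[X]) * N = X • N := fun N => (Matrix.smul_eq_diagonal_mul N X).symm
    have hX' : ∀ N : Matrix (Fin (Module.finrank F A)) (Fin (Module.finrank F A)) F[X],
        N * Matrix.scalar _ (X : F[X]) = X • N := fun N =>
      (Matrix.op_smul_eq_mul_diagonal N X).symm.trans (op_smul_eq_smul X N)
    simp only [Matrix.charmatrix, map_add, sub_mul, mul_sub, h1, hX, hX', smul_sub, smul_add]
    abel
  have hd := congrArg Matrix.det hm
  rw [Matrix.det_mul, Matrix.det_smul, Fintype.card_fin] at hd
  change P.charpoly * Q.charpoly = _ * (P + Q).charpoly at hd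
  rw [hg, hs] at hd
  exact mul_right_cancel₀ P.charpoly_monic.ne_zero hd

/-! ### The idempotents form a cyclic group -/

/-- For an `n`-dimensional medial, generic, isospectral commutative
nonassociative algebra over an algebraically closed field of characteristic zero,
there is a bijection `φ` from the set of nonzero idempotents onto `ZMod (2ⁿ − 1)`
such that the product of two nonzero idempotents is a nonzero idempotent and
`2·φ(x*y) = φ(x) + φ(y)`. -/
theorem idempotent_quasigroup_is_cyclic {F A : Type*} [Field F] [IsAlgClosed F]
    [CharZero F] [AddCommGroup A] [Module F A] [Module.Finite F A]
    (mul : A →ₗ[F] A →ₗ[F] A)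
    (hcomm : ∀ x y : A, mul x y = mul y x)
    (hmedial : ∀ x y z w : A, mul (mul x y) (mul z w) = mul (mul x z) (mul y w))
    (n : ℕ) (hn : 1 ≤ n) (hdim : Module.finrank F A = n)
    (hgen : {c : A | mul c c = c}.ncard = 2 ^ n)
    (hiso : ∀ c c' : A, c ≠ 0 → c' ≠ 0 → mul c c = c → mul c' c' = c' →
      LinearMap.charpoly (mul c) = LinearMap.charpoly (mul c')) :
    ∃ φ : A → ZMod (2 ^ n - 1),
      Set.BijOn φ {c : A | mul c c = c ∧ c ≠ 0} Set.univ ∧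
      ∀ x y : A, (mul x x = x ∧ x ≠ 0) → (mul y y = y ∧ y ≠ 0) →
        (mul (mul x y) (mul x y) = mul x y ∧ mul x y ≠ 0) ∧
        2 * φ (mul x y) = φ x + φ y := by
  classical
  -- orthogonal nonzero idempotents do not exist
  have horth : ∀ x y : A, mul x x = x → mul y y = y → x ≠ 0 → mul x y = 0 → y = 0 := by
    intro x y hx hy hx0 hxy
    by_contra hy0
    have hxy' : mul y x = 0 := by rw [hcomm, hxy]
    have hs : mul (x + y) (x + y) = x + y := by simp [hx, hy, hxy, hxy']
    have hs0 : x + y ≠ 0 := by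
      intro h0
      have := congrArg (mul x) h0
      rw [map_add, hx, hxy, add_zero, map_zero] at this
      exact hx0 this
    have hprod : mul x * mul y = 0 := by
      ext z
      change mul x (mul y z) = 0
      rw [← hx, hmedial, hxy, map_zero, LinearMap.zero_apply]
    have hp := charpoly_eq_X_pow (mul x) (mul y) hprod (hiso _ _ hy0 hx0 hy hx)
      (by rw [← map_add]; exact hiso _ _ hs0 hx0 hs hx)
    have hroot : (mul x).charpoly.IsRoot 1 := by
      rw [← Module.End.hasEigenvalue_iff_isRoot_charpoly]
      exact Module.End.hasEigenvalue_of_hasEigenvector (x := x)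
        ⟨Module.End.mem_eigenspace_iff.2 (by rw [hx, one_smul]), hx0⟩
    rw [hp] at hroot
    simp at hroot
  let S : Set A := {c : A | mul c c = c ∧ c ≠ 0}
  have hfin0 : {c : A | mul c c = c}.Finite :=
    Set.finite_of_ncard_ne_zero (by rw [hgen]; positivity)
  have hS : S = {c : A | mul c c = c} \ {0} := by ext; simp [S]
  have hcard : Nat.card S = 2 ^ n - 1 := by
    rw [Nat.card_coe_set_eq, hS, Set.ncard_sdiff_singleton_of_mem (by simp), hgen]
  have hfinS : S.Finite := hS ▸ hfin0.sdiff
  have _ : Finite S := hfinS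
  let _ : Fintype S := Fintype.ofFinite S
  have hclosed : ∀ x y : S, mul x y ∈ S := fun x y =>
    ⟨by rw [hmedial, x.2.1, y.2.1], fun h0 => y.2.2 (horth x y x.2.1 y.2.1 x.2.2 h0)⟩
  let op : S → S → S := fun x y => ⟨mul x y, hclosed x y⟩
  have hop : IsRigidMedial op :=
    { comm := fun x y => Subtype.ext (hcomm _ _)
      idem := fun x => Subtype.ext x.2.1
      medial := fun x y z w => Subtype.ext (hmedial _ _ _ _)
      rigid := fun x y hxy => by
        -- otherwise `y - x` is an idempotent orthogonal to `x`
        have h1 : mul (x : A) y = x := congrArg Subtype.val hxy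
        have h2 : mul (y : A) x = x := by rw [hcomm, h1]
        have h3 := horth x (y - x) x.2.1
          (by simp only [map_sub, LinearMap.sub_apply, h1, h2, x.2.1, y.2.1, sub_self, sub_zero])
          x.2.2 (by rw [map_sub, h1, x.2.1, sub_self])
        exact Subtype.ext (sub_eq_zero.1 h3).symm }
  obtain ⟨m, hm⟩ := hop.exists_iterate_eq
  have hinj : ∀ x : S, Function.Injective (op x) := fun x y z hyz => by
    rw [← hm x y, ← hm x z, Function.iterate_succ_apply, hyz, ← Function.iterate_succ_apply]
  have hne : 0 < Nat.card S := by
    rw [hcard]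
    have := Nat.pow_le_pow_right (n := 2) (by norm_num) hn
    omega
  obtain ⟨c⟩ : Nonempty S := (Nat.card_pos_iff.1 hne).1
  let _ : CommGroup S := hop.commGroup c m hm
  have hgmul : ∀ x y : S, x * y = (op c)^[m] (op x y) := fun _ _ => rfl
  have hcoe : ∀ (k : ℕ) (x : S), (((op c)^[k] x : S) : A) = (mul c ^ k) (x : A) := by
    intro k
    induction k with
    | zero => intro x; rfl
    | succ k ih => intro x; rw [Function.iterate_succ_apply, ih, pow_succ]; rfl
  obtain ⟨χ, hχ⟩ := exists_character_s14 (F := F) (G := S) (fun x => (x : A))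
    (fun g => (mul c ^ m) * mul (g : A)) (fun g h => (hcoe m (op g h)).symm) c.2.2
  have hsq : ∀ x y : S, op x y * op x y = x * y := fun x y => by
    rw [hgmul, hop.idem, hgmul]
  -- `op c` is inverse to squaring, so it is itself a power map
  have hpow : ∀ (k : ℕ) (x : S), ((op c)^[k] x) ^ (2 ^ k) = x := by
    intro k
    induction k with
    | zero => intro x; simp
    | succ k ih =>
      intro x
      rw [Function.iterate_succ_apply', pow_succ', pow_mul, pow_two, hsq]
      have : c * (op c)^[k] x = (op c)^[k] x := one_mul (M := S) _
      rw [this, ih]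
  have hσ : ∀ x : S, op c x = x ^ 2 ^ m := fun x => by
    have h1 := hpow m (op c x)
    rw [← Function.iterate_succ_apply (op c), hm] at h1
    exact h1.symm
  have hopmul : ∀ x y : S, op x y = op c (x * y) := fun x y => by
    rw [hgmul, ← Function.iterate_succ_apply' (op c), hm]
  have hχinj : Function.Injective χ := by
    let K : Finset S := Finset.univ.filter fun g => χ g = 1
    have hK : ∀ g, g ∈ K ↔ χ g = 1 := fun g => by simp [K]
    have hsum := hχ K hK
    have hKop : ∀ x ∈ K, ∀ y ∈ K, op x y ∈ K := by
      intro x hx y hy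
      rw [hK] at *
      rw [hopmul, hσ, map_pow, map_mul, hx, hy, one_mul, one_pow]
    have hKim : ∀ x ∈ K, K.image (op x) = K := fun x hx =>
      Finset.eq_of_subset_of_card_le (Finset.image_subset_iff.2 (hKop x hx))
        (Finset.card_image_of_injective K (hinj x)).ge
    set s : A := ∑ g ∈ K, (g : A) with hs
    have hxs : ∀ x ∈ K, mul (x : A) s = s := by
      intro x hx
      conv_rhs => rw [hs, ← hKim x hx, Finset.sum_image (fun a _ b _ h => hinj x h)]
      rw [hs, map_sum]
    have hss : mul s s = (K.card : F) • s := by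
      have h1 : mul s s = ∑ x ∈ K, mul (x : A) s := by
        conv_lhs => enter [1]; rw [hs, map_sum]
        rw [LinearMap.sum_apply]
      rw [h1, Finset.sum_congr rfl hxs, Finset.sum_const, Nat.cast_smul_eq_nsmul]
    have hc1 : (K.card : F) ≠ 0 := by
      have : (1 : S) ∈ K := (hK 1).2 (map_one χ)
      exact Nat.cast_ne_zero.2 (Finset.card_ne_zero_of_mem this)
    -- the average of `K` is an idempotent absorbing `K`
    let t : S := ⟨(K.card : F)⁻¹ • s, by
      constructor
      · rw [map_smul, map_smul, LinearMap.smul_apply, hss, inv_smul_smul₀ hc1]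
      · exact smul_ne_zero (inv_ne_zero hc1) hsum⟩
    have hxt : ∀ x ∈ K, x = t := fun x hx => by
      have h1 : op x t = t := Subtype.ext (by
        change mul (x : A) ((K.card : F)⁻¹ • s) = (K.card : F)⁻¹ • s
        rw [map_smul, hxs x hx])
      exact (hop.rigid t x (by rw [hop.comm, h1])).symm
    refine (injective_iff_map_eq_one χ).2 fun a ha => ?_
    rw [hxt a ((hK a).2 ha), hxt 1 ((hK 1).2 (map_one χ))]
  have hcyc : IsCyclic S := isCyclic_of_injective_ringHom χ hχinj
  let ψ := zmodCyclicMulEquiv hcyc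
  rw [← hcard]
  refine ⟨fun x => if hx : x ∈ S then (ψ.symm ⟨x, hx⟩).toAdd else 0, ⟨?_, ?_, ?_⟩, ?_⟩
  · exact fun _ _ => Set.mem_univ _
  · intro x hx y hy hxy
    have hx' : x ∈ S := hx
    have hy' : y ∈ S := hy
    simp only [dif_pos hx', dif_pos hy'] at hxy
    exact congrArg Subtype.val (ψ.symm.injective (Multiplicative.toAdd.injective hxy))
  · intro z _
    refine ⟨ψ (Multiplicative.ofAdd z), (ψ (Multiplicative.ofAdd z)).2, ?_⟩
    simp only [Subtype.coe_prop, dite_true, Subtype.coe_eta, MulEquiv.symm_apply_apply,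
      toAdd_ofAdd]
  · intro x y hx hy
    have hx' : x ∈ S := hx
    have hy' : y ∈ S := hy
    have hxy : mul x y ∈ S := hclosed ⟨x, hx'⟩ ⟨y, hy'⟩
    refine ⟨hxy, ?_⟩
    simp only [dif_pos hx', dif_pos hy', dif_pos hxy]
    have h := congrArg (fun g => (ψ.symm g).toAdd) (hsq ⟨x, hx'⟩ ⟨y, hy'⟩)
    simp only [map_mul, toAdd_mul] at h
    rw [two_mul]
    exact h
end

section
/- Let A be a medial commutative nonassociative algebra of dimension n over an algebraically closed field F of characteristic zero which is generic (exactly 2^n idempotents including 0) and isospectral (all nonzero idempotents have the same characteristic polynomial of the multiplication operator), and let c be a nonzero idempotent of A. Then L_c is bijective, and the binary operation x ⊞ y := L_c^{-1}(x*y) makes the set of nonzero idempotents of A into an abelian group with identity element c: for all nonzero idempotents x, y, z, the element x ⊞ y is again a nonzero idempotent, x ⊞ y = y ⊞ x, (x ⊞ y) ⊞ z = x ⊞ (y ⊞ z), c ⊞ x = x, and every nonzero idempotent x has a nonzero idempotent inverse x' with x ⊞ x' = c. -/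
/-!
Mediality makes the product of two idempotents an idempotent and every `L_e` (`e` idempotent) an
endomorphism of the algebra.

* Isospectrality gives `eq_zero_of_annihilated`: if `e`, `a` are idempotents with `e ≠ 0` and
  `e * a = 0`, then `a = 0`. Otherwise `e + a` is a nonzero idempotent and `L_e L_a = 0`, so the
  common characteristic polynomial `χ` satisfies `χ² = Xⁿ χ`, contradicting `χ(1) = 0`.
  Hence the nonzero idempotents are closed under `*`, and `e * x = e` forces `x = e`.
* These two facts and finiteness make each `L_c` a permutation of the nonzero idempotents
  (`mul_left_injective_of_finite`, a purely combinatorial statement). So some power `L_c ^ N`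
  with `N > 0` is the identity on the span `V` of the idempotents.
* On `V` the product `x ⊞ y = L_c⁻¹ (x * y)` is commutative, associative and unital, and the
  idempotents `x` of `*` are the solutions of `x ⊞ x = ψ x` for the automorphism `ψ = L_c⁻¹`.
  Each solution satisfies `x ^ 2 ^ N = x`, so solutions are separated by the at most `dim V`
  characters of `(V, ⊞)`; composition with `ψ` maps characters to characters, so the values `χ x`
  satisfy the quadratic relations `(χ x)² = (χ ∘ ψ) x`, which have at most `2 ^ dim V` solutions
  (`card_le_two_pow`).

Having `2 ^ n` idempotents therefore forces `V` to be the whole algebra, on which `L_c` is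
invertible. The group laws follow from mediality by cancelling `L_c`; inverses exist because `L_x`
permutes the nonzero idempotents.
-/

/-! ### Finite commutative idempotent medial magmas -/

/-- If `c * x = c * z` and `z` is periodic under `L_c`, then `x = z`. All the elements `L_c ^ j z`
with `j ≥ 1` fail to distinguish `x` from `z`; by periodicity one of them is `z` itself, so
`z * x = z * z = z`, and `hP` applies. -/
theorem periodic_cancel {E : Type*} (m : E → E → E)
    (hcomm : ∀ x y, m x y = m y x) (hidem : ∀ x, m x x = x)
    (hmed : ∀ x y z w, m (m x y) (m z w) = m (m x z) (m y w))
    (hP : ∀ e x, m e x = e → x = e) {c x z : E} (hxz : m c x = m c z) {k : ℕ} (hk : 0 < k)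
    (hz : (m c)^[k] z = z) : x = z := by
  have key : ∀ j, m ((m c)^[j + 1] z) x = m ((m c)^[j + 1] z) z := by
    intro j
    induction j with
    | zero =>
      change m (m c z) x = m (m c z) z
      -- with `e = c * z`, computing `(x * x) * (c * z)` in two ways gives `(e * x) * (e * z) = e * x`
      have h1 : m (m x x) (m c z) = m (m (m c z) x) (m (m c z) z) := by
        rw [hmed, hcomm x c, hxz]
        conv_lhs => rw [← hidem (m c z), hmed]
      rw [hidem, hcomm x] at h1
      exact (hP _ _ h1.symm).symm
    | succ j ih =>
      rw [Function.iterate_succ_apply' (m c) (j + 1)]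
      generalize (m c)^[j + 1] z = u at ih
      calc m (m c u) x = m (m c u) (m x x) := by rw [hidem x]
        _ = m (m c z) (m u z) := by rw [hmed, hxz, ih]
        _ = m (m c u) z := by rw [hmed, hidem z]
  obtain ⟨j, rfl⟩ : ∃ j, k = j + 1 := ⟨k - 1, by omega⟩
  have h := key j
  rw [hz, hidem] at h
  exact hP _ _ h

/-- By finiteness every orbit of `L_c` is eventually periodic, and by `periodic_cancel` an element
whose image is periodic is itself periodic. So all elements are periodic and `L_c` is onto. -/
theorem mul_left_injective_of_finite {E : Type*} [Finite E] (m : E → E → E)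
    (hcomm : ∀ x y, m x y = m y x) (hidem : ∀ x, m x x = x)
    (hmed : ∀ x y z w, m (m x y) (m z w) = m (m x z) (m y w))
    (hP : ∀ e x, m e x = e → x = e) (c : E) : Function.Injective (m c) := by
  have step : ∀ y, m c y ∈ Function.periodicPts (m c) → y ∈ Function.periodicPts (m c) := by
    rintro y ⟨p, hp, hy⟩
    have hy' : (m c)^[p] (m c y) = m c y := hy
    have hz : (m c)^[p] ((m c)^[p] y) = (m c)^[p] y := by
      obtain ⟨q, rfl⟩ : ∃ q, p = q + 1 := ⟨p - 1, by omega⟩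
      conv_lhs => rw [Function.iterate_succ_apply (m c) q y]
      rw [← Function.iterate_add_apply, Nat.add_comm, Function.iterate_add_apply, hy',
        ← Function.iterate_succ_apply]
    have h : m c y = m c ((m c)^[p] y) := by
      rw [← Function.iterate_succ_apply' (m c) p y, Function.iterate_succ_apply, hy']
    exact ⟨p, hp, (periodic_cancel m hcomm hidem hmed hP h hp hz).symm⟩
  have all : ∀ y, y ∈ Function.periodicPts (m c) := by
    intro y
    have back : ∀ j, (m c)^[j] y ∈ Function.periodicPts (m c) →
        y ∈ Function.periodicPts (m c) := by
      intro j
      induction j with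
      | zero => exact id
      | succ j ih => exact fun h => ih (step _ (by rwa [Function.iterate_succ_apply'] at h))
    obtain ⟨i, k, hne, hik⟩ := Finite.exists_ne_map_eq_of_infinite fun j : ℕ => (m c)^[j] y
    wlog hlt : i < k generalizing i k
    · exact this k i hne.symm hik.symm (by omega)
    refine back i ⟨k - i, by omega, ?_⟩
    change (m c)^[k - i] ((m c)^[i] y) = _
    rw [← Function.iterate_add_apply, Nat.sub_add_cancel hlt.le]
    exact hik.symm
  refine Finite.injective_iff_surjective.mpr fun y => ?_
  obtain ⟨p, hp, hy⟩ := all y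
  obtain ⟨q, rfl⟩ : ∃ q, p = q + 1 := ⟨p - 1, by omega⟩
  exact ⟨(m c)^[q] y, by rw [← Function.iterate_succ_apply' (m c) q y]; exact hy⟩

/-! ### Counting solutions of quadratic relations through characters -/

/-- Distinct solutions `s` of the relations `t_x² = t_(σ x)` give linearly independent evaluations
on monomials, by Dedekind's theorem. The relations reduce every monomial to one of the
`2 ^ |X|` squarefree ones. -/
theorem card_le_two_pow {F X S : Type*} [Field F] [Fintype X] [Fintype S] (σ : X → X)
    (t : S → X → F) (hinj : Function.Injective t) (ht : ∀ s x, t s x * t s x = t s (σ x)) :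
    Fintype.card S ≤ 2 ^ Fintype.card X := by
  classical
  let ev : S → (Multiplicative (Multiset X) →* F) := fun s =>
    { toFun := fun u => (u.toAdd.map (t s)).prod
      map_one' := by simp
      map_mul' := fun u v => by simp }
  have hev : Function.Injective ev := by
    intro s s' h
    apply hinj
    funext x
    have h1 : (Multiset.map (t s) {x}).prod = (Multiset.map (t s') {x}).prod :=
      DFunLike.congr_fun h (Multiplicative.ofAdd {x})
    simpa using h1
  have hli : LinearIndependent F fun s => (ev s : Multiplicative (Multiset X) → F) :=
    (linearIndependent_monoidHom (Multiplicative (Multiset X)) F).comp ev hev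
  have hred : ∀ (k : ℕ) (u : Multiset X), u.card = k → ∃ Y : Finset X, ∀ s,
      (u.map (t s)).prod = ∏ x ∈ Y, t s x := by
    intro k
    induction k with
    | zero => intro u hu; exact ⟨∅, by simp [Multiset.card_eq_zero.mp hu]⟩
    | succ k ih =>
      intro u hu
      by_cases hnd : u.Nodup
      · exact ⟨⟨u, hnd⟩, fun s => rfl⟩
      · rw [Multiset.nodup_iff_ne_cons_cons] at hnd
        push Not at hnd
        obtain ⟨a, v, rfl⟩ := hnd
        obtain ⟨Y, hY⟩ := ih (σ a ::ₘ v) (by simpa using hu)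
        refine ⟨Y, fun s => ?_⟩
        rw [← hY s]
        simp [← ht, mul_assoc]
  have hli' : LinearIndependent F fun (s : S) (Y : Finset X) => ∏ x ∈ Y, t s x := by
    rw [Fintype.linearIndependent_iff] at hli ⊢
    intro g hg
    refine hli g ?_
    funext u
    obtain ⟨Y, hY⟩ := hred _ u.toAdd rfl
    have := congr_fun hg Y
    simp only [Finset.sum_apply, Pi.smul_apply, Pi.zero_apply] at this ⊢
    have h1 : ∀ s, ev s u = ∏ x ∈ Y, t s x := hY
    simpa [h1] using this
  simpa using hli'.fintype_card_le_finrank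

/-- The polynomial `X ^ K - X` has invertible derivative at each of its roots, so roots that are
congruent modulo nilpotents coincide. -/
theorem eq_of_sub_nilpotent {B : Type*} (F : Type*) [Field F] [CharZero F] [CommRing B]
    [Algebra F B] {K : ℕ} (hK : 2 ≤ K) {x y : B} (hx : x ^ K = x) (hy : y ^ K = y)
    (hxy : IsNilpotent (x - y)) : x = y := by
  obtain ⟨k, rfl⟩ : ∃ k, K = k + 2 := ⟨K - 2, by omega⟩
  let P : Polynomial F := Polynomial.X ^ (k + 2) - Polynomial.X
  have hPx : Polynomial.aeval x P = 0 := by simp [P, hx]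
  have hPy : Polynomial.aeval y P = 0 := by simp [P, hy]
  have hf : x ^ (k + 1) * x ^ (k + 1) = x ^ (k + 1) := by
    calc x ^ (k + 1) * x ^ (k + 1) = x ^ (k + 2) * x ^ k := by ring
      _ = x ^ (k + 1) := by rw [hx]; ring
  have hk : algebraMap F B ((k : F) + 1)⁻¹ * ((k : B) + 1) = 1 := by
    have : ((k : B) + 1) = algebraMap F B ((k : F) + 1) := by simp
    rw [this, ← map_mul, inv_mul_cancel₀ (by exact_mod_cast k.succ_ne_zero), map_one]
  have hu : IsUnit (Polynomial.aeval x (Polynomial.derivative P)) := by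
    have : Polynomial.aeval x (Polynomial.derivative P) = (k + 2) * x ^ (k + 1) - 1 := by
      simp [P]; ring
    rw [this]
    -- `f = x ^ (k + 1)` is idempotent, and `(k + 2) f - 1 = (k + 1) f - (1 - f)`
    refine IsUnit.of_mul_eq_one
      (algebraMap F B ((k : F) + 1)⁻¹ * x ^ (k + 1) - (1 - x ^ (k + 1))) ?_
    linear_combination (k + 2 + algebraMap F B ((k : F) + 1)⁻¹ * (k + 2)) * hf + x ^ (k + 1) * hk
  obtain ⟨r, -, hr⟩ := Polynomial.existsUnique_nilpotent_sub_and_aeval_eq_zero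
    (P := P) (x := x) (by rw [hPx]; exact IsNilpotent.zero) hu
  rw [hr x ⟨by simp, hPx⟩, hr y ⟨hxy, hPy⟩]

/-- Every residue field of a finite algebra over an algebraically closed field `F` is `F`. -/
theorem nilpotent_of_characters {F B : Type*} [Field F] [IsAlgClosed F] [CommRing B]
    [Algebra F B] [Module.Finite F B] {b : B} (hb : ∀ χ : B →ₐ[F] F, χ b = 0) :
    IsNilpotent b := by
  rw [nilpotent_iff_mem_prime]
  intro J hJ
  have hbij := IsAlgClosed.algebraMap_bijective_of_isIntegral (k := F) (K := B ⧸ J)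
  let e := AlgEquiv.ofBijective (Algebra.ofId F (B ⧸ J)) hbij
  have := hb (e.symm.toAlgHom.comp (Ideal.Quotient.mkₐ F J))
  rw [← Ideal.Quotient.eq_zero_iff_mem]
  simpa using this

theorem card_le_of_twisted_square {F B : Type*} [Field F] [IsAlgClosed F] [CharZero F]
    [CommRing B] [Algebra F B] [Module.Finite F B] (ψ : B →ₐ[F] B) {N : ℕ} (hN : 0 < N)
    (hψ : ∀ b, ψ^[N] b = b) (S : Finset B) (hS : ∀ x ∈ S, x * x = ψ x) :
    S.card ≤ 2 ^ Module.finrank F B := by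
  classical
  have : Fintype (B →ₐ[F] F) := Fintype.ofFinite _
  have hpow : ∀ x ∈ S, x ^ 2 ^ N = x := by
    intro x hx
    have : ∀ j, x ^ 2 ^ j = ψ^[j] x := by
      intro j
      induction j with
      | zero => simp
      | succ j ih =>
        rw [pow_succ, pow_mul, ih, Function.iterate_succ_apply, ← hS x hx, sq,
          iterate_map_mul]
    rw [this, hψ]
  -- the unknowns are the characters `χ`, and `χ x * χ x = (χ ∘ ψ) x`
  have h1 := card_le_two_pow (X := B →ₐ[F] F) (S := S) (fun χ => χ.comp ψ)
    (fun x χ => χ x) (by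
      intro x y h
      apply Subtype.ext
      refine eq_of_sub_nilpotent F (K := 2 ^ N) (le_self_pow₀ (by norm_num) hN.ne') (hpow x x.2)
        (hpow y y.2) (nilpotent_of_characters (F := F) fun χ => ?_)
      rw [map_sub, sub_eq_zero]
      exact congr_fun h χ) (by
      intro x χ
      simp [← map_mul, hS x x.2])
  rw [Fintype.card_coe] at h1
  refine h1.trans (Nat.pow_le_pow_right two_pos ?_)
  have h2 := (linearIndependent_algHom_toLinearMap F B F).fintype_card_le_finrank
  exact h2.trans_eq (Subspace.dual_finrank_eq)

/-! ### The isotope and the span of the idempotents -/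

/-- If `L_c` has finite order, then `x ⊞ y = L_c⁻¹ (x * y)` is a commutative associative
multiplication with unit `c`, and `x * x = x` reads `x ⊞ x = L_c⁻¹ x`. -/
theorem card_idempotents_le {F V : Type*} [Field F] [IsAlgClosed F] [CharZero F]
    [AddCommGroup V] [Module F V] [Module.Finite F V] (mul : V →ₗ[F] V →ₗ[F] V)
    (hcomm : ∀ x y, mul x y = mul y x)
    (hmed : ∀ x y z w, mul (mul x y) (mul z w) = mul (mul x z) (mul y w))
    {c : V} (hc : mul c c = c) {N : ℕ} (hN : 0 < N) (hcN : ∀ v, (mul c)^[N] v = v)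
    (S : Finset V) (hS : ∀ x ∈ S, mul x x = x) : S.card ≤ 2 ^ Module.finrank F V := by
  obtain ⟨q, rfl⟩ : ∃ q, N = q + 1 := ⟨N - 1, by omega⟩
  -- `ψ` is the inverse of `L_c`
  let ψ : V →ₗ[F] V := (mul c) ^ q
  have hψ : ∀ v, ψ v = (mul c)^[q] v := fun v => Module.End.pow_apply _ _ _
  have hend : ∀ x y, mul c (mul x y) = mul (mul c x) (mul c y) := fun x y => by
    conv_lhs => rw [← hc, hmed]
  have hcψ : ∀ v, mul c (ψ v) = v := fun v => by
    rw [hψ, ← Function.iterate_succ_apply' (mul c) q v, hcN]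
  have hψc : ∀ v, ψ (mul c v) = v := fun v => by
    rw [hψ, ← Function.iterate_succ_apply (mul c) q v, hcN]
  have hinj : Function.Injective (mul c) := Function.LeftInverse.injective hψc
  have hψmul : ∀ x y, ψ (mul x y) = mul (ψ x) (ψ y) := fun x y => hinj (by
    rw [hend, hcψ, hcψ, hcψ])
  have hassoc : ∀ x y z, ψ (mul (ψ (mul x y)) z) = ψ (mul x (ψ (mul y z))) := by
    intro x y z
    refine hinj (hinj ?_)
    rw [hcψ, hcψ, hend, hend, hcψ, hcψ, hcomm c x, hmed x c y z]
  let ring : CommRing V :=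
    { (inferInstance : AddCommGroup V) with
      mul := fun x y => ψ (mul x y)
      one := c
      mul_assoc := hassoc
      one_mul := hψc
      mul_one := fun x => by change ψ (mul x c) = x; rw [hcomm, hψc]
      mul_comm := fun x y => by change ψ (mul x y) = ψ (mul y x); rw [hcomm]
      left_distrib := fun x y z => by
        change ψ (mul x (y + z)) = ψ (mul x y) + ψ (mul x z); simp
      right_distrib := fun x y z => by
        change ψ (mul (x + y) z) = ψ (mul x z) + ψ (mul y z); simp
      zero_mul := fun x => by change ψ (mul 0 x) = 0; simp
      mul_zero := fun x => by change ψ (mul x 0) = 0; simp }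
  have hm : ∀ x y : V, x * y = ψ (mul x y) := fun _ _ => rfl
  let alg : Algebra F V := Algebra.ofModule
    (fun r x y => by rw [hm, hm]; simp) (fun r x y => by rw [hm, hm]; simp)
  have hψ1 : ψ c = c := by conv_lhs => rw [← hc, hψc]
  let Ψ : V →ₐ[F] V := AlgHom.ofLinearMap ψ hψ1 fun x y => by
    rw [hm, hm, hψmul]
  refine card_le_of_twisted_square Ψ (Nat.succ_pos q) (fun b => ?_) S fun x hx => ?_
  · change ψ^[q + 1] b = b
    have hinv : ∀ j, ∀ v, (mul c)^[j] (ψ^[j] v) = v := fun j =>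
      Function.LeftInverse.iterate (f := ψ) (g := mul c) hcψ j
    rw [← hcN (ψ^[q + 1] b), hinv]
  · rw [hm, hS x hx]; rfl

/-! ### The use of isospectrality -/

/-- The operators `L_e` and `L_a` annihilate each other, so
`χ_e(t) χ_a(t) = tⁿ χ_(e+a)(t)` for every scalar `t`. -/
theorem eq_zero_of_annihilated {F A : Type*} [Field F] [CharZero F]
    [AddCommGroup A] [Module F A] [Module.Finite F A] (mul : A →ₗ[F] A →ₗ[F] A)
    (hcomm : ∀ x y : A, mul x y = mul y x)
    (hmedial : ∀ x y z w : A, mul (mul x y) (mul z w) = mul (mul x z) (mul y w))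
    (hiso : ∀ c c' : A, c ≠ 0 → c' ≠ 0 → mul c c = c → mul c' c' = c' →
      LinearMap.charpoly (mul c) = LinearMap.charpoly (mul c'))
    {e a : A} (he : mul e e = e) (he0 : e ≠ 0) (ha : mul a a = a) (hea : mul e a = 0) :
    a = 0 := by
  by_contra ha0
  have hs : mul (e + a) (e + a) = e + a := by
    simp [he, ha, hea, hcomm a e]
  have hs0 : e + a ≠ 0 := by
    intro h
    apply he0
    have : mul e (e + a) = e := by simp [he, hea]
    rw [← this, h, map_zero]
  have hz : mul e * mul a = 0 := by
    ext x
    change mul e (mul a x) = 0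
    conv_lhs => rw [← he, hmedial, hea]
    simp
  have heval : ∀ t : F, (LinearMap.charpoly (mul e)).eval t * (LinearMap.charpoly (mul e)).eval t =
      t ^ Module.finrank F A * (LinearMap.charpoly (mul e)).eval t := by
    intro t
    have h1 := hiso e a he0 ha0 he ha
    have h2 := hiso e (e + a) he0 hs0 he hs
    suffices h : (LinearMap.charpoly (mul e)).eval t * (LinearMap.charpoly (mul a)).eval t =
        t ^ Module.finrank F A * (LinearMap.charpoly (mul (e + a))).eval t by
      rwa [← h1, ← h2] at h
    simp only [LinearMap.eval_charpoly]
    rw [← map_mul LinearMap.det, ← LinearMap.det_smul]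
    congr 1
    have : (algebraMap F (A →ₗ[F] A) t - mul e) * (algebraMap F (A →ₗ[F] A) t - mul a) =
        algebraMap F (A →ₗ[F] A) t * (algebraMap F (A →ₗ[F] A) t - mul (e + a)) + mul e * mul a := by
      rw [sub_mul, mul_sub, mul_sub, mul_sub, map_add, mul_add,
        ← Algebra.commutes t (mul e)]
      abel
    rw [this, hz, add_zero, Algebra.smul_def]
  have hpoly : LinearMap.charpoly (mul e) * LinearMap.charpoly (mul e) =
      Polynomial.X ^ Module.finrank F A * LinearMap.charpoly (mul e) :=
    Polynomial.funext fun t => by simpa using heval t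
  have hX := mul_right_cancel₀ (LinearMap.charpoly_monic (mul e)).ne_zero hpoly
  have hev : Module.End.HasEigenvalue (mul e) 1 :=
    Module.End.hasEigenvalue_of_hasEigenvector (x := e)
      ⟨by simp [he], he0⟩
  rw [Module.End.hasEigenvalue_iff_isRoot_charpoly, hX] at hev
  simp at hev

/-- The span of the idempotents is a subalgebra, and `L_c` has finite order on it as soon as it has
finite order on the idempotents; `card_idempotents_le` then applies to this span. -/
theorem card_le_finrank_span {F A : Type*} [Field F] [IsAlgClosed F] [CharZero F]
    [AddCommGroup A] [Module F A] [Module.Finite F A] (mul : A →ₗ[F] A →ₗ[F] A)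
    (hcomm : ∀ x y, mul x y = mul y x)
    (hmed : ∀ x y z w, mul (mul x y) (mul z w) = mul (mul x z) (mul y w))
    {c : A} (hc : mul c c = c) {N : ℕ} (hN : 0 < N) (S : Finset A)
    (hS : ∀ x, x ∈ S ↔ mul x x = x) (hcN : ∀ x ∈ S, (mul c)^[N] x = x) :
    (∀ v ∈ Submodule.span F (S : Set A), (mul c)^[N] v = v) ∧
      S.card ≤ 2 ^ Module.finrank F (Submodule.span F (S : Set A)) := by
  classical
  set V := Submodule.span F (S : Set A) with hV
  have hfix : ∀ v ∈ V, (mul c)^[N] v = v := by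
    intro v hv
    rw [← Module.End.pow_apply]
    induction hv using Submodule.span_induction with
    | mem x hx => rw [Module.End.pow_apply]; exact hcN x hx
    | zero => simp
    | add x y _ _ hx hy => rw [map_add, hx, hy]
    | smul r x _ hx => rw [map_smul, hx]
  have hmul : ∀ x ∈ V, ∀ y ∈ V, mul x y ∈ V := by
    intro x hx y hy
    induction hx using Submodule.span_induction with
    | mem x hx =>
      induction hy using Submodule.span_induction with
      | mem y hy =>
        refine Submodule.subset_span ((hS _).2 ?_)
        rw [hmed, (hS x).1 hx, (hS y).1 hy]
      | zero => simp
      | add y z _ _ hy hz => rw [map_add]; exact V.add_mem hy hz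
      | smul r y _ hy => rw [map_smul]; exact V.smul_mem r hy
    | zero => simp
    | add x z _ _ hx hz => rw [map_add]; exact V.add_mem hx hz
    | smul r x _ hx => rw [map_smul]; exact V.smul_mem r hx
  refine ⟨hfix, ?_⟩
  let mulV : V →ₗ[F] V →ₗ[F] V := LinearMap.mk₂ F
    (fun x y => ⟨mul x y, hmul x x.2 y y.2⟩)
    (fun x y z => Subtype.ext (by simp)) (fun r x y => Subtype.ext (by simp))
    (fun x y z => Subtype.ext (by simp)) (fun r x y => Subtype.ext (by simp))
  have hmulV : ∀ x y : V, (mulV x y : A) = mul x y := fun _ _ => rfl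
  have hSV : ∀ x ∈ S, x ∈ V := fun x hx => Submodule.subset_span hx
  let cV : V := ⟨c, hSV c ((hS c).2 hc)⟩
  have hiter : ∀ (j : ℕ) (v : V), (((mulV cV)^[j] v : V) : A) = (mul c)^[j] v := by
    intro j
    induction j with
    | zero => exact fun _ => rfl
    | succ j ih => intro v; rw [Function.iterate_succ_apply, ih, Function.iterate_succ_apply]; rfl
  let ι : {x // x ∈ S} ↪ V :=
    ⟨fun x => ⟨x.1, hSV x.1 x.2⟩, fun x y h => Subtype.ext (congrArg (fun v : V => (v : A)) h)⟩
  have h := card_idempotents_le mulV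
    (fun x y => Subtype.ext (hcomm x y)) (fun x y z w => Subtype.ext (hmed x y z w))
    (c := cV) (Subtype.ext hc) hN (fun v => Subtype.ext ((hiter N v).trans (hfix v v.2)))
    (S.attach.map ι)
    (by
      intro x hx
      obtain ⟨y, -, rfl⟩ := Finset.mem_map.mp hx
      exact Subtype.ext ((hS _).1 y.2))
  simpa using h

/-! ### The group of nonzero idempotents -/

/-- For a medial, generic, isospectral commutative nonassociative algebra
over an algebraically closed field of characteristic zero and a nonzero idempotent `c`,
`L_c` is bijective, and `x ⊞ y := L_c⁻¹(x*y)` makes the set of nonzero idempotents an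
abelian group with identity `c`. -/
theorem idempotents_abelian_group {F A : Type*} [Field F] [IsAlgClosed F]
    [CharZero F] [AddCommGroup A] [Module F A] [Module.Finite F A]
    (mul : A →ₗ[F] A →ₗ[F] A)
    (hcomm : ∀ x y : A, mul x y = mul y x)
    (hmedial : ∀ x y z w : A, mul (mul x y) (mul z w) = mul (mul x z) (mul y w))
    (n : ℕ) (hn : 1 ≤ n) (hdim : Module.finrank F A = n)
    (hgen : {c : A | mul c c = c}.ncard = 2 ^ n)
    (hiso : ∀ c c' : A, c ≠ 0 → c' ≠ 0 → mul c c = c → mul c' c' = c' →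
      LinearMap.charpoly (mul c) = LinearMap.charpoly (mul c'))
    (c : A) (hc : mul c c = c) (hc0 : c ≠ 0) :
    Function.Bijective ⇑(mul c) ∧
    ∀ op : A → A → A, (∀ x y : A, mul c (op x y) = mul x y) →
      ∀ x y z : A, (mul x x = x ∧ x ≠ 0) → (mul y y = y ∧ y ≠ 0) →
        (mul z z = z ∧ z ≠ 0) →
        (mul (op x y) (op x y) = op x y ∧ op x y ≠ 0) ∧
        op x y = op y x ∧
        op (op x y) z = op x (op y z) ∧
        op c x = x ∧
        ∃ x' : A, (mul x' x' = x' ∧ x' ≠ 0) ∧ op x x' = c := by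
  classical
  have hfin : {c : A | mul c c = c}.Finite :=
    Set.finite_of_ncard_ne_zero (by rw [hgen]; positivity)
  let E := {x : A // mul x x = x ∧ x ≠ 0}
  have : Finite E := (hfin.subset fun x (hx : mul x x = x ∧ x ≠ 0) => hx.1).to_subtype
  have hann : ∀ {e a : A}, mul e e = e → e ≠ 0 → mul a a = a → mul e a = 0 → a = 0 :=
    eq_zero_of_annihilated mul hcomm hmedial hiso
  let m : E → E → E := fun x y => ⟨mul x y, by rw [hmedial, x.2.1, y.2.1],
    fun h => y.2.2 (hann x.2.1 x.2.2 y.2.1 h)⟩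
  have hminj : ∀ e : E, Function.Injective (m e) := by
    refine mul_left_injective_of_finite m (fun x y => Subtype.ext (hcomm _ _))
      (fun x => Subtype.ext x.2.1) (fun x y z w => Subtype.ext (hmedial _ _ _ _)) ?_
    intro e x h
    have hex : mul e x = e := congrArg Subtype.val h
    have he := e.2.1
    -- `x - e` is an idempotent annihilated by `e`
    refine Subtype.ext (sub_eq_zero.mp (hann he e.2.2 ?_ ?_))
    · simp only [map_sub, LinearMap.sub_apply, x.2.1, he, hex, hcomm x e]
      abel
    · rw [map_sub, hex, he, sub_self]
  have hinj : Function.Injective (mul c) := by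
    let p : Equiv.Perm E := Equiv.ofBijective (m ⟨c, hc, hc0⟩)
      (Finite.injective_iff_bijective.mp (hminj _))
    have hpE : ∀ (j : ℕ) (x : E), (((p ^ j) x : E) : A) = (mul c)^[j] x := by
      intro j
      induction j with
      | zero => exact fun _ => rfl
      | succ j ih =>
        intro x
        rw [pow_succ, Equiv.Perm.mul_apply, ih, Function.iterate_succ_apply]; rfl
    have hN : 0 < orderOf p := orderOf_pos p
    obtain ⟨hfix, hcard⟩ := card_le_finrank_span mul hcomm hmedial hc hN hfin.toFinset
      (fun x => by simp) (by
        intro x hx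
        by_cases hx0 : x = 0
        · rw [hx0, ← Module.End.pow_apply, map_zero]
        · have := hpE (orderOf p) ⟨x, by simpa using hx, hx0⟩
          rw [pow_orderOf_eq_one] at this
          exact this.symm)
    rw [← Set.ncard_eq_toFinset_card _ hfin, hgen, ← hdim] at hcard
    have htop := Submodule.eq_top_of_finrank_eq
      (le_antisymm (Submodule.finrank_le _) ((Nat.pow_le_pow_iff_right one_lt_two).mp hcard))
    rw [htop] at hfix
    have h : Function.Injective (mul c)^[orderOf p] := fun x y hxy => by
      rwa [hfix x trivial, hfix y trivial] at hxy
    rw [← Nat.sub_add_cancel hN] at h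
    exact Function.Injective.of_comp h
  refine ⟨⟨hinj, LinearMap.injective_iff_surjective.mp hinj⟩, ?_⟩
  intro op hop x y z hx hy hz
  have hend : ∀ x y, mul c (mul x y) = mul (mul c x) (mul c y) := fun x y => by
    conv_lhs => rw [← hc, hmedial]
  refine ⟨⟨hinj ?_, fun h => ?_⟩, hinj ?_, hinj (hinj ?_), hinj (hop c x), ?_⟩
  · rw [hend, hop, hmedial, hx.1, hy.1]
  · have := hop x y
    rw [h, map_zero] at this
    exact hy.2 (hann hx.1 hx.2 hy.1 this.symm)
  · rw [hop, hop, hcomm]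
  · rw [hop, hop, hend, hend, hop, hop, hcomm c x, hmedial x c y z]
  · obtain ⟨x', hx'⟩ := Finite.surjective_of_injective (hminj ⟨x, hx⟩) ⟨c, hc, hc0⟩
    exact ⟨x', x'.2, hinj (by rw [hop, hc]; exact congrArg Subtype.val hx')⟩
end
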